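/- arXiv:1709.01352 — 3 statements merged into one kernel-verified Lean document; each statement's English description precedes it below -/
import Mathlib

section
/- Let q, a₁ be integers with q ≥ 2 and a₁² ≤ 4q such that the pair (q, a₁) is ordinary (i.e., β is not a root of unity). Then the set of positive integers n with −aₙ = ⌊2·q^{n/2}⌋ is finite. -/
lemma om_factor (W : Finset ℂ) (f : ℂ → ℂ) (hf : Differentiable ℂ f) (h0 : ∀ w ∈ W, f w = 0) :
    ∃ g : ℂ → ℂ, Differentiable ℂ g ∧ ∀ z, f z = (∏ w ∈ W, (z - w)) * g z := by
  classical
  induction W using Finset.induction_on with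
  | empty => exact ⟨f, hf, by simp⟩
  | insert a W ha ih =>
    obtain ⟨g, hg, hfg⟩ := ih (fun w hw => h0 w (Finset.mem_insert_of_mem hw))
    have hga : g a = 0 := by
      have h1 := hfg a
      rw [h0 a (Finset.mem_insert_self a W)] at h1
      have h2 : (∏ w ∈ W, (a - w)) ≠ 0 := by
        rw [Finset.prod_ne_zero_iff]
        intro w hw h
        apply ha
        rw [sub_eq_zero.mp h]; exact hw
      exact (mul_eq_zero.mp h1.symm).resolve_left h2
    refine ⟨dslope g a, ?_, ?_⟩
    · rw [← differentiableOn_univ]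
      exact (Complex.differentiableOn_dslope Filter.univ_mem).2 hg.differentiableOn
    · intro z
      have h3 := sub_smul_dslope g a z
      rw [hga, sub_zero, smul_eq_mul] at h3
      rw [hfg z, Finset.prod_insert ha, ← h3]
      ring

/-- Schwarz lemma with exact zeros. -/
lemma om_schwarz (W : Finset ℤ) (ρ M : ℝ) (hρ : 0 < ρ) (hW : ∀ w ∈ W, 0 ≤ (w : ℝ) ∧ (w : ℝ) ≤ ρ)
    (f : ℂ → ℂ) (hf : Differentiable ℂ f) (h0 : ∀ w ∈ W, f (w : ℂ) = 0)
    (hM : ∀ z : ℂ, ‖z‖ ≤ 5 * ρ → ‖f z‖ ≤ M) (x : ℤ) (hx : 0 ≤ (x : ℝ) ∧ (x : ℝ) ≤ ρ) :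
    ‖f x‖ ≤ M * (1 / 4) ^ W.card := by
  classical
  have hM0 : 0 ≤ M := (norm_nonneg _).trans (hM 0 (by simp; positivity))
  obtain ⟨g, hg, hfg⟩ := om_factor (W.image (fun w : ℤ => (w : ℂ))) f hf (by
    intro w hw
    obtain ⟨v, hv, rfl⟩ := Finset.mem_image.mp hw
    exact h0 v hv)
  have hfg' : ∀ z, f z = (∏ w ∈ W, (z - (w : ℂ))) * g z := by
    intro z
    rw [hfg z, Finset.prod_image]
    intro a _ b _ hab
    exact Int.cast_injective hab
  have hgx : ‖g x‖ ≤ M / (4 * ρ) ^ W.card := by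
    refine Complex.norm_le_of_forall_mem_frontier_norm_le (U := Metric.ball (0 : ℂ) (5 * ρ))
      Metric.isBounded_ball hg.diffContOnCl ?_ ?_
    · intro z hz
      have hz' : ‖z‖ = 5 * ρ := by
        have := Metric.frontier_ball_subset_sphere hz
        simpa using this
      have h1 := hM z hz'.le
      rw [hfg' z, norm_mul, norm_prod] at h1
      have h2 : (4 * ρ) ^ W.card ≤ ∏ w ∈ W, ‖z - (w : ℂ)‖ := by
        rw [← Finset.prod_const]
        refine Finset.prod_le_prod (fun _ _ => by positivity) ?_
        intro w hw
        have h3 := norm_sub_norm_le z (w : ℂ)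
        have h4 : ‖(w : ℂ)‖ = (w : ℝ) := by
          rw [Complex.norm_intCast, abs_of_nonneg (hW w hw).1]
        have := (hW w hw).2
        linarith
      rw [le_div_iff₀ (by positivity)]
      calc ‖g z‖ * (4 * ρ) ^ W.card ≤ ‖g z‖ * ∏ w ∈ W, ‖z - (w : ℂ)‖ := by gcongr
        _ ≤ M := by linarith [mul_comm (‖g z‖) (∏ w ∈ W, ‖z - (w : ℂ)‖)]
    · apply subset_closure
      simp only [Metric.mem_ball, dist_zero_right, Complex.norm_intCast]
      rw [abs_of_nonneg hx.1]; linarith [hx.2]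
  rw [hfg' x, norm_mul, norm_prod]
  have h5 : ∏ w ∈ W, ‖(x : ℂ) - (w : ℂ)‖ ≤ ρ ^ W.card := by
    rw [← Finset.prod_const]
    refine Finset.prod_le_prod (fun _ _ => norm_nonneg _) ?_
    intro w hw
    rw [← Int.cast_sub, Complex.norm_intCast, abs_le]
    have := hW w hw
    push_cast
    constructor <;> linarith [hx.1, hx.2]
  calc (∏ w ∈ W, ‖(x : ℂ) - (w : ℂ)‖) * ‖g x‖ ≤ ρ ^ W.card * (M / (4 * ρ) ^ W.card) := by gcongr
    _ = M * (1 / 4) ^ W.card := by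
      rw [mul_pow, div_pow, one_pow]
      field_simp

/-- Schwarz lemma with approximate zeros at integer points. -/
lemma om_schwarz_approx (W : Finset ℤ) (ρ M η : ℝ) (hρ : 1 ≤ ρ)
    (hW : ∀ w ∈ W, 0 ≤ (w : ℝ) ∧ (w : ℝ) ≤ ρ)
    (G : ℂ → ℂ) (hG : Differentiable ℂ G) (hη0 : 0 ≤ η) (hη : ∀ w ∈ W, ‖G (w : ℂ)‖ ≤ η)
    (hM : ∀ z : ℂ, ‖z‖ ≤ 5 * ρ → ‖G z‖ ≤ M) (x : ℤ) (hx : 0 ≤ (x : ℝ) ∧ (x : ℝ) ≤ ρ) :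
    ‖G x‖ ≤ M * (1 / 4) ^ W.card + 2 * (W.card * (η * (10 * ρ) ^ W.card)) := by
  classical
  set L : Polynomial ℂ := Lagrange.interpolate W (fun w : ℤ => (w : ℂ)) (fun w => G (w : ℂ)) with hL
  set E : ℝ := W.card * (η * (10 * ρ) ^ W.card) with hE
  have hE0 : 0 ≤ E := by positivity
  have hLnode : ∀ w ∈ W, L.eval (w : ℂ) = G w := by
    intro w hw
    exact Lagrange.eval_interpolate_at_node (v := fun w : ℤ => (w : ℂ)) (fun w => G (w : ℂ))
      (fun a _ b _ hab => Int.cast_injective hab) hw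
  have hLb : ∀ z : ℂ, ‖z‖ ≤ 5 * ρ → ‖L.eval z‖ ≤ E := by
    intro z hz
    rw [hL, Lagrange.interpolate_apply, Polynomial.eval_finsetSum]
    refine (norm_sum_le _ _).trans ?_
    rw [hE, ← nsmul_eq_mul]
    refine Finset.sum_le_card_nsmul _ _ _ ?_
    intro w hw
    rw [Polynomial.eval_mul, Polynomial.eval_C, norm_mul]
    refine mul_le_mul (hη w hw) ?_ (norm_nonneg _) hη0
    rw [Lagrange.basis, Polynomial.eval_prod, norm_prod]
    calc ∏ j ∈ W.erase w, ‖Polynomial.eval z (Lagrange.basisDivisor (w : ℂ) (j : ℂ))‖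
        ≤ ∏ j ∈ W.erase w, (10 * ρ) := by
          refine Finset.prod_le_prod (fun _ _ => norm_nonneg _) ?_
          intro j hj
          obtain ⟨hjw, hjW⟩ := Finset.mem_erase.mp hj
          rw [Lagrange.basisDivisor, Polynomial.eval_mul, Polynomial.eval_C, Polynomial.eval_sub,
            Polynomial.eval_X, Polynomial.eval_C, norm_mul, norm_inv]
          have h1 : (1 : ℝ) ≤ ‖(w : ℂ) - j‖ := by
            rw [← Int.cast_sub, Complex.norm_intCast]
            exact_mod_cast Int.one_le_abs (sub_ne_zero.mpr (Ne.symm hjw))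
          have h2 : ‖z - (j : ℂ)‖ ≤ 10 * ρ := by
            refine (norm_sub_le _ _).trans ?_
            rw [Complex.norm_intCast, abs_of_nonneg (hW j hjW).1]
            linarith [(hW j hjW).2]
          calc ‖(w : ℂ) - j‖⁻¹ * ‖z - (j : ℂ)‖ ≤ 1 * (10 * ρ) := by
                refine mul_le_mul (inv_le_one_of_one_le₀ h1) h2 (norm_nonneg _) zero_le_one
            _ = _ := one_mul _
      _ = (10 * ρ) ^ (W.erase w).card := by rw [Finset.prod_const]
      _ ≤ (10 * ρ) ^ W.card := by
          refine pow_le_pow_right₀ (by linarith) (Finset.card_le_card (Finset.erase_subset _ _))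
  have key := om_schwarz W ρ (M + E) (by linarith) hW (fun z => G z - L.eval z)
    (hG.sub L.differentiable) (by intro w hw; simp [hLnode w hw])
    (fun z hz => (norm_sub_le _ _).trans (add_le_add (hM z hz) (hLb z hz))) x hx
  have hxL := hLb x (by rw [Complex.norm_intCast, abs_of_nonneg hx.1]; linarith [hx.2])
  have h4 : ((1 : ℝ) / 4) ^ W.card ≤ 1 := pow_le_one₀ (by norm_num) (by norm_num)
  have h5 : ‖G x‖ ≤ ‖G x - L.eval (x : ℂ)‖ + ‖L.eval (x : ℂ)‖ := by
    have := norm_add_le (G x - L.eval (x : ℂ)) (L.eval (x : ℂ))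
    simpa using this
  have h6 : E * (1 / 4) ^ W.card ≤ E := mul_le_of_le_one_right hE0 h4
  rw [add_mul] at key
  linarith

/-- Liouville: nonzero elements of ℤ[α] have norm at least one. -/
lemma om_liouville (q a1 : ℤ) (α : ℂ) (h1 : α + (starRingEnd ℂ) α = a1)
    (h2 : α * (starRingEnd ℂ) α = q) (u v : ℤ) (h : (u : ℂ) + v * α ≠ 0) :
    1 ≤ ‖(u : ℂ) + v * α‖ := by
  set x := (u : ℂ) + v * α with hx
  have e1 : x * (starRingEnd ℂ) x = ((u ^ 2 + a1 * u * v + q * v ^ 2 : ℤ) : ℂ) := by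
    rw [hx]
    simp only [map_add, map_mul, map_intCast]
    push_cast
    rw [← h1, ← h2]; ring
  rw [Complex.mul_conj] at e1
  have e2 : Complex.normSq x = ((u ^ 2 + a1 * u * v + q * v ^ 2 : ℤ) : ℝ) := by exact_mod_cast e1
  have e3 : 0 < Complex.normSq x := Complex.normSq_pos.mpr h
  rw [e2] at e3
  have e4 : (1 : ℤ) ≤ u ^ 2 + a1 * u * v + q * v ^ 2 := by
    have : (0 : ℤ) < u ^ 2 + a1 * u * v + q * v ^ 2 := by exact_mod_cast e3
    linarith
  have e5 : (1 : ℝ) ≤ ‖x‖ ^ 2 := by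
    rw [← Complex.normSq_eq_norm_sq, e2]; exact_mod_cast e4
  nlinarith [norm_nonneg x]

lemma om_pow (q a1 : ℤ) (hq : 2 ≤ q) (ha1 : a1 ^ 2 ≤ 4 * q) (α : ℂ)
    (hα : α ^ 2 - a1 * α + q = 0) (m : ℕ) :
    ∃ u v : ℤ, α ^ m = u + v * α ∧ |u| ≤ (4 * q) ^ m ∧ |v| ≤ (4 * q) ^ m := by
  have ha : |a1| ≤ 2 * q := by
    apply abs_le_of_sq_le_sq _ (by linarith)
    nlinarith
  induction m with
  | zero => exact ⟨1, 0, by simp⟩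
  | succ m ih =>
    obtain ⟨u, v, h, hu, hv⟩ := ih
    have hp : (0 : ℤ) ≤ (4 * q) ^ m := by positivity
    refine ⟨-q * v, u + a1 * v, ?_, ?_, ?_⟩
    · rw [pow_succ, h]; push_cast
      linear_combination (v : ℂ) * hα
    · rw [abs_mul, abs_neg, abs_of_nonneg (by linarith : (0 : ℤ) ≤ q), pow_succ]
      nlinarith
    · refine (abs_add_le _ _).trans ?_
      rw [abs_mul, pow_succ]
      nlinarith [mul_le_mul ha hv (abs_nonneg v) (by linarith)]

noncomputable def omV (γ : ℂ) (k n I J : ℕ) (p : Fin I × Fin J → ℤ) (s t : ℕ) : ℂ :=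
  ∑ x : Fin I × Fin J, (p x : ℂ) * ((k * s + t * n : ℕ) : ℂ) ^ (x.1 : ℕ) * γ ^ ((x.2 : ℕ) * s)

lemma om_gamma_pow (q : ℤ) (α γ : ℂ) (hγ : γ * q = α ^ 2) (J j s : ℕ) (hj : j ≤ J) :
    (q : ℂ) ^ (J * s) * γ ^ (j * s) = q ^ ((J - j) * s) * α ^ (2 * (j * s)) := by
  obtain ⟨d, rfl⟩ := Nat.exists_eq_add_of_le hj
  rw [pow_mul α, ← hγ, Nat.add_sub_cancel_left, mul_pow, add_mul, pow_add]
  ring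

lemma omV_repr (q : ℤ) (α γ : ℂ) (hγ : γ * q = α ^ 2) (u v : ℕ → ℤ)
    (huv : ∀ m, α ^ m = u m + v m * α) (k n I J : ℕ) (p : Fin I × Fin J → ℤ) (s t : ℕ) :
    (q : ℂ) ^ (J * s) * omV γ k n I J p s t =
      ((∑ x : Fin I × Fin J, (((k * s + t * n : ℕ) : ℤ) ^ (x.1 : ℕ) * q ^ ((J - x.2) * s) *
        u (2 * (x.2 * s))) * p x : ℤ) : ℂ) +
      ((∑ x : Fin I × Fin J, (((k * s + t * n : ℕ) : ℤ) ^ (x.1 : ℕ) * q ^ ((J - x.2) * s) *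
        v (2 * (x.2 * s))) * p x : ℤ) : ℂ) * α := by
  unfold omV
  rw [Finset.mul_sum]
  simp only [Int.cast_sum]
  rw [Finset.sum_mul, ← Finset.sum_add_distrib]
  refine Finset.sum_congr rfl fun x _ => ?_
  have h := om_gamma_pow q α γ hγ J x.2 s x.2.2.le
  rw [huv] at h
  simp only [Int.cast_mul, Int.cast_pow, Int.cast_natCast]
  linear_combination ((p x : ℂ) * ((k * s + t * n : ℕ) : ℂ) ^ (x.1 : ℕ)) * h

lemma omV_liouville (q a1 : ℤ) (hq : 2 ≤ q) (ha1 : a1 ^ 2 ≤ 4 * q) (α γ : ℂ)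
    (hα : α ^ 2 - a1 * α + q = 0) (h1 : α + (starRingEnd ℂ) α = a1)
    (h2 : α * (starRingEnd ℂ) α = q) (hγ : γ * q = α ^ 2)
    (k n I J : ℕ) (p : Fin I × Fin J → ℤ) (s t : ℕ)
    (h : omV γ k n I J p s t ≠ 0) : 1 ≤ (q : ℝ) ^ (J * s) * ‖omV γ k n I J p s t‖ := by
  choose u v huv _ _ using om_pow q a1 hq ha1 α hα
  have e := omV_repr q α γ hγ u v huv k n I J p s t
  have hq0 : (q : ℂ) ≠ 0 := by
    have : q ≠ 0 := by linarith
    exact_mod_cast this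
  have hne : (q : ℂ) ^ (J * s) * omV γ k n I J p s t ≠ 0 := mul_ne_zero (pow_ne_zero _ hq0) h
  rw [e] at hne
  have hl := om_liouville q a1 α h1 h2 _ _ hne
  rw [← e, norm_mul, norm_pow, Complex.norm_intCast] at hl
  rwa [abs_of_nonneg (by exact_mod_cast (by linarith : (0 : ℤ) ≤ q))] at hl

lemma om_gamma_liouville (q a1 : ℤ) (hq : 2 ≤ q) (ha1 : a1 ^ 2 ≤ 4 * q) (α γ : ℂ)
    (hα : α ^ 2 - a1 * α + q = 0) (h1 : α + (starRingEnd ℂ) α = a1)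
    (h2 : α * (starRingEnd ℂ) α = q) (hγ : γ * q = α ^ 2) (d : ℕ)
    (h : γ ^ d ≠ 1) : 1 ≤ (q : ℝ) ^ d * ‖γ ^ d - 1‖ := by
  obtain ⟨u, v, huv, _, _⟩ := om_pow q a1 hq ha1 α hα (2 * d)
  have hq0 : (q : ℂ) ≠ 0 := by
    have : q ≠ 0 := by linarith
    exact_mod_cast this
  have e : (q : ℂ) ^ d * (γ ^ d - 1) = ((u - q ^ d : ℤ) : ℂ) + v * α := by
    rw [mul_sub, ← mul_pow, mul_comm (q : ℂ), hγ, ← pow_mul, huv]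
    push_cast; ring
  have hne : (q : ℂ) ^ d * (γ ^ d - 1) ≠ 0 := mul_ne_zero (pow_ne_zero _ hq0) (sub_ne_zero.mpr h)
  rw [e] at hne
  have hl := om_liouville q a1 α h1 h2 _ _ hne
  rw [← e, norm_mul, norm_pow, Complex.norm_intCast] at hl
  rwa [abs_of_nonneg (by exact_mod_cast (by linarith : (0 : ℤ) ≤ q))] at hl

attribute [local instance] Matrix.seminormedAddCommGroup in
lemma om_siegel (q a1 : ℤ) (hq : 2 ≤ q) (ha1 : a1 ^ 2 ≤ 4 * q) (α γ : ℂ)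
    (hα : α ^ 2 - a1 * α + q = 0) (hγ : γ * q = α ^ 2)
    (k n I J S : ℕ) (hn : 0 < n) (hk : k ≤ n) (hS : 0 < S) (hIJ : I * J = 4 * S ^ 2) :
    ∃ p : Fin I × Fin J → ℤ, p ≠ 0 ∧
      (∀ x, |(p x : ℝ)| ≤ (I * J : ℕ) * (((2 * n * S : ℕ) : ℝ) ^ I * (4 * q) ^ (2 * J * S))) ∧
      ∀ s < S, ∀ t < S, omV γ k n I J p s t = 0 := by
  choose u v huv hu hv using om_pow q a1 hq ha1 α hα
  set T : ℤ := ((2 * n * S : ℕ) : ℤ) ^ I * (4 * q) ^ (2 * J * S) with hT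
  have hq1 : (1 : ℤ) ≤ 4 * q := by linarith
  have hN1 : (1 : ℤ) ≤ ((2 * n * S : ℕ) : ℤ) := by
    have : 0 < 2 * n * S := by positivity
    exact_mod_cast this
  have hT1 : 1 ≤ T := one_le_mul_of_one_le_of_one_le (one_le_pow₀ hN1) (one_le_pow₀ hq1)
  let A : Matrix (Fin S × Fin S × Fin 2) (Fin I × Fin J) ℤ := fun r x =>
    ((k * (r.1 : ℕ) + r.2.1 * n : ℕ) : ℤ) ^ (x.1 : ℕ) * q ^ ((J - x.2) * r.1) *
      (if r.2.2 = 0 then u (2 * (x.2 * r.1)) else v (2 * (x.2 * r.1)))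
  have hcα : Fintype.card (Fin S × Fin S × Fin 2) = 2 * S ^ 2 := by
    simp; ring
  have hcβ : Fintype.card (Fin I × Fin J) = 4 * S ^ 2 := by
    simp [hIJ]
  have hS2 : 0 < S ^ 2 := by positivity
  obtain ⟨p, hp0, hAp, hpn⟩ := Int.Matrix.exists_ne_zero_int_vec_norm_le A
    (by rw [hcα, hcβ]; linarith) (by rw [hcα]; linarith)
  have hA : ‖A‖ ≤ (T : ℝ) := by
    rw [Matrix.norm_le_iff (by exact_mod_cast (by linarith : (0 : ℤ) ≤ T))]
    rintro ⟨s, t, c⟩ ⟨i, j⟩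
    rw [Int.norm_eq_abs]
    have : |A (s, t, c) (i, j)| ≤ T := by
      simp only [A]
      rw [abs_mul, abs_mul, abs_of_nonneg (by positivity : (0:ℤ) ≤ ((k * (s : ℕ) + t * n : ℕ) : ℤ) ^ (i : ℕ)),
        abs_of_nonneg (by positivity : (0:ℤ) ≤ q ^ ((J - (j : ℕ)) * (s : ℕ))), hT, mul_assoc]
      have e1 : ((k * (s : ℕ) + t * n : ℕ) : ℤ) ^ (i : ℕ) ≤ ((2 * n * S : ℕ) : ℤ) ^ I := by
        have : k * (s : ℕ) + t * n ≤ 2 * n * S := by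
          have a1 := Nat.mul_le_mul hk s.2.le
          have a2 := Nat.mul_le_mul t.2.le (le_refl n)
          nlinarith
        calc ((k * (s : ℕ) + t * n : ℕ) : ℤ) ^ (i : ℕ) ≤ ((2 * n * S : ℕ) : ℤ) ^ (i : ℕ) := by
              gcongr
          _ ≤ _ := pow_le_pow_right₀ hN1 i.2.le
      have e2 : |if c = 0 then u (2 * ((j : ℕ) * s)) else v (2 * ((j : ℕ) * s))| ≤
          (4 * q) ^ (2 * ((j : ℕ) * s)) := by
        split_ifs
        · exact hu _
        · exact hv _
      have e3 : q ^ ((J - (j : ℕ)) * (s : ℕ)) ≤ (4 * q) ^ ((J - (j : ℕ)) * (s : ℕ)) := by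
        gcongr; linarith
      have e4 : (J - (j : ℕ)) * (s : ℕ) + 2 * ((j : ℕ) * s) ≤ 2 * J * S := by
        obtain ⟨d, hd⟩ := Nat.exists_eq_add_of_le j.2.le
        have : J - (j : ℕ) = d := by omega
        rw [this]
        have h3 : (s : ℕ) ≤ S := s.2.le
        have h4 : d + 2 * (j : ℕ) ≤ 2 * J := by omega
        calc d * (s : ℕ) + 2 * ((j : ℕ) * s) = (d + 2 * j) * s := by ring
          _ ≤ 2 * J * S := Nat.mul_le_mul h4 h3
      refine mul_le_mul e1 ?_ (by positivity) (by positivity)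
      calc _ ≤ (4 * q) ^ ((J - (j : ℕ)) * (s : ℕ)) * (4 * q) ^ (2 * ((j : ℕ) * s)) :=
            mul_le_mul e3 e2 (abs_nonneg _) (by positivity)
        _ = (4 * q) ^ ((J - (j : ℕ)) * (s : ℕ) + 2 * ((j : ℕ) * s)) := by rw [pow_add]
        _ ≤ _ := pow_le_pow_right₀ hq1 e4
    exact_mod_cast this
  refine ⟨p, hp0, ?_, ?_⟩
  · intro x
    have h1 : ‖p x‖ ≤ ‖p‖ := norm_le_pi_norm p x
    rw [Int.norm_eq_abs] at h1
    have hexp : ((Fintype.card (Fin S × Fin S × Fin 2) : ℕ) : ℝ) /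
        ((Fintype.card (Fin I × Fin J) : ℕ) - (Fintype.card (Fin S × Fin S × Fin 2) : ℕ) : ℝ) = 1 := by
      rw [hcα, hcβ]; push_cast
      have : (S : ℝ) ≠ 0 := by exact_mod_cast hS.ne'
      field_simp; norm_num
    rw [hexp, Real.rpow_one, hcβ, ← hIJ] at hpn
    refine h1.trans (hpn.trans ?_)
    have h2 : max 1 ‖A‖ ≤ (T : ℝ) := max_le (by exact_mod_cast hT1) hA
    have h3 : (T : ℝ) = (((2 * n * S : ℕ) : ℝ) ^ I * (4 * q) ^ (2 * J * S)) := by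
      rw [hT]; push_cast; ring
    rw [← h3]
    gcongr
  · intro s hs t ht
    have e := omV_repr q α γ hγ u v huv k n I J p s t
    have r0 := congrFun hAp (⟨s, hs⟩, ⟨t, ht⟩, 0)
    have r1 := congrFun hAp (⟨s, hs⟩, ⟨t, ht⟩, 1)
    simp only [Matrix.mulVec, dotProduct, A, Pi.zero_apply, if_true, one_ne_zero, if_false] at r0 r1
    rw [r0, r1] at e
    have hq0 : (q : ℂ) ≠ 0 := by
      have : q ≠ 0 := by linarith
      exact_mod_cast this
    simp only [Int.cast_zero, zero_mul, add_zero] at e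
    exact (mul_eq_zero.mp e).resolve_left (pow_ne_zero _ hq0)

lemma om_zero_estimate (γ : ℂ) (hγ0 : γ ≠ 0) (hγ : ∀ d : ℕ, 0 < d → γ ^ d ≠ 1) (k n I J : ℕ)
    (hn : 0 < n) (p : Fin I × Fin J → ℤ)
    (h : ∀ s < J, ∀ t < I, omV γ k n I J p s t = 0) : p = 0 := by
  have h1 : ∀ s : Fin J, ∀ i : Fin I, ∑ j : Fin J, (p (i, j) : ℂ) * (γ ^ (s : ℕ)) ^ (j : ℕ) = 0 := by
    intro s
    have := Matrix.eq_zero_of_forall_index_sum_mul_pow_eq_zero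
      (f := fun t : Fin I => ((k * (s : ℕ) + t * n : ℕ) : ℂ))
      (v := fun i : Fin I => ∑ j : Fin J, (p (i, j) : ℂ) * (γ ^ (s : ℕ)) ^ (j : ℕ)) ?_ ?_
    · intro i; exact congrFun this i
    · intro a b hab
      have hab' : k * (s : ℕ) + a * n = k * (s : ℕ) + b * n := Nat.cast_injective hab
      have : (a : ℕ) * n = b * n := by omega
      exact Fin.ext (Nat.eq_of_mul_eq_mul_right hn this)
    · intro t
      have e := h s s.2 t t.2
      unfold omV at e
      rw [Fintype.sum_prod_type] at e
      rw [← e]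
      refine Finset.sum_congr rfl fun i _ => ?_
      rw [Finset.sum_mul]
      refine Finset.sum_congr rfl fun j _ => ?_
      rw [← pow_mul, mul_comm (s : ℕ)]; ring
  have hinj : Function.Injective (fun s : Fin J => γ ^ (s : ℕ)) := by
    have aux : ∀ a b : ℕ, a < b → γ ^ a ≠ γ ^ b := by
      intro a b hab he
      obtain ⟨d, rfl⟩ := Nat.exists_eq_add_of_lt hab
      apply hγ (d + 1) (by omega)
      have : γ ^ a * γ ^ (d + 1) = γ ^ a * 1 := by rw [← pow_add, mul_one, he]; ring
      exact mul_left_cancel₀ (pow_ne_zero _ hγ0) this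
    intro a b hab
    rcases lt_trichotomy (a : ℕ) b with hlt | heq | hgt
    · exact absurd hab (aux _ _ hlt)
    · exact Fin.ext heq
    · exact absurd hab.symm (aux _ _ hgt)
  funext ⟨i, j⟩
  have := Matrix.eq_zero_of_forall_index_sum_mul_pow_eq_zero hinj
    (v := fun j : Fin J => (p (i, j) : ℂ)) (fun s => h1 s i)
  have h3 := congrFun this j
  simpa using h3

lemma om_pow_sub (x y : ℂ) (hx : ‖x‖ = 1) (hy : ‖y‖ = 1) (m : ℕ) :
    ‖x ^ m - y ^ m‖ ≤ m * ‖x - y‖ := by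
  induction m with
  | zero => simp
  | succ m ih =>
    have : x ^ (m + 1) - y ^ (m + 1) = x ^ m * (x - y) + (x ^ m - y ^ m) * y := by ring
    rw [this]
    refine (norm_add_le _ _).trans ?_
    rw [norm_mul, norm_mul, norm_pow, hx, hy, one_pow]
    push_cast
    linarith

lemma om_extrap (q a1 : ℤ) (hq : 2 ≤ q) (ha1 : a1 ^ 2 ≤ 4 * q) (α γ : ℂ)
    (hα : α ^ 2 - a1 * α + q = 0) (h1 : α + (starRingEnd ℂ) α = a1)
    (h2 : α * (starRingEnd ℂ) α = q) (hγ : γ * q = α ^ 2) (hγ1 : ‖γ‖ = 1)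
    (k n I J S S' : ℕ) (hn : 0 < n) (hk : k ≤ n) (hSS' : S ≤ S')
    (p : Fin I × Fin J → ℤ) (P ε η : ℝ) (hp : ∀ x, |(p x : ℝ)| ≤ P) (hP : 0 ≤ P)
    (ω : ℂ) (hω : ω = Complex.exp (2 * Real.pi * Complex.I / n * k)) (hε : ‖γ - ω‖ ≤ ε)
    (hinj : ∀ s < S, ∀ t < S, ∀ s' < S, ∀ t' < S, k * s + t * n = k * s' + t' * n → s = s' ∧ t = t')
    (hV : ∀ s < S, ∀ t < S, omV γ k n I J p s t = 0)
    (hη : η = (I * J : ℕ) * (P * (2 * n * S') ^ I * (J * S' * ε)))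
    (hnum : (q : ℝ) ^ (J * S') * (η + ((I * J : ℕ) * (P * (10 * n * S') ^ I * Real.exp (64 * (J * S'))) *
      (1 / 4) ^ (S ^ 2) + 2 * ((S ^ 2 : ℕ) * (η * (20 * n * S') ^ (S ^ 2))))) < 1) :
    ∀ s < S', ∀ t < S', omV γ k n I J p s t = 0 := by
  classical
  intro s hs t ht
  have hS' : 1 ≤ S' := by omega
  have hS'r : (1 : ℝ) ≤ S' := by exact_mod_cast hS'
  have hnr : (1 : ℝ) ≤ n := by exact_mod_cast hn
  have hn0 : (n : ℂ) ≠ 0 := by exact_mod_cast hn.ne'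
  have hε0 : 0 ≤ ε := (norm_nonneg _).trans hε
  have hnS : (1 : ℝ) ≤ n * S' := one_le_mul_of_one_le_of_one_le hnr hS'r
  have hη0 : 0 ≤ η := by rw [hη]; positivity
  have hω1 : ‖ω‖ = 1 := by
    rw [hω, Complex.norm_exp]
    have : (2 * Real.pi * Complex.I / n * k : ℂ).re = 0 := by
      have : (2 * Real.pi * Complex.I / n * k : ℂ) = ((2 * Real.pi / n * k : ℝ) : ℂ) * Complex.I := by
        push_cast; ring
      rw [this]; simp
    rw [this, Real.exp_zero]
  let G : ℂ → ℂ := fun z => ∑ x : Fin I × Fin J, (p x : ℂ) * z ^ (x.1 : ℕ) *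
    Complex.exp (2 * Real.pi * Complex.I / n * z) ^ (x.2 : ℕ)
  have hG : Differentiable ℂ G := by
    simp only [G]; fun_prop
  have hsize : ∀ s < S', ∀ t < S', k * s + t * n ≤ 2 * n * S' := by
    intro s hs t ht
    have a1 := Nat.mul_le_mul hk hs.le
    have a2 := Nat.mul_le_mul ht.le (le_refl n)
    nlinarith
  have hsizer : ∀ s < S', ∀ t < S', ((k * s + t * n : ℕ) : ℝ) ≤ 2 * n * S' := by
    intro s hs t ht
    exact_mod_cast hsize s hs t ht
  have hGV : ∀ s < S', ∀ t < S', ‖omV γ k n I J p s t - G ((k * s + t * n : ℕ) : ℂ)‖ ≤ η := by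
    intro s hs t ht
    have hexp : Complex.exp (2 * Real.pi * Complex.I / n * ((k * s + t * n : ℕ) : ℂ)) = ω ^ s := by
      have : (2 * Real.pi * Complex.I / n * ((k * s + t * n : ℕ) : ℂ)) =
          (s : ℕ) * (2 * Real.pi * Complex.I / n * k) + (t : ℕ) * (2 * Real.pi * Complex.I) := by
        push_cast; field_simp
      rw [this, Complex.exp_add, Complex.exp_nat_mul, Complex.exp_nat_mul, Complex.exp_two_pi_mul_I,
        one_pow, mul_one, hω]
    simp only [G, omV]
    rw [hexp, ← Finset.sum_sub_distrib]
    refine (norm_sum_le _ _).trans ?_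
    have hb : ∀ x ∈ (Finset.univ : Finset (Fin I × Fin J)),
        ‖(p x : ℂ) * ((k * s + t * n : ℕ) : ℂ) ^ (x.1 : ℕ) * γ ^ ((x.2 : ℕ) * s) -
          (p x : ℂ) * ((k * s + t * n : ℕ) : ℂ) ^ (x.1 : ℕ) * (ω ^ s) ^ (x.2 : ℕ)‖ ≤
        P * (2 * n * S') ^ I * (J * S' * ε) := by
      intro x _
      rw [← pow_mul, mul_comm s, ← mul_sub, norm_mul, norm_mul, norm_pow, Complex.norm_intCast,
        Complex.norm_natCast]
      have b1 : ((k * s + t * n : ℕ) : ℝ) ^ (x.1 : ℕ) ≤ (2 * n * S') ^ I :=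
        calc ((k * s + t * n : ℕ) : ℝ) ^ (x.1 : ℕ) ≤ (2 * n * S') ^ (x.1 : ℕ) := by
              gcongr; exact hsizer s hs t ht
          _ ≤ _ := pow_le_pow_right₀ (by nlinarith) x.1.2.le
      have b2 : ‖γ ^ ((x.2 : ℕ) * s) - ω ^ ((x.2 : ℕ) * s)‖ ≤ J * S' * ε := by
        refine (om_pow_sub γ ω hγ1 hω1 _).trans ?_
        push_cast
        have c1 : ((x.2 : ℕ) : ℝ) ≤ J := by exact_mod_cast x.2.2.le
        have c2 : (s : ℝ) ≤ S' := by exact_mod_cast hs.le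
        gcongr
      have := hp x
      gcongr
    refine (Finset.sum_le_card_nsmul _ _ _ hb).trans ?_
    rw [hη, nsmul_eq_mul]
    simp
  have hM : ∀ z : ℂ, ‖z‖ ≤ 5 * (2 * n * S') →
      ‖G z‖ ≤ (I * J : ℕ) * (P * (10 * n * S') ^ I * Real.exp (64 * (J * S'))) := by
    intro z hz
    refine (norm_sum_le _ _).trans ?_
    have hb : ∀ x ∈ (Finset.univ : Finset (Fin I × Fin J)),
        ‖(p x : ℂ) * z ^ (x.1 : ℕ) * Complex.exp (2 * Real.pi * Complex.I / n * z) ^ (x.2 : ℕ)‖ ≤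
        P * (10 * n * S') ^ I * Real.exp (64 * (J * S')) := by
      intro x _
      rw [norm_mul, norm_mul, norm_pow, Complex.norm_intCast, ← Complex.exp_nat_mul]
      have b1 : ‖z‖ ^ (x.1 : ℕ) ≤ (10 * n * S') ^ I :=
        calc ‖z‖ ^ (x.1 : ℕ) ≤ (10 * n * S') ^ (x.1 : ℕ) := by
              gcongr; linarith
          _ ≤ _ := pow_le_pow_right₀ (by nlinarith) x.1.2.le
      have b2 : ‖Complex.exp ((x.2 : ℕ) * (2 * Real.pi * Complex.I / n * z))‖ ≤
          Real.exp (64 * (J * S')) := by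
        refine (Complex.norm_exp_le_exp_norm _).trans ?_
        apply Real.exp_le_exp.mpr
        rw [norm_mul, norm_mul, norm_div, norm_mul, norm_mul, Complex.norm_natCast,
          Complex.norm_natCast, Complex.norm_I, Complex.norm_real, Real.norm_of_nonneg Real.pi_pos.le]
        have c1 : ((x.2 : ℕ) : ℝ) ≤ J := by exact_mod_cast x.2.2.le
        have c2 : ‖(2 : ℂ)‖ * Real.pi * 1 / n * ‖z‖ ≤ 64 * S' := by
          rw [div_mul_eq_mul_div, div_le_iff₀ (by linarith)]
          have := Real.pi_lt_d2
          have := Real.pi_pos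
          rw [Complex.norm_ofNat]
          calc 2 * Real.pi * 1 * ‖z‖ ≤ 2 * 3.15 * 1 * (5 * (2 * n * S')) := by gcongr
            _ ≤ 64 * S' * n := by nlinarith
        calc ((x.2 : ℕ) : ℝ) * (‖(2 : ℂ)‖ * Real.pi * 1 / n * ‖z‖) ≤ J * (64 * S') := by gcongr
          _ = _ := by ring
      have := hp x
      gcongr
    refine (Finset.sum_le_card_nsmul _ _ _ hb).trans ?_
    rw [nsmul_eq_mul]
    simp
  let W : Finset ℤ := ((Finset.range S) ×ˢ (Finset.range S)).image
    (fun y : ℕ × ℕ => ((k * y.1 + y.2 * n : ℕ) : ℤ))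
  have hWc : W.card = S ^ 2 := by
    rw [Finset.card_image_of_injOn]
    · simp; ring
    · rintro ⟨a, b⟩ hab ⟨c, d⟩ hcd he
      simp only [Finset.coe_product, Finset.coe_range, Set.mem_prod, Set.mem_Iio] at hab hcd
      have he' : k * a + b * n = k * c + d * n := Int.ofNat_injective he
      obtain ⟨e1, e2⟩ := hinj a hab.1 b hab.2 c hcd.1 d hcd.2 he'
      rw [e1, e2]
  have key := om_schwarz_approx W (2 * n * S') _ η (by nlinarith) ?_ G hG hη0 ?_ hM
    ((k * s + t * n : ℕ) : ℤ) ⟨by positivity, by rw [Int.cast_natCast]; exact hsizer s hs t ht⟩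
  · by_contra hne
    have hl := omV_liouville q a1 hq ha1 α γ hα h1 h2 hγ k n I J p s t hne
    have hd := hGV s hs t ht
    rw [Int.cast_natCast, hWc] at key
    have h20 : (10 * (2 * n * S') : ℝ) = 20 * n * S' := by ring
    rw [h20] at key
    have hnv : ‖omV γ k n I J p s t‖ ≤ ‖omV γ k n I J p s t - G ((k * s + t * n : ℕ) : ℂ)‖ +
        ‖G ((k * s + t * n : ℕ) : ℂ)‖ := by
      have := norm_add_le (omV γ k n I J p s t - G ((k * s + t * n : ℕ) : ℂ))
        (G ((k * s + t * n : ℕ) : ℂ))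
      simpa using this
    have hq1 : (1 : ℝ) ≤ q := by exact_mod_cast (by linarith : (1 : ℤ) ≤ q)
    have hqp : (q : ℝ) ^ (J * s) ≤ q ^ (J * S') :=
      pow_le_pow_right₀ hq1 (Nat.mul_le_mul_left _ hs.le)
    have : (1 : ℝ) ≤ (q : ℝ) ^ (J * S') * (η + ((I * J : ℕ) * (P * (10 * n * S') ^ I *
        Real.exp (64 * (J * S'))) *
      (1 / 4) ^ (S ^ 2) + 2 * ((S ^ 2 : ℕ) * (η * (20 * n * S') ^ (S ^ 2))))) := by
      refine hl.trans ?_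
      refine mul_le_mul hqp ?_ (norm_nonneg _) (by positivity)
      linarith
    linarith
  · intro w hw
    obtain ⟨⟨a, b⟩, hab, rfl⟩ := Finset.mem_image.mp hw
    simp only [Finset.mem_product, Finset.mem_range] at hab
    exact ⟨by positivity, by
      rw [Int.cast_natCast]; exact hsizer a (by omega) b (by omega)⟩
  · intro w hw
    obtain ⟨⟨a, b⟩, hab, rfl⟩ := Finset.mem_image.mp hw
    simp only [Finset.mem_product, Finset.mem_range] at hab
    have := hGV a (by omega) b (by omega)
    rw [hV a hab.1 b hab.2, zero_sub, norm_neg] at this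
    rw [Int.cast_natCast]; exact this

lemma om_num (q : ℤ) (hq : 2 ≤ q) (κ K Y n I J S S' E : ℕ) (hκ : 4 * q ≤ 2 ^ κ)
    (hI : I = K ^ 4 * Y) (hIJ : I * J ≤ 2 ^ Y) (hJS : J * S' ≤ 2 ^ Y) (hnS : 20 * n * S' ≤ 2 ^ Y)
    (P ε η : ℝ) (hP : P = 2 ^ (3 * K ^ 4 * Y ^ 2)) (hε : ε = (1 / 2) ^ E)
    (hη : η = (I * J : ℕ) * (P * (2 * n * S') ^ I * (J * S' * ε)))
    (hA : (κ + 96) * (J * S') + Y + 4 * (K ^ 4 * Y ^ 2) + 2 ≤ 2 * S ^ 2)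
    (hB : κ * (J * S') + 2 * Y + 4 * (K ^ 4 * Y ^ 2) + S ^ 2 + Y * S ^ 2 + 3 ≤ E) :
    (q : ℝ) ^ (J * S') * (η + ((I * J : ℕ) * (P * (10 * n * S') ^ I * Real.exp (64 * (J * S'))) *
      (1 / 4) ^ (S ^ 2) + 2 * ((S ^ 2 : ℕ) * (η * (20 * n * S') ^ (S ^ 2))))) < 1 := by
  have hq0 : (0 : ℝ) ≤ q := by exact_mod_cast (by linarith : (0 : ℤ) ≤ q)
  have hqκ : (q : ℝ) ≤ 2 ^ κ := by
    have : q ≤ 2 ^ κ := by linarith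
    exact_mod_cast this
  have hqJ : (q : ℝ) ^ (J * S') ≤ 2 ^ (κ * (J * S')) := by
    rw [pow_mul 2 κ]
    exact pow_le_pow_left₀ hq0 hqκ _
  have hIJr : ((I * J : ℕ) : ℝ) ≤ 2 ^ Y := by exact_mod_cast hIJ
  have hJSr : (J : ℝ) * S' ≤ 2 ^ Y := by exact_mod_cast hJS
  have h20 : (20 : ℝ) * n * S' ≤ 2 ^ Y := by exact_mod_cast hnS
  have hpos : (0 : ℝ) ≤ (n : ℝ) * S' := by positivity
  have h10 : (10 : ℝ) * n * S' ≤ 2 ^ Y := by nlinarith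
  have h2 : (2 : ℝ) * n * S' ≤ 2 ^ Y := by nlinarith
  have hP0 : 0 ≤ P := by rw [hP]; positivity
  have hε0 : 0 ≤ ε := by rw [hε]; positivity
  have hYI : ((2 : ℝ) ^ Y) ^ I = 2 ^ (K ^ 4 * Y ^ 2) := by
    rw [← pow_mul, hI]; congr 1; ring
  have hη' : η ≤ 2 ^ (2 * Y + 4 * (K ^ 4 * Y ^ 2)) * ε := by
    calc η ≤ 2 ^ Y * (2 ^ (3 * K ^ 4 * Y ^ 2) * (2 ^ Y) ^ I * (2 ^ Y * ε)) := by
          rw [hη, hP]; gcongr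
      _ = _ := by rw [hYI]; ring
  have hη0 : 0 ≤ η := by rw [hη]; positivity
  have hexp : Real.exp (64 * (J * S')) ≤ 2 ^ (96 * (J * S')) := by
    have e1 : Real.exp 2 ≤ 8 := by
      have := Real.exp_one_lt_d9
      have h : Real.exp 2 = Real.exp 1 * Real.exp 1 := by rw [← Real.exp_add]; norm_num
      rw [h]
      nlinarith [Real.exp_pos 1]
    have e2 : Real.exp (64 * (J * S')) = Real.exp 2 ^ (32 * (J * S')) := by
      rw [← Real.exp_nat_mul]; congr 1; push_cast; ring
    rw [e2]
    calc Real.exp 2 ^ (32 * (J * S')) ≤ 8 ^ (32 * (J * S')) := by gcongr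
      _ = 2 ^ (96 * (J * S')) := by
        rw [show (8 : ℝ) = 2 ^ 3 by norm_num, ← pow_mul]; congr 1; ring
  have hEpow : ∀ m : ℕ, m + 2 ≤ E → (2 : ℝ) ^ m * ε ≤ 1 / 4 := by
    intro m hm
    obtain ⟨d, rfl⟩ := Nat.exists_eq_add_of_le hm
    rw [hε, pow_add, pow_add, ← mul_assoc, ← mul_assoc, ← mul_pow]
    have : ((1 : ℝ) / 2) ^ d ≤ 1 := pow_le_one₀ (by norm_num) (by norm_num)
    norm_num at this ⊢
    exact this
  have T1 : (q : ℝ) ^ (J * S') * η ≤ 1 / 4 := by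
    calc (q : ℝ) ^ (J * S') * η ≤ 2 ^ (κ * (J * S')) * (2 ^ (2 * Y + 4 * (K ^ 4 * Y ^ 2)) * ε) := by
          gcongr
      _ = 2 ^ (κ * (J * S') + (2 * Y + 4 * (K ^ 4 * Y ^ 2))) * ε := by rw [pow_add]; ring
      _ ≤ 1 / 4 := hEpow _ (by omega)
  have T3 : (q : ℝ) ^ (J * S') * (2 * ((S ^ 2 : ℕ) * (η * (20 * n * S') ^ (S ^ 2)))) ≤ 1 / 4 := by
    have hs : ((S ^ 2 : ℕ) : ℝ) ≤ 2 ^ (S ^ 2) := by exact_mod_cast (Nat.lt_two_pow_self).le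
    calc (q : ℝ) ^ (J * S') * (2 * ((S ^ 2 : ℕ) * (η * (20 * n * S') ^ (S ^ 2))))
        ≤ 2 ^ (κ * (J * S')) * (2 * (2 ^ (S ^ 2) *
          ((2 ^ (2 * Y + 4 * (K ^ 4 * Y ^ 2)) * ε) * (2 ^ Y) ^ (S ^ 2)))) := by gcongr
      _ = 2 ^ (κ * (J * S') + (2 * Y + 4 * (K ^ 4 * Y ^ 2)) + S ^ 2 + Y * S ^ 2 + 1) * ε := by
          rw [← pow_mul]; simp only [pow_add]; ring
      _ ≤ 1 / 4 := hEpow _ (by omega)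
  have T2 : (q : ℝ) ^ (J * S') * ((I * J : ℕ) * (P * (10 * n * S') ^ I * Real.exp (64 * (J * S'))) *
      (1 / 4) ^ (S ^ 2)) ≤ 1 / 4 := by
    calc (q : ℝ) ^ (J * S') * ((I * J : ℕ) * (P * (10 * n * S') ^ I * Real.exp (64 * (J * S'))) *
      (1 / 4) ^ (S ^ 2)) ≤ 2 ^ (κ * (J * S')) * (2 ^ Y * (2 ^ (3 * K ^ 4 * Y ^ 2) * (2 ^ Y) ^ I *
        2 ^ (96 * (J * S'))) * (1 / 4) ^ (S ^ 2)) := by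
          rw [hP]; gcongr
      _ = 2 ^ ((κ + 96) * (J * S') + Y + 4 * (K ^ 4 * Y ^ 2)) * (1 / 2) ^ (2 * S ^ 2) := by
          rw [hYI, show ((1 : ℝ) / 4) = (1 / 2) ^ 2 by norm_num, ← pow_mul]
          rw [add_mul κ]; simp only [pow_add]; ring
      _ ≤ 1 / 4 := by
          obtain ⟨d, hd⟩ := Nat.exists_eq_add_of_le hA
          rw [hd, pow_add (1 / 2 : ℝ), pow_add (1 / 2 : ℝ), ← mul_assoc, ← mul_assoc, ← mul_pow]
          have : ((1 : ℝ) / 2) ^ d ≤ 1 := pow_le_one₀ (by norm_num) (by norm_num)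
          norm_num at this ⊢
          exact this
  rw [mul_add, mul_add]
  linarith

lemma om_core (q a1 : ℤ) (hq : 2 ≤ q) (ha1 : a1 ^ 2 ≤ 4 * q) (α γ : ℂ)
    (hα : α ^ 2 - a1 * α + q = 0) (h1 : α + (starRingEnd ℂ) α = a1)
    (h2 : α * (starRingEnd ℂ) α = q) (hγ : γ * q = α ^ 2) (hγ1 : ‖γ‖ = 1)
    (hord : ∀ d : ℕ, 0 < d → γ ^ d ≠ 1)
    (k n κ K Y E : ℕ) (hn : 0 < n) (hk : k ≤ n) (hκ : 4 * q ≤ 2 ^ κ)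
    (hK : K = 6400 + 64 * κ) (hY : 1 ≤ Y) (hY1 : 20 * n * (K ^ 4 * Y) ≤ 2 ^ Y)
    (hY2 : 64 * K ^ 4 * Y ^ 2 ≤ 2 ^ Y) (hE : E = 12 * K ^ 6 * Y ^ 3)
    (hε : ‖γ - Complex.exp (2 * Real.pi * Complex.I / n * k)‖ ≤ (1 / 2) ^ E) : False := by
  have hn0 : (n : ℂ) ≠ 0 := by exact_mod_cast hn.ne'
  set ω := Complex.exp (2 * Real.pi * Complex.I / n * k) with hω
  have hω1 : ‖ω‖ = 1 := by
    rw [hω, Complex.norm_exp]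
    have : (2 * Real.pi * Complex.I / n * k : ℂ).re = 0 := by
      have : (2 * Real.pi * Complex.I / n * k : ℂ) = ((2 * Real.pi / n * k : ℝ) : ℂ) * Complex.I := by
        push_cast; ring
      rw [this]; simp
    rw [this, Real.exp_zero]
  have hK1 : 6400 ≤ K := by omega
  have hκK : 64 * κ + 6144 ≤ K := by omega
  -- basic inequalities
  have hYY : Y ≤ Y ^ 2 := by nlinarith
  have hYY3 : Y ^ 2 ≤ Y ^ 3 := by nlinarith [Nat.zero_le (Y ^ 2)]
  have hK6 : K ^ 5 * 6400 ≤ K ^ 6 := by rw [pow_succ K 5]; gcongr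
  have hK5 : K ^ 4 * 6400 ≤ K ^ 5 := by rw [pow_succ K 4]; gcongr
  have hK4 : K ^ 3 * 6400 ≤ K ^ 4 := by rw [pow_succ K 3]; gcongr
  have hK3 : K ^ 2 * 6400 ≤ K ^ 3 := by rw [pow_succ K 2]; gcongr
  have hK2 : K * 6400 ≤ K ^ 2 := by rw [pow_succ K 1, pow_one]; gcongr
  -- injectivity
  have hinj : ∀ S : ℕ, S ≤ K ^ 3 * Y → ∀ s < S, ∀ t < S, ∀ s' < S, ∀ t' < S,
      k * s + t * n = k * s' + t' * n → s = s' ∧ t = t' := by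
    intro S hS
    have aux : ∀ s < S, ∀ s' < s, ∀ t t' : ℕ, k * s + t * n ≠ k * s' + t' * n := by
      intro s hs s' hs' t t' he
      obtain ⟨d, rfl⟩ := Nat.exists_eq_add_of_lt hs'
      have hωd : ω ^ (d + 1) = 1 := by
        rw [hω, ← Complex.exp_nat_mul, Complex.exp_eq_one_iff]
        refine ⟨(t' : ℤ) - t, ?_⟩
        have he' : (k : ℂ) * (d + 1) = (t' - t) * n := by
          have : ((k * (s' + d + 1) + t * n : ℕ) : ℂ) = ((k * s' + t' * n : ℕ) : ℂ) := by rw [he]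
          push_cast at this
          linear_combination this
        push_cast
        field_simp
        linear_combination he'
      have hl := om_gamma_liouville q a1 hq ha1 α γ hα h1 h2 hγ (d + 1) (hord _ (by omega))
      have hp := om_pow_sub γ ω hγ1 hω1 (d + 1)
      rw [hωd] at hp
      have hq0 : (0 : ℝ) ≤ q := by exact_mod_cast (by linarith : (0 : ℤ) ≤ q)
      have hqκ : (q : ℝ) ≤ 2 ^ κ := by
        have : q ≤ 2 ^ κ := by linarith
        exact_mod_cast this
      have hd2 : ((d + 1 : ℕ) : ℝ) ≤ 2 ^ (d + 1) := by exact_mod_cast (Nat.lt_two_pow_self).le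
      have hEd : κ * (d + 1) + (d + 1) + 1 ≤ E := by
        have e1 : d + 1 ≤ K ^ 3 * Y := by omega
        have e2 : κ * (d + 1) ≤ K * (K ^ 3 * Y) := Nat.mul_le_mul (by omega) e1
        have e3 : K * (K ^ 3 * Y) = K ^ 4 * Y := by ring
        have e4 : K ^ 4 * Y ≤ K ^ 6 * Y ^ 3 := Nat.mul_le_mul (by omega) (by omega)
        have e5 : K ^ 3 * Y ≤ K ^ 6 * Y ^ 3 := Nat.mul_le_mul (by omega) (by omega)
        have e6 : 1 * 1 ≤ K ^ 6 * Y ^ 3 := Nat.mul_le_mul (by omega) (by omega)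
        rw [hE, mul_assoc]; omega
      have : (1 : ℝ) ≤ 2 ^ (κ * (d + 1)) * (2 ^ (d + 1) * (1 / 2) ^ E) := by
        calc (1 : ℝ) ≤ (q : ℝ) ^ (d + 1) * ‖γ ^ (d + 1) - 1‖ := hl
          _ ≤ (2 ^ κ) ^ (d + 1) * (2 ^ (d + 1) * (1 / 2) ^ E) := by
            have hp' : ‖γ ^ (d + 1) - 1‖ ≤ 2 ^ (d + 1) * (1 / 2) ^ E := by
              exact hp.trans (mul_le_mul hd2 hε (norm_nonneg _) (by positivity))
            gcongr
          _ = _ := by rw [← pow_mul]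
      obtain ⟨c, hc⟩ := Nat.exists_eq_add_of_le hEd
      have hc1 : ((1 : ℝ) / 2) ^ c ≤ 1 := pow_le_one₀ (by norm_num) (by norm_num)
      have : (2 : ℝ) ^ (κ * (d + 1)) * (2 ^ (d + 1) * (1 / 2) ^ E) = 1 / 2 * (1 / 2) ^ c := by
        rw [← mul_assoc, ← pow_add, hc, pow_add (1 / 2 : ℝ), pow_add (1 / 2 : ℝ), ← mul_assoc,
          ← mul_assoc, ← mul_pow]
        norm_num
      linarith
    intro s hs t ht s' hs' t' ht' he
    rcases lt_trichotomy s s' with h | h | h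
    · exact absurd he.symm (aux s' hs' s h t' t)
    · subst h
      have : t * n = t' * n := by omega
      exact ⟨rfl, Nat.eq_of_mul_eq_mul_right hn this⟩
    · exact absurd he (aux s hs s' h t t')
  obtain ⟨p, hp0, hpb, hpV⟩ := om_siegel q a1 hq ha1 α γ hα hγ k n (K ^ 4 * Y) (64 * Y)
    (4 * K ^ 2 * Y) hn hk (by positivity) (by ring)
  have hIJ : K ^ 4 * Y * (64 * Y) ≤ 2 ^ Y := by
    calc K ^ 4 * Y * (64 * Y) = 64 * K ^ 4 * Y ^ 2 := by ring
      _ ≤ _ := hY2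
  have hpP : ∀ x, |(p x : ℝ)| ≤ 2 ^ (3 * K ^ 4 * Y ^ 2) := by
    intro x
    refine (hpb x).trans ?_
    have e1 : (((K ^ 4 * Y) * (64 * Y) : ℕ) : ℝ) ≤ 2 ^ Y := by exact_mod_cast hIJ
    have e2 : ((2 * n * (4 * K ^ 2 * Y) : ℕ) : ℝ) ≤ 2 ^ Y := by
      have : 2 * n * (4 * K ^ 2 * Y) ≤ 2 ^ Y := by
        refine le_trans ?_ hY1
        refine Nat.mul_le_mul (by omega) (Nat.mul_le_mul ?_ le_rfl)
        omega
      exact_mod_cast this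
    have e3 : (4 * (q : ℝ)) ≤ 2 ^ κ := by exact_mod_cast hκ
    have hq0 : (0 : ℝ) ≤ q := by exact_mod_cast (by linarith : (0 : ℤ) ≤ q)
    calc _ ≤ (2 : ℝ) ^ Y * ((2 ^ Y) ^ (K ^ 4 * Y) * (2 ^ κ) ^ (2 * (64 * Y) * (4 * K ^ 2 * Y))) := by
          gcongr
      _ = 2 ^ (Y + (Y * (K ^ 4 * Y) + κ * (2 * (64 * Y) * (4 * K ^ 2 * Y)))) := by
          rw [← pow_mul, ← pow_mul, ← pow_add, ← pow_add]
      _ ≤ _ := by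
          apply pow_le_pow_right₀ (by norm_num)
          have e4 : κ * (2 * (64 * Y) * (4 * K ^ 2 * Y)) = (512 * κ) * (K ^ 2 * Y ^ 2) := by ring
          have e5 : (512 * κ) * (K ^ 2 * Y ^ 2) ≤ K ^ 2 * (K ^ 2 * Y ^ 2) :=
            Nat.mul_le_mul (by omega) le_rfl
          have e6 : K ^ 2 * (K ^ 2 * Y ^ 2) = K ^ 4 * Y ^ 2 := by ring
          have e7 : Y * (K ^ 4 * Y) = K ^ 4 * Y ^ 2 := by ring
          have e8 : 1 * Y ≤ K ^ 4 * Y ^ 2 := Nat.mul_le_mul (by omega) hYY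
          rw [mul_assoc 3]
          omega
  have hc1 : K ^ 4 * Y ≤ K ^ 6 * Y ^ 3 := Nat.mul_le_mul (by omega) (by omega)
  have hc2 : K ^ 4 * Y ^ 2 ≤ K ^ 6 * Y ^ 3 := Nat.mul_le_mul (by omega) (by omega)
  have hc3 : K ^ 5 * Y ^ 2 ≤ K ^ 6 * Y ^ 3 := Nat.mul_le_mul (by omega) (by omega)
  have hc4 : 1 * Y ≤ K ^ 6 * Y ^ 3 := Nat.mul_le_mul (by omega) (by omega)
  have hc5 : 1 * 1 ≤ K ^ 6 * Y ^ 3 := Nat.mul_le_mul (by omega) (by omega)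
  have hc6 : K ^ 6 * Y ^ 2 ≤ K ^ 6 * Y ^ 3 := Nat.mul_le_mul (by omega) (by omega)
  have hc7 : 1 * Y ≤ K ^ 4 * Y ^ 2 := Nat.mul_le_mul (by omega) (by omega)
  have hc8 : 2 * 1 ≤ K ^ 4 * Y ^ 2 := Nat.mul_le_mul (by omega) (by omega)
  have hc9 : K ^ 5 * Y ^ 2 * 6400 ≤ K ^ 6 * Y ^ 2 := by nlinarith
  have hc10 : K ^ 4 * Y ^ 2 * 6400 ≤ K ^ 5 * Y ^ 2 := by nlinarith
  have step1 := om_extrap q a1 hq ha1 α γ hα h1 h2 hγ hγ1 k n (K ^ 4 * Y) (64 * Y)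
    (4 * K ^ 2 * Y) (K ^ 3 * Y) hn hk (Nat.mul_le_mul (by omega) le_rfl) p _ _ _ hpP (by positivity)
    ω hω hε (hinj _ (Nat.mul_le_mul (by omega) le_rfl)) hpV rfl
    (om_num q hq κ K Y n _ _ _ _ E hκ rfl hIJ
      (by
        refine le_trans ?_ hY2
        calc 64 * Y * (K ^ 3 * Y) = 64 * K ^ 3 * Y ^ 2 := by ring
          _ ≤ _ := by gcongr <;> omega)
      (by refine le_trans ?_ hY1; gcongr <;> omega) _ _ _ rfl rfl rfl
      (by
        have e1 : (κ + 96) * (64 * Y * (K ^ 3 * Y)) = (64 * κ + 6144) * (K ^ 3 * Y ^ 2) := by ring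
        have e2 : (64 * κ + 6144) * (K ^ 3 * Y ^ 2) ≤ K * (K ^ 3 * Y ^ 2) :=
          Nat.mul_le_mul hκK le_rfl
        have e3 : K * (K ^ 3 * Y ^ 2) = K ^ 4 * Y ^ 2 := by ring
        have e4 : 2 * (4 * K ^ 2 * Y) ^ 2 = 32 * (K ^ 4 * Y ^ 2) := by ring
        omega)
      (by
        have e1 : κ * (64 * Y * (K ^ 3 * Y)) = (64 * κ) * (K ^ 3 * Y ^ 2) := by ring
        have e2 : (64 * κ) * (K ^ 3 * Y ^ 2) ≤ K * (K ^ 3 * Y ^ 2) :=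
          Nat.mul_le_mul (by omega) le_rfl
        have e3 : K * (K ^ 3 * Y ^ 2) = K ^ 4 * Y ^ 2 := by ring
        have e4 : (4 * K ^ 2 * Y) ^ 2 = 16 * (K ^ 4 * Y ^ 2) := by ring
        have e5 : Y * (16 * (K ^ 4 * Y ^ 2)) = 16 * K ^ 4 * Y ^ 3 := by ring
        have e6 : 16 * K ^ 4 * Y ^ 3 ≤ K ^ 6 * Y ^ 3 := Nat.mul_le_mul (by omega) le_rfl
        rw [e4, e5, hE, mul_assoc 12]
        omega))
  have step2 := om_extrap q a1 hq ha1 α γ hα h1 h2 hγ hγ1 k n (K ^ 4 * Y) (64 * Y)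
    (K ^ 3 * Y) (K ^ 4 * Y) hn hk (Nat.mul_le_mul (by omega) le_rfl) p _ _ _ hpP (by positivity)
    ω hω hε (hinj _ le_rfl) step1 rfl
    (om_num q hq κ K Y n _ _ _ _ E hκ rfl hIJ
      (by
        refine le_trans ?_ hY2
        exact le_of_eq (by ring))
      hY1 _ _ _ rfl rfl rfl
      (by
        have e1 : (κ + 96) * (64 * Y * (K ^ 4 * Y)) = (64 * κ + 6144) * (K ^ 4 * Y ^ 2) := by ring
        have e2 : (64 * κ + 6144) * (K ^ 4 * Y ^ 2) ≤ K * (K ^ 4 * Y ^ 2) :=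
          Nat.mul_le_mul hκK le_rfl
        have e3 : K * (K ^ 4 * Y ^ 2) = K ^ 5 * Y ^ 2 := by ring
        have e4 : 2 * (K ^ 3 * Y) ^ 2 = 2 * (K ^ 6 * Y ^ 2) := by ring
        omega)
      (by
        have e1 : κ * (64 * Y * (K ^ 4 * Y)) = (64 * κ) * (K ^ 4 * Y ^ 2) := by ring
        have e2 : (64 * κ) * (K ^ 4 * Y ^ 2) ≤ K * (K ^ 4 * Y ^ 2) :=
          Nat.mul_le_mul (by omega) le_rfl
        have e3 : K * (K ^ 4 * Y ^ 2) = K ^ 5 * Y ^ 2 := by ring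
        have e4 : (K ^ 3 * Y) ^ 2 = K ^ 6 * Y ^ 2 := by ring
        have e5 : Y * (K ^ 6 * Y ^ 2) = K ^ 6 * Y ^ 3 := by ring
        rw [e4, e5, hE, mul_assoc 12]
        omega))
  have hγ0 : γ ≠ 0 := by
    intro h; rw [h, norm_zero] at hγ1; norm_num at hγ1
  apply hp0
  refine om_zero_estimate γ hγ0 hord k n _ _ hn p ?_
  intro s hs t ht
  exact step2 s (lt_of_lt_of_le hs (Nat.mul_le_mul (by omega) le_rfl)) t ht

lemma om_root (γ : ℂ) (hγ1 : ‖γ‖ = 1) (n : ℕ) (hn : 0 < n) :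
    ∃ k ≤ n, ‖γ - Complex.exp (2 * Real.pi * Complex.I / n * k)‖ ≤ 2 * ‖γ ^ n - 1‖ := by
  have hn0 : (n : ℂ) ≠ 0 := by exact_mod_cast hn.ne'
  have hnr : (1 : ℝ) ≤ n := by exact_mod_cast hn
  set δ : ℝ := (γ ^ n).arg with hδ
  have hpn : ‖γ ^ n‖ = 1 := by rw [norm_pow, hγ1, one_pow]
  have hne : γ ^ n ≠ 0 := by intro h; rw [h, norm_zero] at hpn; norm_num at hpn
  have hδe : Complex.exp (δ * Complex.I) = γ ^ n := by
    have := Complex.norm_mul_exp_arg_mul_I (γ ^ n)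
    rwa [hpn, Complex.ofReal_one, one_mul] at this
  set y : ℝ := -(δ / n) with hy
  have hζ : (γ * Complex.exp (Complex.I * y)) ^ n = 1 := by
    rw [mul_pow, ← Complex.exp_nat_mul, ← hδe, ← Complex.exp_add, Complex.exp_eq_one_iff]
    refine ⟨0, ?_⟩
    rw [hy]; push_cast; field_simp; ring
  haveI : NeZero n := ⟨hn.ne'⟩
  obtain ⟨k, hk, hke⟩ := (Complex.isPrimitiveRoot_exp n hn.ne').eq_pow_of_pow_eq_one hζ
  refine ⟨k, hk.le, ?_⟩
  have e1 : Complex.exp (2 * Real.pi * Complex.I / n * k) = γ * Complex.exp (Complex.I * y) := by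
    rw [← hke, ← Complex.exp_nat_mul]; congr 1; ring
  rw [e1]
  have e2 : γ - γ * Complex.exp (Complex.I * y) = -(γ * (Complex.exp (Complex.I * y) - 1)) := by ring
  rw [e2, norm_neg, norm_mul, hγ1, one_mul]
  refine (Real.norm_exp_I_mul_ofReal_sub_one_le).trans ?_
  have e3 : ‖y‖ ≤ |δ| := by
    rw [hy, norm_neg, Real.norm_eq_abs, abs_div, abs_of_nonneg (by linarith : (0:ℝ) ≤ n)]
    exact div_le_self (abs_nonneg _) hnr
  have e4 := Complex.angle_le_mul_norm_sub hpn (norm_one : ‖(1 : ℂ)‖ = 1)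
  rw [Complex.angle_one_right hne] at e4
  have := Real.pi_le_four
  calc ‖y‖ ≤ |δ| := e3
    _ ≤ Real.pi / 2 * ‖γ ^ n - 1‖ := e4
    _ ≤ 2 * ‖γ ^ n - 1‖ := by gcongr; linarith

lemma om_asymp (C : ℕ) : ∃ Y0 : ℕ, ∀ Y ≥ Y0, C * Y ^ 5 ≤ 2 ^ Y := by
  have h := tendsto_pow_const_div_const_pow_of_one_lt 5 (by norm_num : (1 : ℝ) < 2)
  have h2 : ∀ᶠ Y : ℕ in Filter.atTop, (Y : ℝ) ^ 5 / 2 ^ Y < 1 / (C + 1) :=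
    h.eventually_lt_const (by positivity)
  obtain ⟨Y0, hY0⟩ := Filter.eventually_atTop.mp h2
  refine ⟨Y0, fun Y hY => ?_⟩
  have h3 := hY0 Y hY
  rw [div_lt_div_iff₀ (by positivity) (by positivity)] at h3
  have h4 : (C : ℝ) * Y ^ 5 ≤ 2 ^ Y := by
    have : (0 : ℝ) ≤ (Y : ℝ) ^ 5 := by positivity
    nlinarith
  exact_mod_cast h4

/-- For an ordinary pair `(q, a₁)` (i.e. `β` not a root of unity), the set of
positive integers `n` with `−aₙ = ⌊2·q^{n/2}⌋` is finite. -/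
theorem ordinary_finitely_many_maximal (q a1 : ℤ) (hq : 2 ≤ q) (ha1 : a1 ^ 2 ≤ 4 * q)
    (α β : ℂ) (hα : α ^ 2 - a1 * α + q = 0) (him : 0 ≤ α.im)
    (hβ : β = α / (Real.sqrt q : ℂ))
    (hord : ¬ ∃ k : ℕ, 0 < k ∧ β ^ k = 1)
    (a : ℕ → ℤ) (ha : ∀ n : ℕ, (a n : ℂ) = α ^ n + (starRingEnd ℂ) α ^ n) :
    {n : ℕ | 0 < n ∧ -(a n) = ⌊2 * Real.sqrt q ^ n⌋}.Finite := by
  have hqr : (2 : ℝ) ≤ q := by exact_mod_cast hq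
  have hs0 : 0 < Real.sqrt q := Real.sqrt_pos.mpr (by linarith)
  have hss : Real.sqrt q ^ 2 = q := Real.sq_sqrt (by linarith)
  -- real and imaginary parts
  have hre : α.re ^ 2 - α.im ^ 2 - a1 * α.re + q = 0 := by
    have := congrArg Complex.re hα
    simp [pow_two] at this
    linarith
  have him' : α.im * (2 * α.re - a1) = 0 := by
    have := congrArg Complex.im hα
    simp [pow_two] at this
    linarith
  have ha1r : (a1 : ℝ) ^ 2 ≤ 4 * q := by exact_mod_cast ha1
  have hx : 2 * α.re = a1 := by
    rcases mul_eq_zero.mp him' with h | h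
    · rw [h] at hre
      have : (2 * α.re - a1) ^ 2 = 0 := le_antisymm (by nlinarith) (sq_nonneg _)
      have := pow_eq_zero_iff (two_ne_zero) |>.mp this
      linarith
    · linarith
  have hnorm : α.re ^ 2 + α.im ^ 2 = q := by
    rw [← hx] at hre; linarith
  have h1 : α + (starRingEnd ℂ) α = a1 := by
    rw [Complex.add_conj, hx]; simp
  have h2 : α * (starRingEnd ℂ) α = q := by
    rw [Complex.mul_conj, Complex.normSq_apply]
    have : α.re * α.re + α.im * α.im = q := by linarith [hnorm]
    rw [this]; simp
  have hαn : ‖α‖ = Real.sqrt q := by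
    rw [Complex.norm_def, Complex.normSq_apply]
    congr 1; linarith [hnorm]
  have hβ1 : ‖β‖ = 1 := by
    rw [hβ, norm_div, hαn, Complex.norm_real, Real.norm_of_nonneg hs0.le, div_self hs0.ne']
  have hsc : (Real.sqrt q : ℂ) ≠ 0 := by exact_mod_cast hs0.ne'
  have hαβ : α = (Real.sqrt q : ℂ) * β := by rw [hβ]; field_simp
  have hγ : β ^ 2 * q = α ^ 2 := by
    rw [hαβ, mul_pow]
    have : ((Real.sqrt q : ℝ) : ℂ) ^ 2 = (q : ℂ) := by
      rw [← Complex.ofReal_pow, hss]; simp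
    rw [this]; ring
  have hγ1 : ‖β ^ 2‖ = 1 := by rw [norm_pow, hβ1, one_pow]
  have hordγ : ∀ d : ℕ, 0 < d → (β ^ 2) ^ d ≠ 1 := by
    intro d hd h
    exact hord ⟨2 * d, by omega, by rw [pow_mul]; exact h⟩
  -- parameters
  obtain ⟨κ, hκ⟩ : ∃ κ : ℕ, 4 * q ≤ 2 ^ κ := by
    refine ⟨(4 * q).toNat, ?_⟩
    have h3 : (4 * q).toNat ≤ 2 ^ (4 * q).toNat := Nat.lt_two_pow_self.le
    have h4 : (((4 * q).toNat : ℕ) : ℤ) ≤ 2 ^ (4 * q).toNat := by exact_mod_cast h3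
    rwa [Int.toNat_of_nonneg (by linarith)] at h4
  obtain ⟨K, hK⟩ : ∃ K : ℕ, K = 6400 + 64 * κ := ⟨_, rfl⟩
  obtain ⟨Y0, hY0⟩ := om_asymp (320 * K ^ 4)
  set Y1 := Y0 + 48 * K ^ 6 + 8 with hY1
  refine (Set.finite_lt_nat (Y1 ^ 4)).subset ?_
  rintro n ⟨hn, hfl⟩
  by_contra hnlt
  have hnge : Y1 ^ 4 ≤ n := not_lt.mp hnlt
  set Y := Nat.sqrt (Nat.sqrt n) with hYdef
  have hYge : Y1 ≤ Y := by
    rw [hYdef, Nat.le_sqrt, Nat.le_sqrt]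
    calc Y1 * Y1 * (Y1 * Y1) = Y1 ^ 4 := by ring
      _ ≤ n := hnge
  have hYn : Y ^ 4 ≤ n := by
    have e1 : Y * Y ≤ Nat.sqrt n := Nat.sqrt_le _
    have e2 : Nat.sqrt n * Nat.sqrt n ≤ n := Nat.sqrt_le _
    calc Y ^ 4 = (Y * Y) * (Y * Y) := by ring
      _ ≤ Nat.sqrt n * Nat.sqrt n := Nat.mul_le_mul e1 e1
      _ ≤ n := e2
  have hY8 : 1 ≤ Y := by omega
  have hnY : n ≤ 16 * Y ^ 4 := by
    have e1 : Nat.sqrt n + 1 ≤ (Y + 1) * (Y + 1) := Nat.lt_succ_sqrt (Nat.sqrt n)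
    have e2 : n < (Nat.sqrt n + 1) * (Nat.sqrt n + 1) := Nat.lt_succ_sqrt n
    have e3 : Nat.sqrt n + 1 ≤ (2 * Y) * (2 * Y) := e1.trans (Nat.mul_le_mul (by omega) (by omega))
    calc n ≤ (Nat.sqrt n + 1) * (Nat.sqrt n + 1) := e2.le
      _ ≤ ((2 * Y) * (2 * Y)) * ((2 * Y) * (2 * Y)) := Nat.mul_le_mul e3 e3
      _ = 16 * Y ^ 4 := by ring
  have hpw := hY0 Y (by omega)
  obtain ⟨E, hE⟩ : ∃ E : ℕ, E = 12 * K ^ 6 * Y ^ 3 := ⟨_, rfl⟩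
  have hEn : 4 * (E + 2) ≤ n := by
    refine le_trans ?_ hYn
    have e1 : 48 * K ^ 6 + 8 ≤ Y := by omega
    have e2 : 1 ≤ Y ^ 3 := Nat.one_le_pow _ _ hY8
    calc 4 * (E + 2) ≤ (48 * K ^ 6 + 8) * Y ^ 3 := by rw [hE]; nlinarith
      _ ≤ Y * Y ^ 3 := Nat.mul_le_mul e1 le_rfl
      _ = Y ^ 4 := by ring
  -- the analytic estimate
  have hx1 : 2 * Real.sqrt q ^ n + (a n : ℝ) < 1 := by
    have := Int.lt_floor_add_one (2 * Real.sqrt q ^ n)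
    rw [← hfl] at this
    push_cast at this
    linarith
  have hax : (a n : ℝ) = Real.sqrt q ^ n * (2 * (β ^ n).re) := by
    have e := ha n
    rw [← map_pow, Complex.add_conj, hαβ, mul_pow, ← Complex.ofReal_pow, Complex.re_ofReal_mul] at e
    have e' : (a n : ℝ) = 2 * (Real.sqrt q ^ n * (β ^ n).re) := by exact_mod_cast e
    rw [e']; ring
  have hβn : ‖β ^ n + 1‖ ^ 2 = 2 + 2 * (β ^ n).re := by
    have e1 : ‖β ^ n‖ ^ 2 = 1 := by rw [norm_pow, hβ1, one_pow, one_pow]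
    rw [← Complex.normSq_eq_norm_sq, Complex.normSq_apply] at e1 ⊢
    simp only [Complex.add_re, Complex.add_im, Complex.one_re, Complex.one_im, add_zero]
    linarith
  have hsn : 0 < Real.sqrt q ^ n := by positivity
  have hprod : Real.sqrt q ^ n * ‖β ^ n + 1‖ ^ 2 < 1 := by
    rw [hβn]; rw [hax] at hx1; linarith
  have hprod4 : (2 : ℝ) ^ n * ‖β ^ n + 1‖ ^ 4 < 1 := by
    have e1 : (Real.sqrt q ^ n * ‖β ^ n + 1‖ ^ 2) ^ 2 < 1 :=
      pow_lt_one₀ (by positivity) hprod two_ne_zero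
    have e2 : (Real.sqrt q ^ n * ‖β ^ n + 1‖ ^ 2) ^ 2 = (q : ℝ) ^ n * ‖β ^ n + 1‖ ^ 4 := by
      rw [mul_pow, ← pow_mul, mul_comm n 2, pow_mul, hss]; ring
    rw [e2] at e1
    refine lt_of_le_of_lt ?_ e1
    gcongr
  have hsmall : ‖β ^ n + 1‖ ≤ (1 / 2) ^ (E + 2) := by
    by_contra hcon
    push Not at hcon
    have e1 : (((1 : ℝ) / 2) ^ (E + 2)) ^ 4 ≤ ‖β ^ n + 1‖ ^ 4 := by gcongr
    have e2 : (1 : ℝ) ≤ 2 ^ n * (((1 : ℝ) / 2) ^ (E + 2)) ^ 4 := by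
      obtain ⟨d, hd⟩ := Nat.exists_eq_add_of_le hEn
      rw [hd, ← pow_mul, mul_comm (E + 2) 4, pow_add, mul_right_comm, ← mul_pow]
      norm_num
      exact one_le_pow₀ (by norm_num)
    have e3 : (2 : ℝ) ^ n * (((1 : ℝ) / 2) ^ (E + 2)) ^ 4 ≤ 2 ^ n * ‖β ^ n + 1‖ ^ 4 := by gcongr
    linarith
  obtain ⟨k, hk, hkε⟩ := om_root (β ^ 2) hγ1 n hn
  have hγn : ‖(β ^ 2) ^ n - 1‖ ≤ 2 * ‖β ^ n + 1‖ := by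
    have e1 : (β ^ 2) ^ n - 1 = (β ^ n - 1) * (β ^ n + 1) := by
      rw [← pow_mul, mul_comm 2 n, pow_mul]; ring
    rw [e1, norm_mul]
    have e2 : ‖β ^ n - 1‖ ≤ 2 := by
      refine (norm_sub_le _ _).trans ?_
      rw [norm_pow, hβ1, one_pow, norm_one]; norm_num
    gcongr
  refine om_core q a1 hq ha1 α (β ^ 2) hα h1 h2 hγ hγ1 hordγ k n κ K Y E hn hk hκ hK hY8 ?_ ?_ hE ?_
  · calc 20 * n * (K ^ 4 * Y) ≤ 20 * (16 * Y ^ 4) * (K ^ 4 * Y) := by gcongr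
      _ = 320 * K ^ 4 * Y ^ 5 := by ring
      _ ≤ _ := hpw
  · refine le_trans ?_ hpw
    have : Y ^ 2 ≤ Y ^ 5 := Nat.pow_le_pow_right hY8 (by norm_num)
    gcongr
    norm_num
  · calc _ ≤ 2 * ‖(β ^ 2) ^ n - 1‖ := hkε
      _ ≤ 2 * (2 * (1 / 2) ^ (E + 2)) := by linarith
      _ = (1 / 2) ^ E := by rw [pow_add]; ring
end

section
/- Let q, a₁ be integers with q ≥ 2 and a₁² ≤ 4q such that the pair (q, a₁) is ordinary (i.e., β is not a root of unity). If −aₙ = ⌊2·q^{n/2}⌋ for some positive integer n, then (n/4)·log q < 8.87·(10.98·π + (1/2)·log q)·(max{17, 2·log n + 3.27})² + log(π/3). -/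
section
open Finset

lemma taylor_div (N : ℕ) (f : ℂ → ℂ) (hf : Differentiable ℂ f) :
    ∃ (a : ℕ → ℂ) (g : ℂ → ℂ), Differentiable ℂ g ∧
      ∀ z, f z = ∑ i ∈ range N, a i * z ^ i + z ^ N * g z := by
  induction N with
  | zero => exact ⟨fun _ => 0, f, hf, by simp⟩
  | succ N ih =>
    obtain ⟨a, g, hg, h⟩ := ih
    have hd : Differentiable ℂ (dslope g 0) := by
      have := (Complex.differentiableOn_dslope (s := Set.univ) (c := (0:ℂ)) (f := g) Filter.univ_mem).2
        hg.differentiableOn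
      exact differentiableOn_univ.1 this
    refine ⟨fun i => if i = N then g 0 else a i, dslope g 0, hd, fun z => ?_⟩
    have h1 : g z = g 0 + z * dslope g 0 z := by
      have := sub_smul_dslope g 0 z
      simp only [sub_zero, smul_eq_mul] at this
      rw [this]; ring
    have h2 : ∑ i ∈ range N, (if i = N then g 0 else a i) * z ^ i = ∑ i ∈ range N, a i * z ^ i :=
      sum_congr rfl fun i hi => by rw [if_neg (by have := mem_range.1 hi; omega)]
    rw [h z, sum_range_succ, h2]
    simp only [if_true]; rw [h1]; ring

lemma det_bound {N : ℕ} (M : Matrix (Fin N) (Fin N) ℂ) (B : Fin N → ℝ)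
    (h : ∀ i j, ‖M i j‖ ≤ B i) : ‖M.det‖ ≤ (N.factorial : ℝ) * ∏ i, B i := by
  rw [← Matrix.det_transpose, Matrix.det_apply]
  refine (norm_sum_le _ _).trans ?_
  have : ∀ σ ∈ (univ : Finset (Equiv.Perm (Fin N))),
      ‖Equiv.Perm.sign σ • ∏ i, M.transpose (σ i) i‖ ≤ ∏ i, B i := by
    intro σ _
    have h1 : ‖Equiv.Perm.sign σ • ∏ i, M.transpose (σ i) i‖ = ‖∏ i, M.transpose (σ i) i‖ := by
      rcases Int.units_eq_one_or (Equiv.Perm.sign σ) with h | h <;> simp [h]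
    rw [h1, norm_prod]
    exact prod_le_prod (fun _ _ => norm_nonneg _) (fun i _ => h i (σ i))
  refine (sum_le_sum this).trans ?_
  simp [Fintype.card_perm]

lemma det_diff {N : ℕ} (M : ℂ → Matrix (Fin N) (Fin N) ℂ)
    (h : ∀ i j, Differentiable ℂ fun x => M x i j) : Differentiable ℂ fun x => (M x).det := by
  simp only [Matrix.det_apply']
  refine Differentiable.fun_sum fun σ _ => ?_
  refine Differentiable.const_mul ?_ _
  exact Differentiable.fun_finsetProd fun i _ => h _ _

theorem interp {N : ℕ} (φ : Fin N → ℂ → ℂ) (hφ : ∀ i, Differentiable ℂ (φ i))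
    (ζ : Fin N → ℂ) (hζ : Function.Injective ζ) (E : Fin N → Fin N → ℂ)
    (ρ : ℝ) (hρ : 1 ≤ ρ) (B : Fin N → ℝ)
    (hB : ∀ i j x, ‖x‖ = ρ → ‖φ i (x * ζ j)‖ ≤ B i)
    (hE : ∀ i j, ρ ^ N * ‖E i j‖ ≤ B i) :
    ρ ^ (∑ i : Fin N, (i : ℕ)) * ‖(Matrix.of fun i j => φ i (ζ j) + E i j).det‖ ≤
      (N.factorial : ℝ) * ∏ i, (2 * B i) := by
  choose a g hg h using fun i => taylor_div N (φ i) (hφ i)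
  set V : Matrix (Fin N) (Fin N) ℂ := (Matrix.vandermonde ζ).transpose with hV
  have hVdet : IsUnit V.det := by
    rw [hV, Matrix.det_transpose, isUnit_iff_ne_zero]
    exact Matrix.det_vandermonde_ne_zero_iff.2 hζ
  let A : Matrix (Fin N) (Fin N) ℂ := Matrix.of fun i ν => a i ν
  let G : ℂ → Matrix (Fin N) (Fin N) ℂ := fun x =>
    Matrix.of fun i j => ζ j ^ N * g i (x * ζ j) + E i j
  let D1 : ℂ → Matrix (Fin N) (Fin N) ℂ := fun x => Matrix.diagonal fun ν => x ^ (ν : ℕ)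
  let D2 : ℂ → Matrix (Fin N) (Fin N) ℂ := fun x => Matrix.diagonal fun ν => x ^ (N - (ν : ℕ))
  let F : ℂ → Matrix (Fin N) (Fin N) ℂ := fun x =>
    Matrix.of fun i j => φ i (x * ζ j) + x ^ N * E i j
  let H : ℂ → ℂ := fun x => (A + G x * V⁻¹ * D2 x).det * V.det
  have hF : ∀ x, F x = (A + G x * V⁻¹ * D2 x) * D1 x * V := by
    intro x
    have h21 : D2 x * D1 x = (x ^ N) • (1 : Matrix (Fin N) (Fin N) ℂ) := by
      simp only [D1, D2, Matrix.diagonal_mul_diagonal]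
      rw [← Matrix.diagonal_one, ← Matrix.diagonal_smul]
      congr 1
      funext ν
      simp only [Pi.smul_apply, smul_eq_mul, mul_one]
      rw [← pow_add]; congr 1; have := ν.2; omega
    have e : (A + G x * V⁻¹ * D2 x) * D1 x * V = A * D1 x * V + x ^ N • G x := by
      rw [add_mul, add_mul, mul_assoc (G x * V⁻¹), h21]
      simp only [Matrix.mul_smul, Matrix.mul_one, Matrix.smul_mul]
      rw [Matrix.nonsing_inv_mul_cancel_right _ _ hVdet]
    rw [e]
    ext i j
    simp only [F, Matrix.of_apply, Matrix.add_apply, Matrix.smul_apply, smul_eq_mul, G]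
    rw [Matrix.mul_apply, h i]
    simp only [A, D1, Matrix.mul_diagonal, Matrix.of_apply, hV, Matrix.transpose_apply,
      Matrix.vandermonde_apply]
    rw [← Fin.sum_univ_eq_sum_range (fun k => a i k * (x * ζ j) ^ k) N]
    rw [mul_add, ← mul_assoc, ← mul_pow, add_assoc]
    congr 1
    exact sum_congr rfl fun k _ => by rw [mul_pow]; ring
  have hFH : ∀ x, (F x).det = H x * x ^ (∑ i : Fin N, (i : ℕ)) := by
    intro x
    rw [hF, Matrix.det_mul, Matrix.det_mul]
    simp only [H, D1, Matrix.det_diagonal, prod_pow_eq_pow_sum]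
    ring
  have hH : Differentiable ℂ H := by
    have : ∀ i j, Differentiable ℂ fun x => (A + G x * V⁻¹ * D2 x) i j := by
      intro i j
      simp only [Matrix.add_apply, D2, Matrix.mul_diagonal]
      simp only [Matrix.mul_apply, G, Matrix.of_apply]
      have := hg i
      fun_prop
    exact (det_diff _ this).mul_const _
  have hρ0 : 0 < ρ := by linarith
  have hcirc : ∀ x : ℂ, ‖x‖ = ρ → ‖H x‖ ≤
      (N.factorial : ℝ) * (∏ i, (2 * B i)) / ρ ^ (∑ i : Fin N, (i : ℕ)) := by
    intro x hx
    rw [le_div_iff₀ (by positivity)]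
    have : ‖H x‖ * ρ ^ (∑ i : Fin N, (i : ℕ)) = ‖(F x).det‖ := by
      rw [hFH, norm_mul (H x), norm_pow, hx]
    rw [this]
    apply det_bound
    intro i j
    simp only [F, Matrix.of_apply]
    refine (norm_add_le _ _).trans ?_
    rw [norm_mul, norm_pow, hx]
    have := hB i j x hx
    have := hE i j
    linarith
  have h1 : ‖H 1‖ ≤ (N.factorial : ℝ) * (∏ i, (2 * B i)) / ρ ^ (∑ i : Fin N, (i : ℕ)) := by
    apply Complex.norm_le_of_forall_mem_frontier_norm_le (U := Metric.ball (0:ℂ) ρ)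
      Metric.isBounded_ball hH.diffContOnCl
    · intro z hz
      rw [frontier_ball _ hρ0.ne'] at hz
      exact hcirc z (by simpa using hz)
    · rw [closure_ball _ hρ0.ne']
      simpa using hρ
  rw [le_div_iff₀ (by positivity)] at h1
  have h2 := hFH 1
  simp only [one_pow, mul_one, F, one_mul] at h2
  rw [h2]
  linarith

lemma choose_cols {N : ℕ} {κ : Type*} (W : Fin N → κ → ℂ)
    (h : ∀ c : Fin N → ℂ, (∀ j, ∑ i, c i * W i j = 0) → c = 0) :
    ∃ f : Fin N → κ, (Matrix.of fun i j => W i (f j)).det ≠ 0 := by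
  classical
  let s : Set (Fin N → ℂ) := Set.range fun j => fun i => W i j
  have hs : Submodule.span ℂ s = ⊤ := by
    by_contra hne
    obtain ⟨φ, hφ, hφ2⟩ := Submodule.exists_le_ker_of_lt_top _ (lt_top_iff_ne_top.2 hne)
    apply hφ
    have hc := h (fun i => φ (Pi.single i 1)) (by
      intro j
      have h1 : φ (fun i => W i j) = 0 := by
        have := hφ2 (Submodule.subset_span (s := s) ⟨j, rfl⟩)
        simpa using this
      rw [← h1, LinearMap.pi_apply_eq_sum_univ φ (fun i => W i j)]
      refine sum_congr rfl fun i _ => ?_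
      rw [smul_eq_mul, mul_comm]
      congr 2
      funext k
      simp [Pi.single_apply, eq_comm])
    ext i
    simpa using congrFun hc i
  obtain ⟨f, hf1, hf2, hf3⟩ := Submodule.exists_fun_fin_finrank_span_eq ℂ s
  have hN : Module.finrank ℂ (Submodule.span ℂ s) = N := by
    rw [hs]; simp
  have e := finCongr hN
  choose g hg using hf1
  refine ⟨fun j => g ((finCongr hN).symm j), ?_⟩
  have hli : LinearIndependent ℂ (fun j => f ((finCongr hN).symm j)) :=
    hf3.comp _ (Equiv.injective _)
  have : (Matrix.of fun i j => W i (g ((finCongr hN).symm j))).transpose =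
      Matrix.of (fun j => f ((finCongr hN).symm j)) := by
    ext j i
    simp only [Matrix.transpose_apply, Matrix.of_apply]
    rw [← hg]
  rw [← Matrix.det_transpose, this]
  have h2 := (Matrix.linearIndependent_rows_iff_isUnit (A := Matrix.of (fun j => f ((finCongr hN).symm j)))).1 hli
  exact ((Matrix.isUnit_iff_isUnit_det _).1 h2).ne_zero

open Polynomial in
lemma det_poly {t : ℕ} (M : Matrix (Fin t) (Fin t) ℂ[X]) (d : ℕ)
    (h : ∀ i j, (M i j).natDegree ≤ d) :
    M.det.natDegree ≤ t * d ∧ M.det.coeff (t * d) = (Matrix.of fun i j => (M i j).coeff d).det := by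
  constructor
  · rw [Matrix.det_apply']
    refine natDegree_sum_le_of_forall_le _ _ fun σ _ => ?_
    refine natDegree_mul_le.trans ?_
    rw [natDegree_intCast, zero_add]
    refine (natDegree_prod_le _ _).trans ?_
    refine (sum_le_sum fun i _ => h (σ i) i).trans ?_
    simp
  · rw [Matrix.det_apply', Matrix.det_apply', finsetSum_coeff]
    refine sum_congr rfl fun σ _ => ?_
    rw [← C_eq_intCast, coeff_C_mul]
    congr 1
    have := coeff_prod_of_natDegree_le (s := univ) (fun i => M (σ i) i) d (fun i _ => h _ _)
    rw [card_univ, Fintype.card_fin] at this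
    rw [this]
    simp

open Polynomial in
theorem zero_est (L K R2 S : ℕ) (n m : ℤ) (hmn : IsCoprime m n) (γ : ℂ) (hγ0 : γ ≠ 0)
    (hγ : ∀ k : ℕ, 0 < k → γ ^ k ≠ 1) (P : Fin L → ℂ[X]) (hP : ∀ l, (P l).natDegree ≤ K)
    (r0 s0 : ℤ) (hR : (R2 : ℤ) ≤ n) (hc : K * L < R2 * S)
    (h0 : ∀ r s : ℤ, r0 ≤ r → r + 1 < r0 + L + R2 → s0 ≤ s → s < s0 + S →
      ∑ l, (P l).eval ((r * m + s * n : ℤ) : ℂ) * γ ^ ((l : ℤ) * r) = 0) : ∀ l, P l = 0 := by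
  classical
  by_contra hne
  push Not at hne
  obtain ⟨l1, hl1⟩ := hne
  let J : Finset (Fin L) := univ.filter fun l => P l ≠ 0
  obtain ⟨t, ht⟩ : ∃ t, t = J.card := ⟨_, rfl⟩
  have htL : t ≤ L := by
    rw [ht]; exact (card_le_univ _).trans (by simp)
  let e : Fin t ≃ J := (J.equivFinOfCardEq ht.symm).symm
  have hinj : Function.Injective fun j : Fin t => γ ^ ((e j : Fin L) : ℕ) := by
    have key : ∀ a b : ℕ, a < b → γ ^ a ≠ γ ^ b := by
      intro a b hab h
      apply hγ (b - a) (by omega)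
      have : γ ^ a * γ ^ (b - a) = γ ^ a * 1 := by
        rw [← pow_add, mul_one, h]; congr 1; omega
      exact mul_left_cancel₀ (pow_ne_zero _ hγ0) this
    intro i j hij
    simp only at hij
    apply e.injective
    apply Subtype.ext
    apply Fin.ext
    rcases lt_trichotomy ((e i : Fin L) : ℕ) (e j : Fin L) with h | h | h
    · exact absurd hij (key _ _ h)
    · exact h
    · exact absurd hij.symm (key _ _ h)
  let p : Fin t → ℂ[X] := fun j => P (e j)
  have hp0 : ∀ j, p j ≠ 0 := fun j => (mem_filter.1 (e j).2).2
  let M : Matrix (Fin t) (Fin t) ℂ[X] := Matrix.of fun i j =>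
    C (γ ^ (((e j : Fin L) : ℕ) * (i : ℕ))) * (p j).comp (X + C ((i : ℂ) * m)) *
      X ^ (K - (p j).natDegree)
  have hdeg : ∀ i j, (M i j).natDegree ≤ K := by
    intro i j
    simp only [M, Matrix.of_apply]
    refine natDegree_mul_le.trans ?_
    rw [natDegree_X_pow]
    have h1 := natDegree_C_mul_le (γ ^ (((e j : Fin L) : ℕ) * (i : ℕ)))
      ((p j).comp (X + C ((i : ℂ) * m)))
    rw [natDegree_comp, natDegree_X_add_C, mul_one] at h1
    have := hP (e j)
    have h3 : (p j).natDegree ≤ K := this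
    omega
  have hcoef : ∀ i j, (M i j).coeff K = γ ^ (((e j : Fin L) : ℕ) * (i : ℕ)) * (p j).leadingCoeff := by
    intro i j
    simp only [M, Matrix.of_apply]
    have h3 : (p j).natDegree ≤ K := hP (e j)
    conv_lhs => rw [show K = (p j).natDegree + (K - (p j).natDegree) by omega]
    rw [Nat.add_sub_cancel_left, coeff_mul_X_pow, coeff_C_mul]
    congr 1
    have h4 : ((p j).comp (X + C ((i : ℂ) * m))).natDegree = (p j).natDegree := by
      rw [natDegree_comp, natDegree_X_add_C, mul_one]
    rw [← h4, coeff_natDegree, leadingCoeff_comp (by rw [natDegree_X_add_C]; exact one_ne_zero), leadingCoeff_X_add_C]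
    simp
  obtain ⟨hd1, hd2⟩ := det_poly M K hdeg
  have hdet : M.det ≠ 0 := by
    intro h
    rw [h, coeff_zero] at hd2
    have : (Matrix.of fun i j => (M i j).coeff K) =
        (Matrix.vandermonde fun j : Fin t => γ ^ ((e j : Fin L) : ℕ)).transpose *
          Matrix.diagonal fun j => (p j).leadingCoeff := by
      ext i j
      rw [Matrix.mul_diagonal]
      simp only [Matrix.of_apply, hcoef, Matrix.transpose_apply, Matrix.vandermonde_apply, pow_mul]
    rw [this, Matrix.det_mul, Matrix.det_transpose, Matrix.det_diagonal] at hd2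
    rcases mul_eq_zero.1 hd2.symm with h | h
    · exact Matrix.det_vandermonde_ne_zero_iff.2 hinj h
    · obtain ⟨j, _, hj⟩ := prod_eq_zero_iff.1 h
      exact hp0 j (leadingCoeff_eq_zero.1 hj)
  apply hdet
  have htpos : 0 < t := by
    rw [ht]; exact card_pos.2 ⟨l1, mem_filter.2 ⟨mem_univ _, hl1⟩⟩
  let f : Fin R2 × Fin S → ℂ := fun z => (((r0 + (z.1 : ℕ)) * m + (s0 + (z.2 : ℕ)) * n : ℤ) : ℂ)
  refine eq_zero_of_natDegree_lt_card_of_eval_eq_zero M.det (f := f) ?_ ?_ ?_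
  · rintro ⟨a, b⟩ ⟨a', b'⟩ h
    simp only [f] at h
    have h := Int.cast_injective h
    have hdvd : n ∣ (((a : ℕ) : ℤ) - (a' : ℕ)) * m := ⟨(b' : ℕ) - (b : ℕ), by linear_combination h⟩
    have hdvd := hmn.symm.dvd_of_dvd_mul_right hdvd
    have ha := a.2
    have ha' := a'.2
    have hn0 : 0 < n := by omega
    have : ((a : ℕ) : ℤ) - (a' : ℕ) = 0 := by
      apply Int.eq_zero_of_abs_lt_dvd hdvd
      rw [abs_lt]; constructor <;> omega
    have haa : a = a' := by apply Fin.ext; omega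
    subst haa
    have : n * ((b : ℕ) : ℤ) = n * (b' : ℕ) := by linear_combination h
    have := mul_left_cancel₀ hn0.ne' this
    rw [Prod.mk.injEq]
    exact ⟨rfl, by apply Fin.ext; exact_mod_cast this⟩
  · rintro ⟨a, b⟩
    have hx : (f (a, b)) = (((r0 + (a : ℕ)) * m + (s0 + (b : ℕ)) * n : ℤ) : ℂ) := rfl
    generalize f (a, b) = x at hx
    have h1 : M.det.eval x = ((evalRingHom x).mapMatrix M).det := by
      rw [← RingHom.map_det]; rfl
    let M0 : Matrix (Fin t) (Fin t) ℂ := Matrix.of fun i j =>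
      γ ^ (((e j : Fin L) : ℕ) * (i : ℕ)) * (p j).eval (x + (i : ℂ) * m)
    have h2 : (evalRingHom x).mapMatrix M = M0 * Matrix.diagonal fun j => x ^ (K - (p j).natDegree) := by
      ext i j
      rw [Matrix.mul_diagonal]
      simp [M, M0, eval_comp]
    have h3 : M0.det = 0 := by
      rw [← Matrix.exists_mulVec_eq_zero_iff]
      refine ⟨fun j => γ ^ ((((e j : Fin L) : ℕ) : ℤ) * (r0 + (a : ℕ))), ?_, ?_⟩
      · intro h
        have := congrFun h ⟨0, htpos⟩
        exact zpow_ne_zero _ hγ0 this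
      · funext i
        have ha := a.2
        have hb := b.2
        have hi := i.2
        have hz := h0 (r0 + (a : ℕ) + (i : ℕ)) (s0 + (b : ℕ)) (by omega) (by omega) (by omega) (by omega)
        have hJ : ∑ l ∈ J, (P l).eval (((r0 + (a : ℕ) + (i : ℕ)) * m + (s0 + (b : ℕ)) * n : ℤ) : ℂ) *
            γ ^ ((l : ℤ) * (r0 + (a : ℕ) + (i : ℕ))) = 0 := by
          rw [← hz]
          refine sum_subset (subset_univ _) fun l _ hl => ?_
          have : P l = 0 := by
            by_contra h
            exact hl (mem_filter.2 ⟨mem_univ _, h⟩)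
          simp [this]
        rw [← sum_coe_sort J, ← Equiv.sum_comp e] at hJ
        simp only [Matrix.mulVec, dotProduct, M0, Matrix.of_apply, Pi.zero_apply]
        rw [← hJ]
        refine sum_congr rfl fun j _ => ?_
        have hxx : (((r0 + (a : ℕ) + (i : ℕ)) * m + (s0 + (b : ℕ)) * n : ℤ) : ℂ) = x + (i : ℂ) * m := by
          rw [hx]; push_cast; ring
        rw [hxx, mul_add (((e j : Fin L) : ℕ) : ℤ) _ ((i : ℕ) : ℤ), zpow_add₀ hγ0,
          ← Nat.cast_mul, zpow_natCast]
        simp only [p]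
        ring
    rw [h1, h2, Matrix.det_mul, h3, zero_mul]
  · rw [Fintype.card_prod, Fintype.card_fin, Fintype.card_fin]
    refine lt_of_le_of_lt hd1 (lt_of_le_of_lt ?_ hc)
    rw [mul_comm]; exact Nat.mul_le_mul_left _ htL

/-- binomial polynomials -/
noncomputable def bc (k : ℕ) : Polynomial ℂ :=
  Polynomial.C ((k.factorial : ℂ)⁻¹) * descPochhammer ℂ k

lemma bc_deg (k : ℕ) : (bc k).natDegree ≤ k := by
  refine (Polynomial.natDegree_C_mul_le _ _).trans ?_
  rw [descPochhammer_natDegree]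

lemma bc_int (k : ℕ) (x : ℤ) : (bc k).eval (x : ℂ) = (Ring.choose x k : ℤ) := by
  have h := Ring.descPochhammer_eq_factorial_smul_choose x k
  have h1 : (descPochhammer ℤ k).smeval x = (descPochhammer ℤ k).eval x := by
    rw [Polynomial.eval_eq_sum, Polynomial.smeval_eq_sum]
    rfl
  rw [h1, descPochhammer_eval_eq_prod_range, nsmul_eq_mul] at h
  rw [bc, Polynomial.eval_mul, Polynomial.eval_C, descPochhammer_eval_eq_prod_range]
  have h2 : (k.factorial : ℂ) ≠ 0 := by exact_mod_cast k.factorial_ne_zero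
  rw [inv_mul_eq_iff_eq_mul₀ h2]
  have h3 := congrArg (Int.cast : ℤ → ℂ) h
  push_cast at h3
  exact h3

lemma bc_nat (k j : ℕ) : (bc k).eval (j : ℂ) = (Nat.choose j k : ℂ) := by
  have := bc_int k j
  rw [Ring.choose_natCast] at this
  simpa using this

lemma bc_norm (k : ℕ) (z : ℂ) (K : ℝ) (hk : (k : ℝ) ≤ K) :
    ‖(bc k).eval z‖ ≤ (‖z‖ + K) ^ k / k.factorial := by
  rw [bc, Polynomial.eval_mul, Polynomial.eval_C, descPochhammer_eval_eq_prod_range, norm_mul,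
    norm_inv, Complex.norm_natCast, norm_prod, div_eq_inv_mul]
  gcongr
  calc ∏ i ∈ range k, ‖z - (i : ℂ)‖ ≤ ∏ i ∈ range k, (‖z‖ + K) := by
        refine prod_le_prod (fun _ _ => norm_nonneg _) fun i hi => ?_
        refine (norm_sub_le _ _).trans ?_
        rw [Complex.norm_natCast]
        have : (i : ℝ) ≤ k := by exact_mod_cast (mem_range.1 hi).le
        linarith
    _ = _ := by simp

lemma bc_indep (K : ℕ) (c : Fin K → ℂ) (h : ∑ k : Fin K, Polynomial.C (c k) * bc k = 0) : c = 0 := by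
  have key : ∀ j : ℕ, ∀ hj : j < K, c ⟨j, hj⟩ = 0 := by
    intro j
    induction j using Nat.strong_induction_on with
    | _ j ih =>
      intro hj
      have h1 := congrArg (Polynomial.eval (j : ℂ)) h
      rw [Polynomial.eval_finsetSum, Polynomial.eval_zero] at h1
      rw [← h1, sum_eq_single (⟨j, hj⟩ : Fin K)]
      · simp [bc_nat]
      · intro b _ hb
        rw [Polynomial.eval_mul, Polynomial.eval_C, bc_nat]
        rcases lt_trichotomy (b : ℕ) j with h2 | h2 | h2
        · have := ih b h2 b.2
          simp at this
          simp [this]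
        · exact absurd (Fin.ext h2) hb
        · simp [Nat.choose_eq_zero_of_lt h2]
      · simp
  funext k
  exact key k k.2

lemma sum_abs (a : ℕ) : ∑ i ∈ range (2 * a + 1), |(i : ℤ) - a| = a * (a + 1) := by
  induction a with
  | zero => simp
  | succ a ih =>
    rw [show 2 * (a + 1) + 1 = (2 * a + 1 + 1) + 1 by ring, sum_range_succ', sum_range_succ]
    have : ∑ i ∈ range (2 * a + 1), |((i + 1 : ℕ) : ℤ) - ((a + 1 : ℕ) : ℤ)| =
        ∑ i ∈ range (2 * a + 1), |(i : ℤ) - a| := by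
      refine sum_congr rfl fun i _ => ?_
      congr 1; push_cast; ring
    rw [this, ih]
    rw [abs_of_nonneg (by push_cast; omega), abs_of_nonpos (by push_cast; omega)]
    push_cast; ring

/-- the ring ℤ[α] -/
def ringO (α : ℂ) (q a1 : ℤ) (h : α ^ 2 = a1 * α - q) : Subring ℂ where
  carrier := {z | ∃ u v : ℤ, z = u + v * α}
  mul_mem' := by
    rintro _ _ ⟨u, v, rfl⟩ ⟨u', v', rfl⟩
    refine ⟨u * u' - v * v' * q, u * v' + v * u' + v * v' * a1, ?_⟩
    push_cast
    linear_combination (v * v' : ℂ) * h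
  one_mem' := ⟨1, 0, by simp⟩
  add_mem' := by
    rintro _ _ ⟨u, v, rfl⟩ ⟨u', v', rfl⟩
    exact ⟨u + u', v + v', by push_cast; ring⟩
  zero_mem' := ⟨0, 0, by simp⟩
  neg_mem' := by
    rintro _ ⟨u, v, rfl⟩
    exact ⟨-u, -v, by push_cast; ring⟩

lemma ringO_norm (α : ℂ) (q a1 : ℤ) (h : α ^ 2 = a1 * α - q)
    (hp : α * (starRingEnd ℂ) α = q) (hs : α + (starRingEnd ℂ) α = a1)
    (z : ℂ) (hz : z ∈ ringO α q a1 h) (h0 : z ≠ 0) : 1 ≤ ‖z‖ := by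
  obtain ⟨u, v, rfl⟩ := hz
  have h1 : (((u * u + u * v * a1 + v * v * q : ℤ) : ℝ) : ℂ) = ((‖(u + v * α : ℂ)‖ ^ 2 : ℝ) : ℂ) := by
    rw [← Complex.normSq_eq_norm_sq, ← Complex.mul_conj]
    simp only [map_add, map_mul, map_intCast]
    push_cast
    rw [← hs, ← hp]; ring
  have h2 := Complex.ofReal_injective h1
  have h3 : 0 < ‖(u + v * α : ℂ)‖ := norm_pos_iff.2 h0
  have h4 : (0:ℝ) < ((u * u + u * v * a1 + v * v * q : ℤ) : ℝ) := by rw [h2]; positivity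
  have h5 : (1:ℝ) ≤ ((u * u + u * v * a1 + v * v * q : ℤ) : ℝ) := by
    exact_mod_cast (Int.cast_pos.1 h4)
  rw [h2] at h5
  nlinarith

theorem main_prod (α : ℂ) (q a1 : ℤ) (hq : 2 ≤ q)
    (hp : α * (starRingEnd ℂ) α = q) (hs : α + (starRingEnd ℂ) α = a1)
    (γ : ℂ) (hγdef : γ * (starRingEnd ℂ) α = α)
    (hγ : ∀ k : ℕ, 0 < k → γ ^ k ≠ 1) (n m : ℤ) (hn : 0 < n) (hmn : IsCoprime m n)
    (hm : 2 * |m| ≤ n) (δ : ℝ)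
    (hδ : γ = Complex.exp (Complex.I * ((2 * Real.pi * m + δ) / n)))
    (K L0 R0 S0 R2 N : ℕ) (hN : N = K * (2 * L0 + 1)) (hK : 1 ≤ K)
    (hR2 : 2 * L0 + 1 + R2 = 2 * R0 + 2)
    (hc : (K - 1) * (2 * L0 + 1) < R2 * (2 * S0 + 1)) (hRn : 2 * (R0 : ℤ) + 1 ≤ n)
    (ρ : ℝ) (hρ : 1 ≤ ρ) (hpert : ρ ^ N * (L0 * R0 * |δ|) ≤ n) :
    ∃ (kk : Fin N ≃ Fin K × Fin (2 * L0 + 1)),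
    ρ ^ (∑ i : Fin N, (i : ℕ)) ≤
      (∏ i, ((q : ℝ) ^ (((((kk i).2 : ℕ) : ℤ) - L0).natAbs * R0))) * ((N.factorial : ℝ) *
      ∏ i, (2 * ((ρ * (n * (R0 / 2 + S0)) + K) ^ ((kk i).1 : ℕ) / ((kk i).1 : ℕ).factorial *
        Real.exp (2 * Real.pi * ρ * (R0 / 2 + S0) * (((((kk i).2 : ℕ) : ℤ) - L0).natAbs : ℕ))))) := by
  classical
  have hcα : (starRingEnd ℂ) α ≠ 0 := by
    intro h
    rw [h, mul_zero] at hp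
    have : q = 0 := by exact_mod_cast hp.symm
    omega
  have hα0 : α ≠ 0 := by
    intro h
    rw [h] at hcα
    simp at hcα
  have hγ0 : γ ≠ 0 := by
    intro h; rw [h, zero_mul] at hγdef; exact hα0 hγdef.symm
  have h2 : α ^ 2 = a1 * α - q := by rw [← hs, ← hp]; ring
  have hnR : (0:ℝ) < n := by exact_mod_cast hn
  have hnC : (n : ℂ) ≠ 0 := by exact_mod_cast hn.ne'
  have hρ0 : 0 < ρ := by linarith
  let kk : Fin N ≃ Fin K × Fin (2 * L0 + 1) := (finCongr hN).trans finProdFinEquiv.symm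
  refine ⟨kk, ?_⟩
  let ll : Fin N → ℤ := fun i => (((kk i).2 : ℕ) : ℤ) - L0
  let rr : Fin (2 * R0 + 1) × Fin (2 * S0 + 1) → ℤ := fun c => ((c.1 : ℕ) : ℤ) - R0
  let ss : Fin (2 * R0 + 1) × Fin (2 * S0 + 1) → ℤ := fun c => ((c.2 : ℕ) : ℤ) - S0
  let W : Fin N → Fin (2 * R0 + 1) × Fin (2 * S0 + 1) → ℂ := fun i c =>
    (bc (kk i).1).eval ((rr c * m + ss c * n : ℤ) : ℂ) * γ ^ (ll i * rr c)
  have hll : ∀ i, |ll i| ≤ L0 := by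
    intro i
    have := (kk i).2.2
    simp only [ll]; rw [abs_le]; constructor <;> omega
  have hrr : ∀ c, |rr c| ≤ R0 := by
    intro c
    have := c.1.2
    simp only [rr]; rw [abs_le]; constructor <;> omega
  have hss : ∀ c, |ss c| ≤ S0 := by
    intro c
    have := c.2.2
    simp only [ss]; rw [abs_le]; constructor <;> omega
  -- nonvanishing
  obtain ⟨f, hf⟩ := choose_cols W (by
    intro c hcol
    let P : Fin (2 * L0 + 1) → Polynomial ℂ := fun l =>
      ∑ k : Fin K, Polynomial.C (c (kk.symm (k, l))) * bc k
    have hz := zero_est (2 * L0 + 1) (K - 1) R2 (2 * S0 + 1) n m hmn γ hγ0 hγ P (by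
      intro l
      refine Polynomial.natDegree_sum_le_of_forall_le _ _ fun k _ => ?_
      refine (Polynomial.natDegree_C_mul_le _ _).trans ((bc_deg _).trans ?_)
      have := k.2; omega) (-R0) (-S0) (by omega) hc (by
      intro r s hr1 hr2 hs1 hs2
      have hr3 : r + R0 < 2 * R0 + 1 := by push_cast at hr2; omega
      have hs3 : s + S0 < 2 * S0 + 1 := by push_cast at hs2; omega
      have := hcol (⟨(r + R0).toNat, by omega⟩, ⟨(s + S0).toNat, by omega⟩)
      rw [← Equiv.sum_comp kk.symm, Fintype.sum_prod_type, sum_comm] at this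
      have e1 : (((r + R0).toNat : ℕ) : ℤ) - R0 = r := by omega
      have e2 : (((s + S0).toNat : ℕ) : ℤ) - S0 = s := by omega
      simp only [W, rr, ss, ll, e1, e2, Equiv.apply_symm_apply] at this
      have h5 : γ ^ ((L0 : ℤ) * r) * 0 = 0 := mul_zero _
      rw [← h5, ← this, mul_sum]
      refine sum_congr rfl fun l _ => ?_
      simp only [P]
      rw [Polynomial.eval_finsetSum, sum_mul, mul_sum]
      refine sum_congr rfl fun k _ => ?_
      rw [Polynomial.eval_mul, Polynomial.eval_C, sub_mul, zpow_sub₀ hγ0]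
      have := zpow_ne_zero ((L0 : ℤ) * r) hγ0
      field_simp)
    funext i
    have h6 := bc_indep K (fun k => c (kk.symm (k, (kk i).2))) (hz (kk i).2)
    have h7 := congrFun h6 (kk i).1
    simpa using h7)
  have hfinj : Function.Injective f := by
    intro i j hij
    by_contra hne
    exact hf (Matrix.det_zero_of_column_eq hne (fun k => by simp [hij]))
  -- lower bound
  have hlow : 1 ≤ (∏ i, ((q : ℝ) ^ ((ll i).natAbs * R0))) *
      ‖(Matrix.of fun i j => W i (f j)).det‖ := by
    have hmem : (Matrix.of fun i j => (q : ℂ) ^ ((ll i).natAbs * R0) * W i (f j)).det ∈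
        ringO α q a1 h2 := by
      rw [Matrix.det_apply']
      refine Subring.sum_mem _ fun σ _ => Subring.mul_mem _ (intCast_mem _ _) ?_
      refine Subring.prod_mem _ fun i _ => ?_
      simp only [Matrix.of_apply, W]
      rw [bc_int]
      generalize f i = c
      generalize σ i = i
      rw [mul_left_comm]
      refine Subring.mul_mem _ (intCast_mem _ _) ?_
      have hab : |ll i * rr c| ≤ (((ll i).natAbs * R0 : ℕ) : ℤ) := by
        rw [abs_mul]; push_cast
        gcongr
        · exact hrr c
      rw [abs_le] at hab
      obtain ⟨u, hu⟩ := Int.eq_ofNat_of_zero_le (a := (((ll i).natAbs * R0 : ℕ) : ℤ) + ll i * rr c) (by omega)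
      obtain ⟨v, hv⟩ := Int.eq_ofNat_of_zero_le (a := (((ll i).natAbs * R0 : ℕ) : ℤ) - ll i * rr c) (by omega)
      have hγ' : γ = α / (starRingEnd ℂ) α := by rw [eq_div_iff hcα, hγdef]
      have : (q : ℂ) ^ ((ll i).natAbs * R0) * γ ^ (ll i * rr c) = α ^ u * (starRingEnd ℂ) α ^ v := by
        rw [← zpow_natCast (α) u, ← zpow_natCast ((starRingEnd ℂ) α) v, ← hu, ← hv,
          zpow_add₀ hα0, zpow_sub₀ hcα, ← hp, hγ', div_zpow, zpow_natCast, zpow_natCast, mul_pow]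
        field_simp
      rw [this]
      have hαO : α ∈ ringO α q a1 h2 := ⟨0, 1, by simp⟩
      have hcO : (starRingEnd ℂ) α ∈ ringO α q a1 h2 := ⟨a1, -1, by rw [← hs]; push_cast; ring⟩
      exact Subring.mul_mem _ (Subring.pow_mem _ hαO _) (Subring.pow_mem _ hcO _)
    have hdetmul : (Matrix.of fun i j => (q : ℂ) ^ ((ll i).natAbs * R0) * W i (f j)).det =
        (∏ i, (q : ℂ) ^ ((ll i).natAbs * R0)) * (Matrix.of fun i j => W i (f j)).det :=
      Matrix.det_mul_column (fun i => (q : ℂ) ^ ((ll i).natAbs * R0)) (Matrix.of fun i j => W i (f j))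
    have hqC : (q : ℂ) ≠ 0 := by
      have : q ≠ 0 := by omega
      exact_mod_cast this
    have := ringO_norm α q a1 h2 hp hs _ hmem (by
      rw [hdetmul]
      exact mul_ne_zero (prod_ne_zero_iff.2 fun i _ => pow_ne_zero _ hqC) hf)
    rw [hdetmul, norm_mul, norm_prod] at this
    convert this using 3
    rw [norm_pow, Complex.norm_intCast, abs_of_nonneg (by exact_mod_cast (by omega : 0 ≤ q))]
  -- upper bound
  let φ : Fin N → ℂ → ℂ := fun i z => (bc (kk i).1).eval z *
    Complex.exp (Complex.I * (2 * Real.pi * ll i / n : ℝ) * z)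
  let ζ : Fin N → ℂ := fun j => ((rr (f j) * m + ss (f j) * n : ℤ) : ℂ)
  have hζn : ∀ j, ‖ζ j‖ ≤ n * (R0 / 2 + S0) := by
    intro j
    simp only [ζ]
    rw [Complex.norm_intCast]
    have h1 : |((rr (f j) : ℤ) : ℝ)| ≤ R0 := by exact_mod_cast hrr (f j)
    have h2 : |((ss (f j) : ℤ) : ℝ)| ≤ S0 := by exact_mod_cast hss (f j)
    have h3 : 2 * |(m : ℝ)| ≤ n := by exact_mod_cast hm
    push_cast
    calc |(rr (f j) : ℝ) * m + ss (f j) * n| ≤ |(rr (f j) : ℝ)| * |(m : ℝ)| + |(ss (f j) : ℝ)| * n := by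
          refine (abs_add_le _ _).trans ?_
          rw [abs_mul, abs_mul, abs_of_pos hnR]
      _ ≤ R0 * (n / 2) + S0 * n := by gcongr; linarith
      _ = _ := by ring
  let B : Fin N → ℝ := fun i => (ρ * (n * (R0 / 2 + S0)) + K) ^ ((kk i).1 : ℕ) / ((kk i).1 : ℕ).factorial *
        Real.exp (2 * Real.pi * ρ * (R0 / 2 + S0) * ((ll i).natAbs : ℕ))
  have hbcB : ∀ i (z : ℂ), ‖z‖ ≤ ρ * (n * (R0 / 2 + S0)) → ‖(bc (kk i).1).eval z‖ ≤
      (ρ * (n * (R0 / 2 + S0)) + K) ^ ((kk i).1 : ℕ) / ((kk i).1 : ℕ).factorial := by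
    intro i z hz
    refine (bc_norm _ z K (by exact_mod_cast (kk i).1.2.le)).trans ?_
    gcongr
  have hbd : ∀ i (z : ℂ), ‖z‖ ≤ ρ * (n * (R0 / 2 + S0)) → ‖φ i z‖ ≤ B i := by
    intro i z hz
    simp only [φ, B]
    rw [norm_mul]
    refine mul_le_mul (hbcB i z hz) ?_ (norm_nonneg _) (by positivity)
    rw [Complex.norm_exp]
    apply Real.exp_le_exp.2
    refine (Complex.re_le_norm _).trans ?_
    rw [norm_mul, norm_mul, Complex.norm_I, one_mul, Complex.norm_real, Real.norm_eq_abs, abs_div,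
      abs_mul, abs_mul, abs_of_pos Real.pi_pos, abs_of_pos hnR, abs_two]
    have hcast : |((ll i : ℤ) : ℝ)| = ((ll i).natAbs : ℕ) := by
      rw [Nat.cast_natAbs]; push_cast; rfl
    rw [hcast]
    calc 2 * Real.pi * ((ll i).natAbs : ℝ) / n * ‖z‖
        ≤ 2 * Real.pi * ((ll i).natAbs : ℝ) / n * (ρ * (n * (R0 / 2 + S0))) := by gcongr
      _ = _ := by field_simp
  have hup := interp φ (by intro i; simp only [φ]; fun_prop) ζ (by
      intro i j hij
      simp only [ζ] at hij
      have hij := Int.cast_injective hij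
      apply hfinj
      have hdvd : n ∣ (rr (f i) - rr (f j)) * m := ⟨ss (f j) - ss (f i), by linear_combination hij⟩
      have hdvd := hmn.symm.dvd_of_dvd_mul_right hdvd
      have h1 := (f i).1.2
      have h2 := (f j).1.2
      have h3 : rr (f i) - rr (f j) = 0 := by
        apply Int.eq_zero_of_abs_lt_dvd hdvd
        simp only [rr]
        rw [abs_lt]; constructor <;> omega
      have h4 : n * ss (f i) = n * ss (f j) := by linear_combination hij - m * h3
      have h4 := mul_left_cancel₀ hn.ne' h4
      apply Prod.ext
      · apply Fin.ext; simp only [rr] at h3; omega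
      · apply Fin.ext; simp only [ss] at h4; omega)
    (fun i j => W i (f j) - φ i (ζ j)) ρ hρ B (by
      intro i j x hx
      apply hbd
      rw [norm_mul, hx]
      gcongr
      exact hζn j) (by
      intro i j
      have hζρ : ‖ζ j‖ ≤ ρ * (n * (R0 / 2 + S0)) := by
        refine (hζn j).trans ?_
        have : (0:ℝ) ≤ n * (R0 / 2 + S0) := by positivity
        nlinarith
      have e1 : W i (f j) - φ i (ζ j) = φ i (ζ j) *
          (Complex.exp (Complex.I * ((ll i * rr (f j) * δ / n : ℝ) : ℂ)) - 1) := by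
        have : W i (f j) = φ i (ζ j) * Complex.exp (Complex.I * ((ll i * rr (f j) * δ / n : ℝ) : ℂ)) := by
          simp only [W, φ, ζ]
          rw [mul_assoc, ← Complex.exp_add, hδ, ← Complex.exp_int_mul]
          congr 1
          rw [Complex.exp_eq_exp_iff_exists_int]
          refine ⟨- (ll i * ss (f j)), ?_⟩
          push_cast
          field_simp
          ring
        rw [this]; ring
      rw [e1, norm_mul]
      have h1 : ‖Complex.exp (Complex.I * ((ll i * rr (f j) * δ / n : ℝ) : ℂ)) - 1‖ ≤
          L0 * R0 * |δ| / n := by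
        refine Real.norm_exp_I_mul_ofReal_sub_one_le.trans ?_
        rw [Real.norm_eq_abs, abs_div, abs_mul, abs_mul, abs_of_pos hnR]
        have h1 : |((ll i : ℤ) : ℝ)| ≤ L0 := by exact_mod_cast hll i
        have h2 : |((rr (f j) : ℤ) : ℝ)| ≤ R0 := by exact_mod_cast hrr (f j)
        gcongr
      have h2 := hbd i _ hζρ
      have hB0 : 0 ≤ B i := (norm_nonneg _).trans h2
      calc ρ ^ N * (‖φ i (ζ j)‖ * ‖Complex.exp (Complex.I * ((ll i * rr (f j) * δ / n : ℝ) : ℂ)) - 1‖)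
          ≤ ρ ^ N * (B i * (L0 * R0 * |δ| / n)) := by gcongr
        _ = B i * (ρ ^ N * (L0 * R0 * |δ|) / n) := by ring
        _ ≤ B i * 1 := by
          gcongr
          rw [div_le_one hnR]; exact hpert
        _ = B i := mul_one _)
  have e : (Matrix.of fun i j => φ i (ζ j) + (W i (f j) - φ i (ζ j))) =
      (Matrix.of fun i j => W i (f j)) := by
    ext i j; simp
  rw [e] at hup
  have hq0 : (0:ℝ) < q := by exact_mod_cast (by omega : 0 < q)
  have hQ : 0 < ∏ i, ((q : ℝ) ^ ((ll i).natAbs * R0)) := prod_pos fun i _ => pow_pos hq0 _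
  calc ρ ^ (∑ i : Fin N, (i : ℕ)) ≤ ρ ^ (∑ i : Fin N, (i : ℕ)) * ((∏ i, ((q : ℝ) ^ ((ll i).natAbs * R0))) *
      ‖(Matrix.of fun i j => W i (f j)).det‖) := le_mul_of_one_le_right (by positivity) hlow
    _ = (∏ i, ((q : ℝ) ^ ((ll i).natAbs * R0))) * (ρ ^ (∑ i : Fin N, (i : ℕ)) * ‖(Matrix.of fun i j => W i (f j)).det‖) := by ring
    _ ≤ _ := by gcongr

theorem log_fact_ge (k : ℕ) : (k:ℝ) * Real.log k - k ≤ Real.log (k.factorial) := by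
  induction k with
  | zero => simp
  | succ k ih =>
    rcases Nat.eq_zero_or_pos k with rfl | hk
    · simp
    have hk' : (0:ℝ) < k := by exact_mod_cast hk
    rw [Nat.factorial_succ]
    push_cast
    rw [Real.log_mul (by positivity) (by positivity)]
    have h1 : Real.log ((k:ℝ)+1) - Real.log k ≤ 1 / k := by
      rw [← Real.log_div (by positivity) (by positivity)]
      have := Real.log_le_sub_one_of_pos (x := ((k:ℝ)+1)/k) (by positivity)
      have e : ((k:ℝ)+1)/k - 1 = 1/k := by field_simp; ring
      linarith
    have h2 : (k:ℝ) * (Real.log ((k:ℝ)+1) - Real.log k) ≤ 1 := by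
      calc _ ≤ (k:ℝ) * (1/k) := by gcongr
        _ = 1 := by field_simp
    nlinarith

theorem log_up (u : ℝ) (hu : 0 ≤ u) : (2 + 4*u) * Real.log (1+u) ≤ 2*u+3*u^2 := by
  have hd : ∀ x ∈ Set.Ici (0:ℝ), HasDerivAt (fun x => 2*x+3*x^2 - (2+4*x)*Real.log (1+x))
      (2+6*x - (4*Real.log (1+x) + (2+4*x)*(1/(1+x)))) x := by
    intro x hx
    have hx : 0 ≤ x := hx
    have h1 : HasDerivAt (fun x:ℝ => 1+x) 1 x := by simpa using (hasDerivAt_id x).const_add 1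
    have h2 := h1.log (by positivity)
    have h3 : HasDerivAt (fun x:ℝ => 2+4*x) 4 x := by
      simpa using ((hasDerivAt_id x).const_mul 4).const_add 2
    have h4 : HasDerivAt (fun x:ℝ => 2*x+3*x^2) (2+6*x) x := by
      have := ((hasDerivAt_id x).const_mul 2).add ((hasDerivAt_pow 2 x).const_mul 3)
      have e : 2 * 1 + 3 * (((2:ℕ):ℝ) * x ^ (2 - 1)) = 2 + 6 * x := by norm_num; ring
      rw [e] at this
      exact this
    exact h4.sub (h3.mul h2)
  have hm : MonotoneOn (fun x => 2*x+3*x^2 - (2+4*x)*Real.log (1+x)) (Set.Ici (0:ℝ)) := by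
    apply monotoneOn_of_hasDerivWithinAt_nonneg (convex_Ici 0)
      (fun x hx => (hd x hx).continuousAt.continuousWithinAt)
      (fun x hx => (hd x (interior_subset hx)).hasDerivWithinAt)
    intro x hx
    have hx : 0 ≤ x := interior_subset hx
    have hl : Real.log (1+x) ≤ x * (x+2)/(2*(x+1)) := by
      have h := Real.self_le_sinh_iff.2 (Real.log_nonneg (by linarith : 1 ≤ 1 + x))
      rw [Real.sinh_log (by positivity)] at h
      refine h.trans (le_of_eq ?_)
      field_simp; ring
    have : 2+6*x - (4*(x * (x+2)/(2*(x+1))) + (2+4*x)*(1/(1+x))) = 4*x^2/(1+x) := by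
      field_simp; ring
    have : 0 ≤ 4*x^2/(1+x) := by positivity
    linarith
  have := hm (Set.mem_Ici.2 le_rfl) (Set.mem_Ici.2 hu) hu
  simp at this
  linarith

theorem sum_log (K : ℕ) (Y : ℝ) (hY : K ≤ Y) :
    ∑ k ∈ range K, ((k:ℝ) * Real.log Y - Real.log k.factorial) ≤
      (K:ℝ)^2/2 * (Real.log Y - Real.log K + 3/2) := by
  induction K with
  | zero => simp
  | succ k ih =>
    push_cast at hY
    rw [sum_range_succ]
    have ih := ih (by linarith)
    have hf := log_fact_ge k
    push_cast
    have hY0 : Real.log ((k:ℝ)+1) ≤ Real.log Y := Real.log_le_log (by positivity) hY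
    rcases Nat.eq_zero_or_pos k with rfl | hk
    · simp at *; linarith
    have hk' : (0:ℝ) < k := by exact_mod_cast hk
    have h1 := log_up (1/k) (by positivity)
    have e : Real.log (1+1/(k:ℝ)) = Real.log ((k:ℝ)+1) - Real.log k := by
      rw [← Real.log_div (by positivity) (by positivity)]; congr 1; field_simp
    rw [e] at h1
    have h2 : (2*(k:ℝ)^2+4*k) * (Real.log ((k:ℝ)+1) - Real.log k) ≤ 2*k+3 := by
      have := mul_le_mul_of_nonneg_left h1 (by positivity : 0 ≤ (k:ℝ)^2)
      have e1 : (k:ℝ)^2 * ((2 + 4*(1/k)) * (Real.log ((k:ℝ)+1) - Real.log k)) = (2*(k:ℝ)^2+4*k) * (Real.log ((k:ℝ)+1) - Real.log k) := by field_simp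
      have e2 : (k:ℝ)^2 * (2*(1/(k:ℝ))+3*(1/k)^2) = 2*k+3 := by field_simp
      linarith
    generalize Real.log ((k:ℝ)+1) = B at *
    generalize Real.log (k:ℝ) = A at *
    generalize Real.log Y = C at *
    nlinarith

theorem sum_abs_fin (a : ℕ) : ∑ i : Fin (2 * a + 1), ((((((i : ℕ) : ℤ) - a).natAbs : ℕ)) : ℝ) = a * (a + 1) := by
  have h := sum_abs a
  rw [← Fin.sum_univ_eq_sum_range (fun i => |(i:ℤ) - a|)] at h
  have h2 : (((∑ i : Fin (2*a+1), |((i:ℕ):ℤ) - a| : ℤ)) : ℝ) = ((a * (a+1) : ℤ) : ℝ) := by rw [h]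
  push_cast at h2
  rw [← h2]
  refine sum_congr rfl fun i _ => ?_
  rw [Nat.cast_natAbs]; push_cast; rfl

theorem main_log (α : ℂ) (q a1 : ℤ) (hq : 2 ≤ q)
    (hp : α * (starRingEnd ℂ) α = q) (hs : α + (starRingEnd ℂ) α = a1)
    (γ : ℂ) (hγdef : γ * (starRingEnd ℂ) α = α)
    (hγ : ∀ k : ℕ, 0 < k → γ ^ k ≠ 1) (n m : ℤ) (hn : 0 < n) (hmn : IsCoprime m n)
    (hm : 2 * |m| ≤ n) (δ : ℝ)
    (hδ : γ = Complex.exp (Complex.I * ((2 * Real.pi * m + δ) / n)))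
    (K L0 R0 S0 R2 : ℕ) (hK : 1 ≤ K)
    (hR2 : 2 * L0 + 1 + R2 = 2 * R0 + 2)
    (hc : (K - 1) * (2 * L0 + 1) < R2 * (2 * S0 + 1)) (hRn : 2 * (R0 : ℤ) + 1 ≤ n)
    (ρ : ℝ) (hρ : 1 ≤ ρ) (hpert : ρ ^ (K * (2 * L0 + 1)) * (L0 * R0 * |δ|) ≤ n)
    (L : ℝ) (hL : L = 2 * L0 + 1) (τ Y : ℝ) (hτ : τ = R0 / 2 + S0) (hY : Y = ρ * (n * τ) + K) :
    K * L * (K * L - 1) / 2 * Real.log ρ ≤ K * (L0 * (L0 + 1)) * (R0 * Real.log q + 2 * Real.pi * ρ * τ)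
      + K * L * (Real.log (K * L) + Real.log 2) + L * ((K:ℝ) ^ 2 / 2 * (Real.log Y - Real.log K + 3 / 2)) := by
  obtain ⟨N, hN⟩ : ∃ N, N = K * (2 * L0 + 1) := ⟨_, rfl⟩
  rw [← hN] at hpert
  obtain ⟨kk, h⟩ := main_prod α q a1 hq hp hs γ hγdef hγ n m hn hmn hm δ hδ K L0 R0 S0 R2 N hN hK
    hR2 hc hRn ρ hρ hpert
  rw [← hτ, ← hY] at h
  have hnR : (0:ℝ) < n := by exact_mod_cast hn
  have hq0 : (0:ℝ) < q := by exact_mod_cast (by omega : 0 < q)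
  have hρ0 : 0 < ρ := by linarith
  have hK0 : (0:ℝ) < K := by exact_mod_cast hK
  have hτ0 : 0 ≤ τ := by rw [hτ]; positivity
  have hYK : (K:ℝ) ≤ Y := by rw [hY]; have : 0 ≤ ρ * (n * τ) := by positivity
                             linarith
  have hY0 : 0 < Y := by linarith
  have hL1 : 0 < L := by rw [hL]; positivity
  have hNR : (N:ℝ) = K * L := by rw [hN, hL]; push_cast; ring
  have hN1 : 1 ≤ N := by rw [hN]; exact Nat.mul_pos hK (by omega)
  have h := Real.log_le_log (by positivity) h
  have hP1 : ∀ i, (0:ℝ) < (q : ℝ) ^ (((((kk i).2 : ℕ) : ℤ) - L0).natAbs * R0) := fun i => by positivity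
  have hP2 : ∀ i, (0:ℝ) < (2 * (Y ^ ((kk i).1 : ℕ) / ((kk i).1 : ℕ).factorial *
        Real.exp (2 * Real.pi * ρ * τ * (((((kk i).2 : ℕ) : ℤ) - L0).natAbs : ℕ)))) := fun i => by positivity
  rw [Real.log_pow, Real.log_mul (prod_pos fun i _ => hP1 i).ne' (mul_pos (by positivity) (prod_pos fun i _ => hP2 i)).ne',
    Real.log_mul (by positivity) (prod_pos fun i _ => hP2 i).ne', Real.log_prod (fun i _ => (hP1 i).ne'),
    Real.log_prod (fun i _ => (hP2 i).ne')] at h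
  have hsum : ((∑ i : Fin N, (i:ℕ) : ℕ) : ℝ) = K * L * (K * L - 1) / 2 := by
    rw [Fin.sum_univ_eq_sum_range (fun i => i), ← hNR]
    have := Finset.sum_range_id_mul_two N
    have h2 : (((∑ i ∈ range N, i) * 2 : ℕ) : ℝ) = ((N * (N - 1) : ℕ) : ℝ) := by rw [this]
    rw [Nat.cast_mul, Nat.cast_mul, Nat.cast_sub hN1] at h2
    push_cast at h2 ⊢
    linarith
  rw [hsum] at h
  refine h.trans ?_
  have hfac : Real.log (N.factorial) ≤ K * L * Real.log (K * L) := by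
    rw [← hNR, ← Real.log_pow]
    apply Real.log_le_log (by positivity)
    exact_mod_cast Nat.factorial_le_pow N
  have e1 : ∑ i, Real.log ((q : ℝ) ^ (((((kk i).2 : ℕ) : ℤ) - L0).natAbs * R0)) =
      K * (L0 * (L0 + 1)) * (R0 * Real.log q) := by
    rw [Equiv.sum_comp kk (fun p => Real.log ((q : ℝ) ^ ((((p.2 : ℕ) : ℤ) - L0).natAbs * R0))),
      Fintype.sum_prod_type]
    simp only [Real.log_pow]
    rw [sum_const, card_univ, Fintype.card_fin, nsmul_eq_mul, ← sum_mul]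
    push_cast
    rw [← sum_mul, sum_abs_fin]; ring
  have e2 : ∑ i, Real.log (2 * (Y ^ ((kk i).1 : ℕ) / ((kk i).1 : ℕ).factorial *
        Real.exp (2 * Real.pi * ρ * τ * (((((kk i).2 : ℕ) : ℤ) - L0).natAbs : ℕ)))) =
      K * L * Real.log 2 + L * (∑ k ∈ range K, ((k:ℝ) * Real.log Y - Real.log k.factorial)) +
        K * (L0 * (L0 + 1)) * (2 * Real.pi * ρ * τ) := by
    rw [Equiv.sum_comp kk (fun p => Real.log (2 * (Y ^ (p.1 : ℕ) / (p.1 : ℕ).factorial *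
        Real.exp (2 * Real.pi * ρ * τ * ((((p.2 : ℕ) : ℤ) - L0).natAbs : ℕ))))),
      Fintype.sum_prod_type]
    have : ∀ (k : Fin K) (l : Fin (2 * L0 + 1)), Real.log (2 * (Y ^ (k : ℕ) / (k : ℕ).factorial *
        Real.exp (2 * Real.pi * ρ * τ * ((((l : ℕ) : ℤ) - L0).natAbs : ℕ)))) =
        Real.log 2 + (((k:ℕ):ℝ) * Real.log Y - Real.log (k:ℕ).factorial) +
          2 * Real.pi * ρ * τ * ((((l : ℕ) : ℤ) - L0).natAbs : ℕ) := by
      intro k l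
      rw [Real.log_mul (by positivity) (by positivity), Real.log_mul (by positivity) (by positivity),
        Real.log_div (by positivity) (by positivity), Real.log_pow, Real.log_exp]
      ring
    simp only [this, sum_add_distrib, ← mul_sum, sum_abs_fin]
    simp only [sum_const, card_univ, Fintype.card_fin, nsmul_eq_mul, ← mul_sum]
    rw [Fin.sum_univ_eq_sum_range (fun k => ((k:ℝ) * Real.log Y - Real.log k.factorial)), hL]
    push_cast
    ring
  rw [e1, e2]
  have := mul_le_mul_of_nonneg_left (sum_log K Y hYK) hL1.le
  linarith

set_option maxHeartbeats 2000000 in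
theorem setup (q a1 : ℤ) (hq : 2 ≤ q) (ha1 : a1 ^ 2 ≤ 4 * q)
    (α β : ℂ) (hα : α ^ 2 - a1 * α + q = 0)
    (hβ : β = α / (Real.sqrt q : ℂ))
    (hord : ¬ ∃ k : ℕ, 0 < k ∧ β ^ k = 1)
    (a : ℕ → ℤ) (ha : ∀ n : ℕ, (a n : ℂ) = α ^ n + (starRingEnd ℂ) α ^ n)
    (n : ℕ) (hn : 12 ≤ n) (hmax : -(a n) = ⌊2 * Real.sqrt q ^ n⌋) :
    ∃ (γ : ℂ) (m : ℤ) (δ : ℝ), α * (starRingEnd ℂ) α = q ∧ α + (starRingEnd ℂ) α = a1 ∧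
      γ * (starRingEnd ℂ) α = α ∧ (∀ k : ℕ, 0 < k → γ ^ k ≠ 1) ∧ IsCoprime m (n : ℤ) ∧ 2 * |m| ≤ (n : ℤ) ∧
      γ = Complex.exp (Complex.I * ((2 * Real.pi * m + δ) / (n : ℤ))) ∧
      |δ| ≤ Real.pi * Real.exp (-(n / 4 * Real.log q)) := by
  have hq0 : (0:ℝ) < q := by exact_mod_cast (by omega : 0 < q)
  have hq2 : (2:ℝ) ≤ q := by exact_mod_cast hq
  have hqC : (q:ℂ) ≠ 0 := by exact_mod_cast (by omega : q ≠ 0)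
  set r := Real.sqrt q with hr
  have hr0 : 0 < r := Real.sqrt_pos.2 hq0
  have hr2 : r ^ 2 = q := Real.sq_sqrt hq0.le
  have hr2C : (r : ℂ) ^ 2 = q := by exact_mod_cast congrArg (fun x : ℝ => (x : ℂ)) hr2
  have hrC : (r : ℂ) ≠ 0 := by exact_mod_cast hr0.ne'
  have ha1R : (a1:ℝ) ^ 2 ≤ 4 * q := by exact_mod_cast ha1
  have hre := congrArg Complex.re hα
  have him' := congrArg Complex.im hα
  simp [pow_two] at hre him'
  have him0 : α.im ≠ 0 := by
    intro h
    rw [h] at hre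
    have h1 : (2 * α.re - a1) ^ 2 ≤ 0 := by nlinarith
    have h2 : 2 * α.re - a1 = 0 := by nlinarith
    have h3 : α.re ^ 2 = q := by nlinarith
    apply hord
    refine ⟨2, by norm_num, ?_⟩
    have h4 : α = (α.re : ℂ) := by apply Complex.ext <;> simp [h]
    rw [hβ, div_pow, hr2C, h4, ← Complex.ofReal_pow, h3]
    simp [hqC]
  have hre2 : 2 * α.re = a1 := by
    have : α.im * (2 * α.re - a1) = 0 := by linarith
    rcases mul_eq_zero.1 this with h | h
    · exact absurd h him0
    · linarith
  have hs : α + (starRingEnd ℂ) α = a1 := by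
    rw [Complex.add_conj, hre2]
    push_cast; rfl
  have hp : α * (starRingEnd ℂ) α = q := by
    have : (starRingEnd ℂ) α = a1 - α := by rw [← hs]; ring
    rw [this]; linear_combination -hα
  have h2 : α ^ 2 = a1 * α - q := by linear_combination hα
  set c := (starRingEnd ℂ) α with hc
  have hα0 : α ≠ 0 := by
    intro h; rw [h, zero_mul] at hp; exact hqC hp.symm
  have hc0 : c ≠ 0 := by
    intro h; rw [h, mul_zero] at hp; exact hqC hp.symm
  have hnα : ‖α‖ = r := by
    have h : ‖α * c‖ = ‖(q:ℂ)‖ := by rw [hp]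
    rw [norm_mul, hc, Complex.norm_conj, Complex.norm_intCast, abs_of_pos hq0, ← hr2] at h
    have : ‖α‖ ^ 2 = r ^ 2 := by rw [← h]; ring
    exact (pow_left_inj₀ (norm_nonneg _) hr0.le (by norm_num)).1 this
  have hnc : ‖c‖ = r := by rw [hc, Complex.norm_conj, hnα]
  set γ := α / c with hγ
  have hγc : γ * c = α := div_mul_cancel₀ _ hc0
  have hγβ : γ = β ^ 2 := by
    rw [hγ, hβ, div_pow, hr2C, ← hp]; field_simp
  have hγ1 : ∀ k : ℕ, 0 < k → γ ^ k ≠ 1 := by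
    intro k hk h
    apply hord
    exact ⟨2 * k, by omega, by rw [pow_mul, ← hγβ, h]⟩
  have hnγ : ‖γ‖ = 1 := by rw [hγ, norm_div, hnα, hnc, div_self hr0.ne']
  -- floor
  set A : ℤ := -(a n) with hA
  have hA1 : (A:ℝ) ≤ 2 * r ^ n := by rw [hmax]; exact Int.floor_le _
  have hA2 : 2 * r ^ n < A + 1 := by rw [hmax]; exact Int.lt_floor_add_one _
  have hAC : α ^ n + c ^ n = -(A:ℂ) := by rw [← ha, hA]; push_cast; ring
  have hnodd : ¬ 2 ∣ n := by
    rintro ⟨k, hk⟩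
    have hk0 : 0 < k := by omega
    have h1 : r ^ n = ((q ^ k : ℤ) : ℝ) := by rw [hk, pow_mul, hr2]; push_cast; ring
    have h3 : A = 2 * q ^ k := by
      rw [hmax, h1]
      have : (2:ℝ) * ((q ^ k : ℤ) : ℝ) = ((2 * q ^ k : ℤ) : ℝ) := by push_cast; ring
      rw [this, Int.floor_intCast]
    have h4 : (α ^ k + c ^ k) ^ 2 = 0 := by
      have e : (α ^ k + c ^ k) ^ 2 = (α ^ n + c ^ n) + 2 * (α * c) ^ k := by
        rw [hk, mul_comm 2 k, pow_mul, pow_mul, mul_pow]; ring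
      rw [e, hAC, hp, h3]; push_cast; ring
    have h5 : α ^ k + c ^ k = 0 := by simpa using h4
    have h6 : γ ^ k = -1 := by
      rw [hγ, div_pow, div_eq_iff (pow_ne_zero _ hc0)]; linear_combination h5
    exact hγ1 (k * 2) (by omega) (by rw [pow_mul, h6]; norm_num)
  set E := Real.exp (-(n / 4 * Real.log q)) with hE
  have hE0 : 0 < E := Real.exp_pos _
  have hlq : 0 < Real.log q := Real.log_pos (by linarith)
  have hE1 : E < 1 := by
    rw [hE, Real.exp_lt_one_iff]
    have : (0:ℝ) < n := by exact_mod_cast (by omega : 0 < n)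
    have : 0 < n / 4 * Real.log q := by positivity
    linarith
  have hlr : Real.log r = Real.log q / 2 := by
    rw [← hr2, Real.log_pow]; push_cast; ring
  have hrexp : ∀ k : ℕ, r ^ k = Real.exp (k * (Real.log q / 2)) := by
    intro k
    rw [← hlr, ← Real.log_pow, Real.exp_log (pow_pos hr0 _)]
  have hEr : E ^ 2 * r ^ n = 1 := by
    rw [hrexp, hE, ← Real.exp_nat_mul, ← Real.exp_add]
    rw [Real.exp_eq_one_iff]; push_cast; ring
  have hcon : c ^ n = (starRingEnd ℂ) (α ^ n) := by rw [map_pow]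
  have hbd : ‖α ^ n - c ^ n‖ ^ 2 ≤ 4 * r ^ n := by
    have hr' : 2 * (α ^ n).re = -A := by
      rw [hcon, Complex.add_conj] at hAC
      exact_mod_cast hAC
    have hns : (α ^ n).re ^ 2 + (α ^ n).im ^ 2 = (r ^ n) ^ 2 := by
      have : ‖α ^ n‖ ^ 2 = (r ^ n) ^ 2 := by rw [norm_pow, hnα]
      rw [← this, Complex.sq_norm, Complex.normSq_apply]; ring
    rw [hcon, Complex.sub_conj, norm_mul, Complex.norm_I, mul_one, Complex.norm_real,
      Real.norm_eq_abs, sq_abs]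
    have hrn : 1 ≤ r ^ n := one_le_pow₀ (by nlinarith)
    have : (2 * (α ^ n).im) ^ 2 = (2 * r ^ n - A) * (2 * r ^ n + A) := by
      nlinarith
    rw [this]
    nlinarith
  have hγn : ‖γ ^ n - 1‖ ≤ 2 * E := by
    have e : (γ ^ n - 1) * c ^ n = α ^ n - c ^ n := by
      rw [sub_mul, ← mul_pow, hγc]; ring
    have e2 : ‖γ ^ n - 1‖ * r ^ n = ‖α ^ n - c ^ n‖ := by rw [← e, norm_mul, norm_pow, hnc]
    have hrn : 0 < r ^ n := pow_pos hr0 _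
    have : ‖γ ^ n - 1‖ ^ 2 ≤ (2 * E) ^ 2 := by
      rw [← e2, mul_pow] at hbd
      have h3 : ‖γ ^ n - 1‖ ^ 2 * r ^ n ≤ 4 := by nlinarith
      have h4 : (2 * E) ^ 2 * r ^ n = 4 := by rw [mul_pow, mul_assoc, hEr]; norm_num
      nlinarith
    exact (pow_le_pow_iff_left₀ (norm_nonneg _) (by positivity) (by norm_num)).1 this
  have hπ := Real.pi_pos
  set φ := Complex.arg γ with hφ
  have hγφ : γ = Complex.exp (φ * Complex.I) := by
    have := Complex.norm_mul_exp_arg_mul_I γ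
    rw [hnγ] at this; rw [← this]; simp [hφ]
  set m : ℤ := round (n * φ / (2 * Real.pi)) with hm
  set δ : ℝ := n * φ - 2 * Real.pi * m with hδ
  have hnR : (0:ℝ) < n := by exact_mod_cast (by omega : 0 < n)
  have hnC : (n:ℂ) ≠ 0 := by exact_mod_cast (by omega : n ≠ 0)
  have hδπ : |δ| ≤ Real.pi := by
    have := abs_sub_round (n * φ / (2 * Real.pi))
    rw [← hm] at this
    have e : δ = 2 * Real.pi * (n * φ / (2 * Real.pi) - m) := by rw [hδ]; field_simp
    rw [e, abs_mul, abs_of_pos (by positivity)]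
    nlinarith
  have hγe : γ = Complex.exp (Complex.I * ((2 * Real.pi * m + δ) / (n : ℤ))) := by
    rw [hγφ]; congr 1; rw [hδ]; push_cast; field_simp; ring
  have hδE : |δ| ≤ Real.pi * E := by
    have e : γ ^ n = Complex.exp (Complex.I * δ) := by
      rw [hγφ, ← Complex.exp_nat_mul, Complex.exp_eq_exp_iff_exists_int]
      refine ⟨m, ?_⟩
      rw [hδ]; push_cast; ring
    rw [e, Complex.norm_exp_I_mul_ofReal_sub_one, Real.norm_eq_abs, abs_mul, abs_two] at hγn
    have h1 : |Real.sin (δ / 2)| = Real.sin (|δ| / 2) := by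
      rcases abs_cases δ with ⟨h, h'⟩ | ⟨h, h'⟩
      · rw [h, abs_of_nonneg]
        apply Real.sin_nonneg_of_nonneg_of_le_pi <;> linarith
      · rw [h, neg_div, Real.sin_neg, abs_of_nonpos]
        have : 0 ≤ Real.sin (-(δ / 2)) := by
          apply Real.sin_nonneg_of_nonneg_of_le_pi <;> linarith
        rw [Real.sin_neg] at this; linarith
    have h3 := Real.mul_le_sin (x := |δ| / 2) (by positivity) (by linarith)
    rw [h1] at hγn
    have h4 : 2 / Real.pi * (|δ| / 2) ≤ E := by linarith
    have h5 : 2 / Real.pi * (|δ| / 2) = |δ| / Real.pi := by ring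
    rw [h5, div_le_iff₀ hπ] at h4
    linarith
  have hmn : 2 * |m| ≤ (n : ℤ) := by
    have h1 : |(m:ℝ)| * (2 * Real.pi) < (n + 1) * Real.pi := by
      have e : |(m:ℝ)| * (2 * Real.pi) = |n * φ - δ| := by
        rw [hδ]; rw [show n * φ - (n * φ - 2 * Real.pi * m) = m * (2 * Real.pi) by ring, abs_mul,
          abs_of_pos (by positivity : 0 < 2 * Real.pi)]
      rw [e]
      have h2 : |φ| ≤ Real.pi := Complex.abs_arg_le_pi γ
      calc |n * φ - δ| ≤ |n * φ| + |δ| := abs_sub _ _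
        _ = n * |φ| + |δ| := by rw [abs_mul, abs_of_pos hnR]
        _ < (n + 1) * Real.pi := by nlinarith
    have h2 : 2 * |(m:ℝ)| < n + 1 := by nlinarith
    have h3 : 2 * |m| < (n:ℤ) + 1 := by exact_mod_cast h2
    omega
  refine ⟨γ, m, δ, hp, hs, hγc, hγ1, ?_, hmn, hγe, hδE⟩
  rw [Int.isCoprime_iff_gcd_eq_one]
  by_contra hg
  obtain ⟨m', hm'⟩ : ((Int.gcd m n : ℕ) : ℤ) ∣ m := Int.gcd_dvd_left _ _
  obtain ⟨n', hn'⟩ : (Int.gcd m n) ∣ n := by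
    have : ((Int.gcd m n : ℕ) : ℤ) ∣ (n:ℤ) := Int.gcd_dvd_right _ _
    exact_mod_cast this
  generalize Int.gcd m n = g at *
  have hg3 : 3 ≤ g := by
    rcases Nat.lt_or_ge g 3 with h | h
    · interval_cases g
      · omega
      · omega
      · exact absurd ⟨n', hn'⟩ hnodd
    · exact h
  have hn'0 : 0 < n' := Nat.pos_of_ne_zero (by rintro rfl; omega)
  have hgR : (3:ℝ) ≤ g := by exact_mod_cast hg3
  have hgC : (g:ℂ) ≠ 0 := by exact_mod_cast (by omega : g ≠ 0)
  have hn'C : (n':ℂ) ≠ 0 := by exact_mod_cast (by omega : n' ≠ 0)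
  have e : γ ^ n' = Complex.exp (Complex.I * ((δ / g : ℝ) : ℂ)) := by
    rw [hγe, ← Complex.exp_nat_mul, Complex.exp_eq_exp_iff_exists_int]
    refine ⟨m', ?_⟩
    have e1 : (m:ℂ) = g * m' := by rw [hm']; push_cast; ring
    have e2 : (((n:ℕ):ℤ):ℂ) = g * n' := by rw [hn']; push_cast; ring
    rw [e1, e2]; push_cast; field_simp; ring
  have hle : ‖γ ^ n' - 1‖ ≤ Real.pi * E / 3 := by
    rw [e]
    refine Real.norm_exp_I_mul_ofReal_sub_one_le.trans ?_
    rw [Real.norm_eq_abs, abs_div, abs_of_pos (by linarith : (0:ℝ) < g)]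
    gcongr
  have hαO : α ∈ ringO α q a1 h2 := ⟨0, 1, by simp⟩
  have hcO : c ∈ ringO α q a1 h2 := ⟨a1, -1, by rw [← hs]; push_cast; ring⟩
  have e3 : (γ ^ n' - 1) * c ^ n' = α ^ n' - c ^ n' := by
    rw [sub_mul, ← mul_pow, hγc]; ring
  have hlow := ringO_norm α q a1 h2 hp hs (α ^ n' - c ^ n')
    (Subring.sub_mem _ (Subring.pow_mem _ hαO _) (Subring.pow_mem _ hcO _)) (by
      rw [← e3]
      exact mul_ne_zero (sub_ne_zero.2 (hγ1 n' hn'0)) (pow_ne_zero _ hc0))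
  rw [← e3, norm_mul, norm_pow, hnc] at hlow
  have h3n : (3:ℝ) * n' ≤ n := by
    have : 3 * n' ≤ n := by rw [hn']; exact Nat.mul_le_mul_right _ hg3
    exact_mod_cast this
  have h5 : E * r ^ n' ≤ 1 / 2 := by
    rw [hrexp, hE, ← Real.exp_add]
    rw [show (1:ℝ)/2 = Real.exp (-Real.log 2) by rw [Real.exp_neg, Real.exp_log (by norm_num)]; norm_num]
    apply Real.exp_le_exp.2
    have : Real.log 2 ≤ Real.log q := Real.log_le_log (by norm_num) hq2
    have hn12 : (12:ℝ) ≤ n := by exact_mod_cast hn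
    nlinarith
  have hπ4 := Real.pi_lt_four
  have h6 : ‖γ ^ n' - 1‖ * r ^ n' ≤ Real.pi * E / 3 * r ^ n' := by gcongr
  nlinarith

/-- final contradiction from the normalized inequality -/
theorem num_final (H L s c e : ℝ) (hH : 20.34 ≤ H) (hL1 : 0.344 * H - 1 ≤ L) (hL2 : L ≤ 0.344 * H + 1)
    (hs : c * H ≤ s)
    (hc : (c = 4.58 ∧ e ≤ 0.87) ∨ (c = 4.2118 ∧ e ≤ 0.7365 ∧ H ≤ 25))
    (h : 1.38629 * L ≤ 8.489 * (L ^ 2 / s) + H / 4 - 0.8175 + e - 0.4) : False := by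
  have hc0 : 0 < c := by rcases hc with ⟨h, _⟩ | ⟨h, _⟩ <;> rw [h] <;> norm_num
  have hH0 : 0 < H := by linarith
  have hcH : 0 < c * H := by positivity
  have h1 : L ^ 2 / s ≤ L ^ 2 / (c * H) := by gcongr
  have h2 : 1.38629 * L * (c * H) ≤ 8.489 * L ^ 2 + (H / 4 - 0.8175 + e - 0.4) * (c * H) := by
    have : 1.38629 * L ≤ 8.489 * (L ^ 2 / (c * H)) + (H / 4 - 0.8175 + e - 0.4) := by linarith
    have := mul_le_mul_of_nonneg_right this hcH.le
    have e1 : (8.489 * (L ^ 2 / (c * H)) + (H / 4 - 0.8175 + e - 0.4)) * (c * H) =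
      8.489 * L ^ 2 + (H / 4 - 0.8175 + e - 0.4) * (c * H) := by field_simp
    linarith
  obtain ⟨t, rfl⟩ : ∃ t, L = 0.344 * H + t := ⟨L - 0.344 * H, by ring⟩
  have ht1 : -1 ≤ t := by linarith
  have ht2 : t ≤ 1 := by linarith
  have htt : t ^ 2 ≤ 1 := by nlinarith
  have hp1 : 0 ≤ (t + 1) * H := mul_nonneg (by linarith) hH0.le
  have hp2 : 0 ≤ (1 - t) * H := mul_nonneg (by linarith) hH0.le
  rcases hc with ⟨rfl, he⟩ | ⟨rfl, he, hH2⟩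
  · have hp3 : 0 ≤ (0.87 - e) * H := mul_nonneg (by linarith) hH0.le
    have hp4 : 0 ≤ (H - 20.34) * H := mul_nonneg (by linarith) hH0.le
    nlinarith
  · have hp3 : 0 ≤ (0.7365 - e) * H := mul_nonneg (by linarith) hH0.le
    have hp4 : 0 ≤ (H - 20.34) * (25 - H) := mul_nonneg (by linarith) (by linarith)
    nlinarith

set_option maxHeartbeats 1000000 in
/-- the normalized inequality, in terms of a lower bound `b` for `(P+lq)/4` -/
theorem num_mid (n H L K R0 R2 S0 s lq P lr G Λ b e1 : ℝ)
    (hP1 : 50.26 ≤ P) (hP2 : P ≤ 50.266) (hlr1 : 2.77258 ≤ lr) (hlr2 : lr ≤ 2.7726)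
    (hL7 : 7 ≤ L) (hs85 : 85 ≤ s) (hLs : L ≤ 0.0934 * s)
    (hb : b = 12.73 ∨ b = 25.06) (hbP : 4 * b ≤ P + lq)
    (hR0 : 0 ≤ R0) (hR0' : R0 ≤ 1.5 * s) (hR2 : 2.906 * s ≤ R2)
    (hS0 : S0 ≤ K * L / (2 * R2) + 1)
    (hK1 : 0.999 * (s ^ 2 * (P + lq) / 4) ≤ K * L * lr)
    (hG : G ≤ 0.01 * K) (hΛ : Λ ≤ Real.log n + e1) (hH : H = 2 * Real.log n + 3.27)
    (h : K * L * (K * L - 1) / 2 * lr ≤ K * ((L ^ 2 - 1) / 4) * (R0 * lq + 2 * P * (R0 / 2 + S0))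
      + K * L * G + L * (K ^ 2 / 2 * (Λ + 3 / 2))) :
    1.38629 * L ≤ 8.489 * (L ^ 2 / s) + H / 4 - 0.8175 + (0.61 / b + e1 / 2 + 1.1605) - 0.4 := by
  have hb0 : 12.73 ≤ b := by rcases hb with h | h <;> rw [h] <;> norm_num
  have hs0 : 0 < s := by linarith
  have hL0 : 0 < L := by linarith
  have hR2' : 0 < R2 := by nlinarith
  have hX : 0 < P + lq := by linarith
  -- K lower
  have hKs : 3.856 * b * s ≤ K := by
    have h1 : K * L * lr ≤ K * (0.0934 * s) * 2.7726 ∨ K < 0 := by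
      rcases lt_or_ge K 0 with h | h
      · right; exact h
      · left; gcongr
    rcases h1 with h1 | h1
    · have h2 : 0.999 * (s ^ 2 * (4 * b) / 4) ≤ 0.999 * (s ^ 2 * (P + lq) / 4) := by gcongr
      have h3 : s * (0.999 * b * s) ≤ s * (K * (0.0934 * 2.7726)) := by nlinarith
      have h4 := le_of_mul_le_mul_left h3 hs0
      have : 0 < b * s := by positivity
      nlinarith
    · exfalso
      have : 0 ≤ 0.999 * (s ^ 2 * (P + lq) / 4) := by positivity
      have : K * L * lr < 0 := by
        have := mul_pos hL0 (by linarith : 0 < lr)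
        nlinarith
      linarith
  have hbs : 0 < b * s := by positivity
  have hK0 : 0 < K := by nlinarith
  -- divide by K
  have h1 : L * (K * L - 1) / 2 * lr ≤ ((L ^ 2 - 1) / 4) * (R0 * lq + 2 * P * (R0 / 2 + S0))
      + L * G + L * (K / 2 * (Λ + 3 / 2)) := by
    apply le_of_mul_le_mul_left _ hK0
    calc _ = K * L * (K * L - 1) / 2 * lr := by ring
      _ ≤ _ := h
      _ = _ := by ring
  have hS : R0 * lq + 2 * P * (R0 / 2 + S0) ≤ R0 * (P + lq) + 2 * P * (K * L / (2 * R2) + 1) := by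
    have : 2 * P * S0 ≤ 2 * P * (K * L / (2 * R2) + 1) := by gcongr
    linarith
  have hpos : 0 ≤ R0 * (P + lq) + 2 * P * (K * L / (2 * R2) + 1) := by positivity
  have h2 : L * (K * L - 1) / 2 * lr ≤ (L ^ 2 / 4) * (R0 * (P + lq) + 2 * P * (K * L / (2 * R2) + 1))
      + L * G + L * (K / 2 * (Λ + 3 / 2)) := by
    have : ((L ^ 2 - 1) / 4) * (R0 * lq + 2 * P * (R0 / 2 + S0)) ≤ (L ^ 2 / 4) * (R0 * (P + lq) + 2 * P * (K * L / (2 * R2) + 1)) := by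
      calc _ ≤ ((L ^ 2 - 1) / 4) * (R0 * (P + lq) + 2 * P * (K * L / (2 * R2) + 1)) := by
            gcongr; nlinarith
        _ ≤ _ := by gcongr; linarith
    linarith
  have h3 : (K * L - 1) / 2 * lr ≤ (L / 4) * (R0 * (P + lq) + 2 * P * (K * L / (2 * R2) + 1))
      + G + (K / 2 * (Λ + 3 / 2)) := by
    apply le_of_mul_le_mul_left _ hL0
    calc _ = L * (K * L - 1) / 2 * lr := by ring
      _ ≤ _ := h2
      _ = _ := by ring
  -- term bounds
  have hA1 : L / 4 * (R0 * (P + lq)) ≤ K * (4.164 * (L ^ 2 / s)) := by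
    have e : s ^ 2 * (P + lq) ≤ 4.00401 * (K * L * 2.7726) := by
      have : K * L * lr ≤ K * L * 2.7726 := by gcongr
      have : 0 < K * L := by positivity
      linarith
    have e2 : P + lq ≤ 4.00401 * (K * L * 2.7726) / s ^ 2 := by
      rw [le_div_iff₀ (by positivity)]; linarith
    calc L / 4 * (R0 * (P + lq)) ≤ L / 4 * ((1.5 * s) * (4.00401 * (K * L * 2.7726) / s ^ 2)) := by gcongr
      _ = (1.5 * 4.00401 * 2.7726 / 4) * K * (L ^ 2 / s) := by field_simp
      _ ≤ 4.164 * K * (L ^ 2 / s) := by gcongr; norm_num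
      _ = _ := by ring
  have hA2 : L / 4 * (2 * P * (K * L / (2 * R2))) ≤ K * (4.325 * (L ^ 2 / s)) := by
    calc L / 4 * (2 * P * (K * L / (2 * R2))) ≤ L / 4 * (2 * 50.266 * (K * L / (2 * (2.906 * s)))) := by gcongr
      _ = (50.266 / (4 * 2.906)) * K * (L ^ 2 / s) := by field_simp
      _ ≤ 4.325 * K * (L ^ 2 / s) := by gcongr; norm_num
      _ = _ := by ring
  have hA3 : L / 4 * (2 * P) ≤ K * (0.61 / b) := by
    calc L / 4 * (2 * P) ≤ (0.0934 * s) / 4 * (2 * 50.266) := by gcongr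
      _ ≤ 3.856 * b * s * (0.61 / b) := by
        rw [show 3.856 * b * s * (0.61 / b) = 3.856 * 0.61 * s by field_simp]
        nlinarith
      _ ≤ _ := by gcongr
  have hK4 : 4000 ≤ K := by nlinarith
  have hA4 : 1 / 2 * lr ≤ K * 0.0004 := by nlinarith
  have hΛ' : K / 2 * (Λ + 3 / 2) ≤ K / 2 * ((Real.log n + e1) + 3 / 2) := by gcongr
  have hlrL : K * (1.38629 * L) ≤ K * (L * lr / 2) := by
    gcongr; nlinarith
  have h4 : K * (1.38629 * L) ≤ K * (8.489 * (L ^ 2 / s) + 0.61 / b + 0.0104 + (Real.log n + e1 + 3 / 2) / 2) := by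
    nlinarith
  have h5 := le_of_mul_le_mul_left h4 hK0
  rw [hH]; linarith

theorem num_Y (n L K R0 R2 S0 s P lq lr b μ f : ℝ)
    (hlr1 : 2.77258 ≤ lr) (hlr2 : lr ≤ 2.7726) (hn : 5000 ≤ n)
    (hL7 : 7 ≤ L) (hs85 : 85 ≤ s) (hLs : L ≤ μ * s)
    (hb : (b = 12.73 ∧ μ = 0.0859 ∧ f = 0.5) ∨ (b = 25.06 ∧ μ = 0.0934 ∧ f = 0.4)) (hbP : 4 * b ≤ P + lq)
    (hR0' : R0 ≤ 1.5 * s) (hR2 : 2.906 * s ≤ R2)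
    (hS0 : S0 ≤ K * L / (2 * R2) + 1) (hK : 4000 ≤ K)
    (hK1 : 0.999 * (s ^ 2 * (P + lq) / 4) ≤ K * L * lr) :
    Real.log (16 * (n * (R0 / 2 + S0)) + K) - Real.log K ≤ Real.log n + Real.log f ∨
    16 * (n * (R0 / 2 + S0)) + K ≤ 0 := by
  rcases le_or_gt (16 * (n * (R0 / 2 + S0)) + K) 0 with h | hpos
  · right; exact h
  left
  have hs0 : 0 < s := by linarith
  have hL0 : 0 < L := by linarith
  have hK0 : 0 < K := by linarith
  have hn0 : 0 < n := by linarith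
  have hb0 : 0 < b := by rcases hb with ⟨h, -⟩ | ⟨h, -⟩ <;> rw [h] <;> norm_num
  have hμ0 : 0 < μ := by rcases hb with ⟨-, h, -⟩ | ⟨-, h, -⟩ <;> rw [h] <;> norm_num
  have hf0 : 0 < f := by rcases hb with ⟨-, -, h⟩ | ⟨-, -, h⟩ <;> rw [h] <;> norm_num
  have h1 : 0.999 * (b * s) ≤ K * μ * 2.7726 := by
    have h2 : 0.999 * (s ^ 2 * (4 * b) / 4) ≤ 0.999 * (s ^ 2 * (P + lq) / 4) := by gcongr
    have hlr0 : 0 ≤ lr := by linarith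
    have h3 : K * L * lr ≤ K * (μ * s) * 2.7726 := by gcongr
    apply le_of_mul_le_mul_left _ hs0
    nlinarith
  have h2 : K * L / (2 * R2) ≤ K * μ * 0.1721 := by
    calc K * L / (2 * R2) ≤ K * (μ * s) / (2 * (2.906 * s)) := by gcongr
      _ = K * μ * (1 / 5.812) := by field_simp; norm_num
      _ ≤ _ := by gcongr; norm_num
  have h3 : 16 * (R0 / 2 + S0) + 0.0002 * K ≤ f * K := by
    rcases hb with ⟨rfl, rfl, rfl⟩ | ⟨rfl, rfl, rfl⟩ <;> linarith
  have h4 : 16 * (n * (R0 / 2 + S0)) + K ≤ n * f * K := by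
    have := mul_le_mul_of_nonneg_left h3 hn0.le
    nlinarith
  have h5 := Real.log_le_log hpos h4
  rw [Real.log_mul (by positivity) (by positivity), Real.log_mul (by positivity) (by positivity)] at h5
  linarith

theorem num_G (K L : ℝ) (hK : 4000 ≤ K) (hL : 7 ≤ L) (hLK : L ≤ 0.002 * K) :
    Real.log (K * L) + Real.log 2 ≤ 0.01 * K := by
  have hK0 : 0 < K := by linarith
  have hL0 : 0 < L := by linarith
  rw [Real.log_mul (by positivity) (by positivity)]
  have h1 := Real.log_le_sub_one_of_pos hL0
  have h2 := Real.log_two_lt_d9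
  have h3 := Real.log_le_sub_one_of_pos (x := K / 256) (by positivity)
  rw [Real.log_div (by positivity) (by norm_num), show (256:ℝ) = 2 ^ 8 by norm_num, Real.log_pow] at h3
  push_cast at h3
  linarith

theorem num_n (x : ℝ) (hx : 10.8 ≤ x) : 42.2 * (2 * x + 3.27) ^ 2 ≤ Real.exp x := by
  have h1 : (2.718:ℝ) ^ 10 ≤ Real.exp 10 := by
    have : Real.exp 10 = Real.exp 1 ^ 10 := by rw [← Real.exp_nat_mul]; norm_num
    rw [this]
    have := Real.exp_one_gt_d9
    gcongr; linarith
  have h2 : (1.8:ℝ) ≤ Real.exp 0.8 := by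
    have := Real.add_one_le_exp (0.8:ℝ); linarith
  have h3 := Real.quadratic_le_exp_of_nonneg (x := x - 10.8) (by linarith)
  have e : Real.exp x = Real.exp 10 * Real.exp 0.8 * Real.exp (x - 10.8) := by
    rw [← Real.exp_add, ← Real.exp_add]; congr 1; ring
  obtain ⟨y, rfl⟩ : ∃ y, x = y + 10.8 := ⟨x - 10.8, by ring⟩
  have hy : 0 ≤ y := by linarith
  rw [e]
  have h4 : (30000:ℝ) ≤ Real.exp 10 * Real.exp 0.8 := by
    calc (30000:ℝ) ≤ 2.718 ^ 10 * 1.8 := by norm_num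
      _ ≤ _ := by gcongr
  rw [show y + 10.8 - 10.8 = y by ring] at h3 ⊢
  calc 42.2 * (2 * (y + 10.8) + 3.27) ^ 2 ≤ 30000 * (1 + y + y ^ 2 / 2) := by nlinarith
    _ ≤ _ := by gcongr

end
section
open Finset

set_option maxHeartbeats 2000000 in
theorem final_contra (α : ℂ) (q a1 : ℤ) (hq : 2 ≤ q)
    (hp : α * (starRingEnd ℂ) α = q) (hs : α + (starRingEnd ℂ) α = a1)
    (γ : ℂ) (hγdef : γ * (starRingEnd ℂ) α = α)
    (hγ : ∀ k : ℕ, 0 < k → γ ^ k ≠ 1) (n : ℕ) (m : ℤ) (hmn : IsCoprime m (n : ℤ))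
    (hm : 2 * |m| ≤ (n : ℤ)) (δ : ℝ)
    (hδ : γ = Complex.exp (Complex.I * ((2 * Real.pi * m + δ) / (n : ℤ))))
    (hδE : |δ| ≤ Real.pi * Real.exp (-(n / 4 * Real.log q)))
    (hn : 5126 ≤ n) (H : ℝ) (hH : H = 2 * Real.log n + 3.27)
    (hM : 8.87 * (10.98 * Real.pi + 1 / 2 * Real.log q) * H ^ 2 ≤ n / 4 * Real.log q) : False := by
  have hnR : (5126:ℝ) ≤ n := by exact_mod_cast hn
  have hn0 : (0:ℝ) < n := by linarith
  have hπ1 := Real.pi_gt_d4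
  have hπ2 := Real.pi_lt_d4
  have hl1 := Real.log_two_gt_d9
  have hl2 := Real.log_two_lt_d9
  have hq2 : (2:ℝ) ≤ q := by exact_mod_cast hq
  set lq := Real.log q with hlq
  have hlq2 : 0.69 ≤ lq := by
    have : Real.log 2 ≤ lq := Real.log_le_log (by norm_num) hq2
    linarith
  have hlogn : 8.535 ≤ Real.log n := by
    have h1 : Real.log (2 ^ 12 * (1 + 0.25)) ≤ Real.log n := by
      apply Real.log_le_log (by norm_num); norm_num; linarith
    rw [Real.log_mul (by norm_num) (by norm_num), Real.log_pow] at h1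
    have h2 := Real.le_log_one_add_of_nonneg (x := 0.25) (by norm_num)
    norm_num at h1 h2
    linarith
  have hH20 : 20.34 ≤ H := by linarith
  set P := 16 * Real.pi with hPdef
  have hP1 : 50.26 ≤ P := by linarith
  have hP2 : P ≤ 50.266 := by linarith
  have hX : 0 < P + lq := by linarith
  set Q := n * lq / (P + lq) with hQ
  have hQX : Q * (P + lq) = n * lq := by rw [hQ]; field_simp
  have hQ0 : 0 < Q := by positivity
  have hQn : Q ≤ n := by
    rw [hQ, div_le_iff₀ hX]
    exact mul_le_mul_of_nonneg_left (by linarith) hn0.le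
  set s := Real.sqrt Q with hsdef
  have hs0 : 0 < s := Real.sqrt_pos.2 hQ0
  have hs2 : s ^ 2 = Q := Real.sq_sqrt hQ0.le
  have hMs : (n:ℝ) / 4 * lq = s ^ 2 * (P + lq) / 4 := by rw [hs2, hQX]; ring
  have hQH : 17.74 * (21.96 * Real.pi + lq) * H ^ 2 ≤ Q * (P + lq) := by rw [hQX]; linarith
  have hH2 : 0 < H ^ 2 := by positivity
  have hgen : ∀ c : ℝ, 0 ≤ c → c ^ 2 * H ^ 2 ≤ Q → c * H ≤ s := by
    intro c hc h
    rw [hsdef]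
    apply Real.le_sqrt_of_sq_le
    rw [mul_pow]; exact h
  have hs1 : 4.2118 * H ≤ s := by
    apply hgen _ (by norm_num)
    have : 17.74 * H ^ 2 ≤ Q := by
      apply le_of_mul_le_mul_right _ hX
      have : 17.74 * H ^ 2 * (P + lq) ≤ 17.74 * H ^ 2 * (21.96 * Real.pi + lq) := by
        gcongr; linarith
      linarith
    linarith
  have hs85 : 85 ≤ s := by linarith
  have hL0nn : 0 ≤ 0.172 * H := by linarith
  set L0 : ℕ := ⌊0.172 * H⌋₊ with hL0
  have hL0a : (L0:ℝ) ≤ 0.172 * H := Nat.floor_le hL0nn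
  have hL0b : 0.172 * H < L0 + 1 := Nat.lt_floor_add_one _
  have hL03 : 3 ≤ L0 := by
    rw [hL0]; apply Nat.le_floor; push_cast; linarith
  have hL03R : (3:ℝ) ≤ L0 := by exact_mod_cast hL03
  obtain ⟨L, hL⟩ : ∃ L : ℝ, L = 2 * L0 + 1 := ⟨_, rfl⟩
  have hL7 : 7 ≤ L := by linarith
  have hLa : 0.344 * H - 1 ≤ L := by linarith
  have hLb : L ≤ 0.344 * H + 1 := by linarith
  have hLH : L ≤ 0.3932 * H := by linarith
  have hLs : L ≤ 0.0934 * s := by linarith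
  set R0 : ℕ := ⌊1.5 * s⌋₊ with hR0
  have hR0a : (R0:ℝ) ≤ 1.5 * s := Nat.floor_le (by positivity)
  have hR0b : 1.5 * s < R0 + 1 := Nat.lt_floor_add_one _
  have hR0L : 2 * L0 + 1 ≤ 2 * R0 + 2 := by
    have : (2 * L0 + 1 : ℝ) ≤ 2 * R0 + 2 := by linarith
    exact_mod_cast this
  obtain ⟨R2, hR2⟩ := Nat.exists_eq_add_of_le hR0L
  have hR2R : (2 * R0 + 2 : ℝ) = 2 * L0 + 1 + R2 := by exact_mod_cast hR2
  have hR2s : 2.906 * s ≤ R2 := by linarith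
  have hR20 : 0 < R2 := by
    have : (0:ℝ) < R2 := by linarith
    exact_mod_cast this
  set lr := Real.log 16 with hlr
  have hlr4 : lr = 4 * Real.log 2 := by
    rw [hlr, show (16:ℝ) = 2 ^ 4 by norm_num, Real.log_pow]; norm_num
  have hlr1 : 2.77258 ≤ lr := by linarith
  have hlr2 : lr ≤ 2.7726 := by linarith
  have hLlr : 0 < L * lr := by positivity
  set M := s ^ 2 * (P + lq) / 4 with hMdef
  have hM0 : 0 < M := by positivity
  set K : ℕ := ⌊M / (L * lr)⌋₊ with hK
  have hKa : (K:ℝ) * (L * lr) ≤ M := by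
    rw [← le_div_iff₀ hLlr]; exact Nat.floor_le (by positivity)
  have hKb : M < (K + 1) * (L * lr) := by
    rw [← div_lt_iff₀ hLlr]; exact Nat.lt_floor_add_one _
  have hMl : 12.73 * s ^ 2 ≤ M := by
    rw [hMdef]
    have := mul_le_mul_of_nonneg_left (by linarith : 50.92 ≤ P + lq) (sq_nonneg s)
    linarith
  have hLlrs : L * lr ≤ 0.259 * s := by
    have : L * lr ≤ 0.0934 * s * 2.7726 := by gcongr
    linarith
  have hK49 : 49 * s ≤ K := by
    have h1 : (K + 1) * (L * lr) ≤ (K + 1) * (0.259 * s) := by gcongr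
    have h2 : s * (12.73 * s) ≤ s * ((K + 1) * 0.259) := by linarith
    have := le_of_mul_le_mul_left h2 hs0
    linarith
  have hK4 : (4000:ℝ) ≤ K := by linarith
  have hK1 : 1 ≤ K := by
    have : (1:ℝ) ≤ K := by linarith
    exact_mod_cast this
  have hK999 : 0.999 * (s ^ 2 * (P + lq) / 4) ≤ K * L * lr := by
    rw [← hMdef]
    have h1 : 85 * s ≤ s ^ 2 := by rw [pow_two]; exact mul_le_mul_of_nonneg_right hs85 hs0.le
    linarith
  set S0 : ℕ := K * (2 * L0 + 1) / (2 * R2) + 1 with hS0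
  have hS0a : (S0:ℝ) ≤ K * L / (2 * R2) + 1 := by
    rw [hS0]; push_cast
    have := Nat.cast_div_le (α := ℝ) (m := K * (2 * L0 + 1)) (n := 2 * R2)
    push_cast at this
    rw [hL]; linarith
  have hc : (K - 1) * (2 * L0 + 1) < R2 * (2 * S0 + 1) := by
    have h1 := Nat.lt_mul_div_succ (K * (2 * L0 + 1)) (by omega : 0 < 2 * R2)
    rw [← hS0] at h1
    have h2 : (K - 1) * (2 * L0 + 1) ≤ K * (2 * L0 + 1) := Nat.mul_le_mul_right _ (by omega)
    have h3 : R2 * (2 * S0 + 1) = 2 * R2 * S0 + R2 := by ring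
    have h4 : 2 * R2 * (K * (2 * L0 + 1) / (2 * R2) + 1) = 2 * R2 * S0 := by rw [hS0]
    clear_value S0 K R0 L0
    omega
  have hRn : 2 * (R0:ℤ) + 1 ≤ (n:ℤ) := by
    have : (2 * R0 + 1 : ℝ) ≤ n := by
      have h1 : 85 * s ≤ s ^ 2 := by rw [pow_two]; exact mul_le_mul_of_nonneg_right hs85 hs0.le
      linarith
    exact_mod_cast this
  have hpert : (16:ℝ) ^ (K * (2 * L0 + 1)) * (L0 * R0 * |δ|) ≤ ((n:ℤ):ℝ) := by
    have h1 : (16:ℝ) ^ (K * (2 * L0 + 1)) ≤ Real.exp M := by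
      rw [← Real.exp_log (by norm_num : (0:ℝ) < 16), ← Real.exp_nat_mul, ← hlr]
      apply Real.exp_le_exp.2
      push_cast
      rw [← hL]; linarith
    rw [hMs] at hδE
    calc (16:ℝ) ^ (K * (2 * L0 + 1)) * (L0 * R0 * |δ|)
        ≤ Real.exp M * ((0.0467 * s) * (1.5 * s) * (Real.pi * Real.exp (-M))) := by
          gcongr; linarith
      _ = (Real.exp M * Real.exp (-M)) * (0.0467 * 1.5 * Real.pi * s ^ 2) := by ring
      _ = 0.0467 * 1.5 * Real.pi * s ^ 2 := by rw [← Real.exp_add]; simp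
      _ ≤ 1 * s ^ 2 := by gcongr; linarith
      _ ≤ _ := by rw [hs2]; push_cast; linarith
  have key := main_log α q a1 hq hp hs γ hγdef hγ n m (by omega) hmn hm δ hδ K L0 R0 S0 R2 hK1
    hR2.symm hc hRn 16 (by norm_num) hpert L hL _ _ rfl rfl
  have hG := num_G K L hK4 hL7 (by linarith)
  rw [← hlq, ← hlr] at key
  have key' : K * L * (K * L - 1) / 2 * lr ≤ K * ((L ^ 2 - 1) / 4) * (R0 * lq + 2 * P * (R0 / 2 + S0))
      + K * L * (Real.log (K * L) + Real.log 2) + L * ((K:ℝ) ^ 2 / 2 * ((Real.log (16 * (n * ((R0:ℝ) / 2 + S0)) + K) - Real.log K) + 3 / 2)) := by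
    have e1 : (L0:ℝ) * (L0 + 1) = (L ^ 2 - 1) / 4 := by rw [hL]; ring
    have e2 : 2 * Real.pi * 16 * ((R0:ℝ) / 2 + S0) = 2 * P * (R0 / 2 + S0) := by rw [hPdef]; ring
    rw [e1, e2] at key
    exact_mod_cast key
  have hYpos : ¬ (16 * (n * ((R0:ℝ) / 2 + S0)) + K ≤ 0) := by
    have : 0 ≤ 16 * (n * ((R0:ℝ) / 2 + S0)) := by positivity
    linarith
  have hcase : 4.58 * H ≤ s ∨ (50 ≤ lq ∧ H ≤ 25) := by
    rcases le_or_gt lq 50 with h | h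
    · left
      apply hgen _ (by norm_num)
      have : 21 * H ^ 2 ≤ Q := by
        apply le_of_mul_le_mul_right _ hX
        have : 21 * H ^ 2 * (P + lq) ≤ 17.74 * H ^ 2 * (21.96 * Real.pi + lq) := by
          have : 21 * (P + lq) ≤ 17.74 * (21.96 * Real.pi + lq) := by linarith
          have := mul_le_mul_of_nonneg_left this hH2.le
          linarith
        linarith
      linarith
    · rcases le_or_gt H 25 with h' | h'
      · right; exact ⟨h.le, h'⟩
      · left
        apply hgen _ (by norm_num)
        have h1 := num_n (Real.log n) (by linarith)
        rw [Real.exp_log hn0, ← hH] at h1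
        have : 0.498 * n ≤ Q := by
          rw [hQ, le_div_iff₀ hX]
          have : 0.498 * (P + lq) ≤ lq := by linarith
          have := mul_le_mul_of_nonneg_left this hn0.le
          linarith
        linarith
  rcases hcase with h | ⟨h, h'⟩
  · have hbP : 4 * 12.73 ≤ P + lq := by linarith
    have hY := (num_Y n L K R0 R2 S0 s P lq lr 12.73 0.0859 0.5 hlr1 hlr2 (by linarith) hL7 hs85
      (by linarith) (Or.inl ⟨rfl, rfl, rfl⟩) hbP hR0a hR2s hS0a hK4 hK999).resolve_right hYpos
    have hmid := num_mid n H L K R0 R2 S0 s lq P lr _ _ 12.73 _ hP1 hP2 hlr1 hlr2 hL7 hs85 hLs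
      (Or.inl rfl) hbP (by positivity) hR0a hR2s hS0a hK999 hG hY hH key'
    refine num_final H L s 4.58 _ hH20 hLa hLb h (Or.inl ⟨rfl, ?_⟩) hmid
    have : Real.log 0.5 = - Real.log 2 := by rw [← Real.log_inv]; norm_num
    rw [this]; norm_num; linarith
  · have hbP : 4 * 25.06 ≤ P + lq := by linarith
    have hY := (num_Y n L K R0 R2 S0 s P lq lr 25.06 0.0934 0.4 hlr1 hlr2 (by linarith) hL7 hs85
      hLs (Or.inr ⟨rfl, rfl, rfl⟩) hbP hR0a hR2s hS0a hK4 hK999).resolve_right hYpos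
    have hmid := num_mid n H L K R0 R2 S0 s lq P lr _ _ 25.06 _ hP1 hP2 hlr1 hlr2 hL7 hs85 hLs
      (Or.inr rfl) hbP (by positivity) hR0a hR2s hS0a hK999 hG hY hH key'
    refine num_final H L s 4.2118 _ hH20 hLa hLb hs1 (Or.inr ⟨rfl, ?_, h'⟩) hmid
    have e : Real.log 0.4 = - (Real.log 2 + Real.log (1 + 0.25)) := by
      rw [← Real.log_mul (by norm_num) (by norm_num), ← Real.log_inv]; norm_num
    have h2 := Real.le_log_one_add_of_nonneg (x := 0.25) (by norm_num)
    rw [e]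
    have h3 : (0.2222:ℝ) ≤ Real.log (1 + 0.25) := le_trans (by norm_num) h2
    have h4 : (0.61:ℝ) / 25.06 ≤ 0.0244 := by norm_num
    linarith

end

/-- For an ordinary pair `(q, a₁)`, if `−aₙ = ⌊2·q^{n/2}⌋` for some positive
integer `n`, then `(n/4)·log q < 8.87·(10.98·π + (1/2)·log q)·(max{17, 2·log n + 3.27})² + log(π/3)`. -/
theorem ordinary_degree_bound (q a1 : ℤ) (hq : 2 ≤ q) (ha1 : a1 ^ 2 ≤ 4 * q)
    (α β : ℂ) (hα : α ^ 2 - a1 * α + q = 0) (him : 0 ≤ α.im)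
    (hβ : β = α / (Real.sqrt q : ℂ))
    (hord : ¬ ∃ k : ℕ, 0 < k ∧ β ^ k = 1)
    (a : ℕ → ℤ) (ha : ∀ n : ℕ, (a n : ℂ) = α ^ n + (starRingEnd ℂ) α ^ n)
    (n : ℕ) (hn : 0 < n) (hmax : -(a n) = ⌊2 * Real.sqrt q ^ n⌋) :
    (n : ℝ) / 4 * Real.log q <
      8.87 * (10.98 * Real.pi + 1 / 2 * Real.log q) *
        (max 17 (2 * Real.log n + 3.27)) ^ 2 + Real.log (Real.pi / 3) := by
  by_contra hcon
  have hcon := not_lt.1 hcon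
  have hπ3 := Real.pi_gt_three
  have hlπ : 0 ≤ Real.log (Real.pi / 3) := Real.log_nonneg (by linarith)
  have hq2 : (2:ℝ) ≤ q := by exact_mod_cast hq
  have hlq : 0 < Real.log q := Real.log_pos (by linarith)
  set lq := Real.log q with hlqd
  set X := max 17 (2 * Real.log n + 3.27) with hX
  have hX17 : 17 ≤ X := le_max_left _ _
  have hXH : 2 * Real.log n + 3.27 ≤ X := le_max_right _ _
  have hc0 : 0 < 8.87 * (10.98 * Real.pi + 1 / 2 * lq) := by positivity
  have hn5 : 5126 ≤ n := by
    have h1 : (289:ℝ) ≤ X ^ 2 := by nlinarith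
    have h2 : 8.87 * (10.98 * Real.pi + 1 / 2 * lq) * 289 ≤ 8.87 * (10.98 * Real.pi + 1 / 2 * lq) * X ^ 2 := by
      gcongr
    have h3 : (5126:ℝ) * lq ≤ n * lq := by nlinarith
    have h4 := le_of_mul_le_mul_right h3 hlq
    exact_mod_cast h4
  obtain ⟨γ, m, δ, hp, hs, hγc, hγ1, hcop, hm, hγe, hδE⟩ := setup q a1 hq ha1 α β hα hβ hord a ha n
    (by omega) hmax
  have hnpos : 0 ≤ Real.log n := Real.log_natCast_nonneg n
  refine final_contra α q a1 hq hp hs γ hγc hγ1 n m hcop hm δ hγe hδE hn5 _ rfl ?_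
  have : 8.87 * (10.98 * Real.pi + 1 / 2 * lq) * (2 * Real.log n + 3.27) ^ 2 ≤
      8.87 * (10.98 * Real.pi + 1 / 2 * lq) * X ^ 2 := by
    gcongr
  linarith
end

section
/- Let q, a₁ be integers with q ≥ 2 and a₁² ≤ 4q, write a₁ = 2·√q·cos(θ) with θ ∈ [0, π], and let N be a positive integer and x a real number with |x − θ/π| ≤ (1/(2N²))·(1 − (2/3)·13·2^{−13/4}) if q = 2, and |x − θ/π| ≤ (1/(2N²))·(1 − (2/3)·3·q^{−3/4}) if q ≥ 3. If −aₙ = ⌊2·q^{n/2}⌋ for some odd integer n with 3 ≤ n ≤ N, and moreover q ≥ 3 or n ≥ 13, then there exists an odd integer m such that m/n is a convergent of the continued fraction expansion of x. -/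
lemma aux_mono (Q n0 : ℝ) (hQ : 2 ≤ Q) (hn0 : 0 < n0) (h : (n0 + 2) ≤ Real.sqrt Q * n0) (j : ℕ) :
    (n0 + 2 * j) * Q ^ (-(n0 + 2 * j) / 4) ≤ n0 * Q ^ (-n0 / 4) := by
  induction j with
  | zero => simp
  | succ j ih =>
    refine le_trans ?_ ih
    have hQ0 : 0 < Q := by linarith
    have hs : 0 < Real.sqrt Q := Real.sqrt_pos.mpr hQ0
    have e : Q ^ (-(n0 + 2 * j) / 4) = Q ^ (-(n0 + 2 * (j + 1 : ℕ)) / 4) * Real.sqrt Q := by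
      rw [Real.sqrt_eq_rpow, ← Real.rpow_add hQ0]
      congr 1
      push_cast
      ring
    rw [e]
    have hp : 0 < Q ^ (-(n0 + 2 * (j + 1 : ℕ)) / 4) := Real.rpow_pos_of_pos hQ0 _
    have h1 : 1 ≤ Real.sqrt Q := Real.one_le_sqrt.mpr (by linarith)
    have hj : (0 : ℝ) ≤ j := Nat.cast_nonneg j
    have : (n0 + 2 * (j + 1 : ℕ)) ≤ (n0 + 2 * j) * Real.sqrt Q := by
      push_cast
      nlinarith [mul_nonneg hj (sub_nonneg.mpr h1)]
    calc _ ≤ (n0 + 2 * j) * Real.sqrt Q * Q ^ (-(n0 + 2 * (j + 1 : ℕ)) / 4) :=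
          mul_le_mul_of_nonneg_right this hp.le
      _ = _ := by ring

lemma aux_sin (s : ℝ) (h0 : 0 ≤ s) (h1 : s ≤ 1) : s / 2 ≤ Real.sin (Real.pi / 6 * s) := by
  have hc := strictConcaveOn_sin_Icc.concaveOn.2
    (show (0 : ℝ) ∈ Set.Icc 0 Real.pi from ⟨le_rfl, Real.pi_pos.le⟩)
    (show Real.pi / 6 ∈ Set.Icc 0 Real.pi from ⟨by positivity, by linarith [Real.pi_pos]⟩)
    (show 0 ≤ 1 - s by linarith) h0 (by ring)
  simp only [smul_eq_mul, Real.sin_zero, Real.sin_pi_div_six, mul_zero, zero_add] at hc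
  rw [mul_comm (Real.pi / 6) s]
  linarith

lemma aux_alpha (q a1 : ℤ) (hq : 2 ≤ q) (ha1 : a1 ^ 2 ≤ 4 * q)
    (α : ℂ) (hα : α ^ 2 - a1 * α + q = 0) (him : 0 ≤ α.im)
    (θ : ℝ) (hθ0 : 0 ≤ θ) (hθπ : θ ≤ Real.pi)
    (hcos : (a1 : ℝ) = 2 * Real.sqrt q * Real.cos θ) :
    α = (Real.sqrt q : ℂ) * (Complex.cos θ + Complex.sin θ * Complex.I) := by
  have hq' : (2 : ℝ) ≤ q := by exact_mod_cast hq
  have ha1' : (a1 : ℝ) ^ 2 ≤ 4 * q := by exact_mod_cast ha1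
  have hre := congrArg Complex.re hα
  have him' := congrArg Complex.im hα
  simp [pow_two] at hre him'
  have hsq : Real.sqrt q ^ 2 = q := Real.sq_sqrt (by linarith)
  have hr : α.re = a1 / 2 := by
    rcases eq_or_ne α.im 0 with h | h
    · rw [h] at hre
      have : (2 * α.re - a1) ^ 2 ≤ 0 := by nlinarith
      have := pow_eq_zero_iff (two_ne_zero) |>.mp (le_antisymm this (sq_nonneg _))
      linarith
    · have : α.im * (2 * α.re - a1) = 0 := by linarith
      rcases mul_eq_zero.mp this with h' | h'
      · exact absurd h' h
      · linarith
  have hsin : 0 ≤ Real.sin θ := Real.sin_nonneg_of_nonneg_of_le_pi hθ0 hθπ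
  have hi : α.im = Real.sqrt q * Real.sin θ := by
    have : α.im ^ 2 = (Real.sqrt q * Real.sin θ) ^ 2 := by
      have h1 : α.im ^ 2 = q - (a1 / 2) ^ 2 := by rw [hr] at hre; nlinarith
      rw [h1, hcos, mul_pow, Real.sin_sq]
      linear_combination -hsq
    exact (pow_left_inj₀ him (mul_nonneg (Real.sqrt_nonneg _) hsin) two_ne_zero).mp this
  rw [← Complex.ofReal_cos, ← Complex.ofReal_sin]
  apply Complex.ext
  · simp [hr, hcos, -Complex.ofReal_cos, -Complex.ofReal_sin]; ring
  · simp [hi, -Complex.ofReal_cos, -Complex.ofReal_sin]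

lemma aux_an (q a1 : ℤ) (hq : 2 ≤ q) (ha1 : a1 ^ 2 ≤ 4 * q)
    (α : ℂ) (hα : α ^ 2 - a1 * α + q = 0) (him : 0 ≤ α.im)
    (a : ℕ → ℤ) (ha : ∀ k : ℕ, (a k : ℂ) = α ^ k + (starRingEnd ℂ) α ^ k)
    (θ : ℝ) (hθ0 : 0 ≤ θ) (hθπ : θ ≤ Real.pi)
    (hcos : (a1 : ℝ) = 2 * Real.sqrt q * Real.cos θ) (n : ℕ) :
    (a n : ℝ) = 2 * Real.sqrt q ^ n * Real.cos (n * θ) := by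
  have h1 := aux_alpha q a1 hq ha1 α hα him θ hθ0 hθπ hcos
  have h2 : α ^ n = ((Real.sqrt q ^ n : ℝ) : ℂ) *
      ((Real.cos (n * θ) : ℝ) + (Real.sin (n * θ) : ℝ) * Complex.I) := by
    rw [h1, mul_pow, Complex.cos_add_sin_mul_I_pow]
    push_cast
    rfl
  have h3 := congrArg Complex.re (ha n)
  rw [← map_pow, h2, Complex.add_re, Complex.conj_re, Complex.re_ofReal_mul] at h3
  simp only [Complex.intCast_re, Complex.add_re, Complex.ofReal_re, Complex.re_ofReal_mul,
    Complex.I_re, mul_zero, add_zero] at h3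
  linarith

lemma aux_approx (q : ℤ) (hq : 2 ≤ q) (θ : ℝ) (n : ℕ) (hn : 0 < n)
    (h : 2 * Real.sqrt q ^ n - 1 < -(2 * Real.sqrt q ^ n * Real.cos (n * θ))) :
    ∃ m : ℤ, Odd m ∧ |θ / Real.pi - m / n| <
      1 / (2 * (n : ℝ) ^ 2) * (2 / 3 * (n * (q : ℝ) ^ (-(n : ℝ) / 4))) := by
  have hq' : (2 : ℝ) ≤ q := by exact_mod_cast hq
  have hpi := Real.pi_pos
  have hn' : (0 : ℝ) < n := by exact_mod_cast hn
  set s : ℝ := (q : ℝ) ^ (-(n : ℝ) / 4) with hs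
  have hs0 : 0 < s := Real.rpow_pos_of_pos (by linarith) _
  have hs1 : s ≤ 1 := Real.rpow_le_one_of_one_le_of_nonpos (by linarith)
    (by rw [neg_div]; exact neg_nonpos.mpr (by positivity))
  have hsQ : s ^ 2 * Real.sqrt q ^ n = 1 := by
    rw [hs, Real.sqrt_eq_rpow, ← Real.rpow_natCast, ← Real.rpow_natCast, ← Real.rpow_mul (by linarith),
      ← Real.rpow_mul (by linarith), ← Real.rpow_add (by linarith)]
    have : -(n : ℝ) / 4 * (2 : ℕ) + 1 / 2 * n = 0 := by push_cast; ring
    rw [this, Real.rpow_zero]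
  set k : ℤ := ⌊n * θ / (2 * Real.pi)⌋ with hk
  refine ⟨2 * k + 1, ⟨k, rfl⟩, ?_⟩
  set t : ℝ := n * θ - (2 * k + 1) * Real.pi with ht
  have hk1 : k * (2 * Real.pi) ≤ n * θ := (le_div_iff₀ (by positivity)).mp (Int.floor_le _)
  have hk2 : n * θ < (k + 1) * (2 * Real.pi) := (div_lt_iff₀ (by positivity)).mp (Int.lt_floor_add_one _)
  have htpi : |t| ≤ Real.pi := abs_le.mpr ⟨by rw [ht]; linarith, by rw [ht]; linarith⟩
  have hct : Real.cos (n * θ) = - Real.cos t := by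
    have : n * θ = (t + Real.pi) + k * (2 * Real.pi) := by rw [ht]; ring
    rw [this, Real.cos_add_int_mul_two_pi, Real.cos_add_pi]
  have hc2 : Real.cos t = 1 - 2 * Real.sin (|t| / 2) ^ 2 := by
    rw [← Real.cos_abs]
    have := Real.cos_two_mul (|t| / 2)
    rw [Real.cos_sq', mul_div_cancel₀ _ (two_ne_zero)] at this
    linarith
  have key : |t| / 2 < Real.pi / 6 * s := by
    by_contra hcon
    push Not at hcon
    have h1 : Real.sin (Real.pi / 6 * s) ≤ Real.sin (|t| / 2) :=
      Real.sin_le_sin_of_le_of_le_pi_div_two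
        (by have : 0 < Real.pi / 6 * s := by positivity
            linarith) (by linarith) hcon
    have h2 := (aux_sin s hs0.le hs1).trans h1
    have h3 : (s / 2) ^ 2 ≤ Real.sin (|t| / 2) ^ 2 := by gcongr
    rw [hct, hc2] at h
    have hQ : 0 < Real.sqrt q ^ n := by positivity
    nlinarith
  have e : θ / Real.pi - ((2 * k + 1 : ℤ) : ℝ) / n = t / (Real.pi * n) := by
    rw [ht]; push_cast; field_simp
  rw [e, abs_div, abs_of_pos (by positivity : 0 < Real.pi * n), div_lt_iff₀ (by positivity)]
  have : 1 / (2 * (n : ℝ) ^ 2) * (2 / 3 * (n * s)) * (Real.pi * n) = Real.pi / 3 * s := by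
    field_simp
  rw [this]
  linarith

lemma aux_final (x y c : ℝ) (N n : ℕ) (hn : 0 < n) (hnN : n ≤ N) (m : ℤ)
    (h1 : |x - y| ≤ 1 / (2 * (N : ℝ) ^ 2) * (1 - c))
    (h2 : |y - m / n| < 1 / (2 * (n : ℝ) ^ 2) * c) :
    ∃ k : ℕ, (GenContFract.of x).convs k = (m : ℝ) / (n : ℝ) := by
  have hn' : (0 : ℝ) < n := by exact_mod_cast hn
  have hN' : (n : ℝ) ≤ N := by exact_mod_cast hnN
  have hN0 : (0 : ℝ) < N := by linarith
  have hc : 0 ≤ 1 - c := by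
    have h := (abs_nonneg _).trans h1
    exact nonneg_of_mul_nonneg_right h (by positivity)
  have h3 : 1 / (2 * (N : ℝ) ^ 2) * (1 - c) ≤ 1 / (2 * (n : ℝ) ^ 2) * (1 - c) := by gcongr
  have h4 : |x - m / n| < 1 / (2 * (n : ℝ) ^ 2) := by
    have := abs_sub_le x y (m / n)
    linarith
  have hden : ((m / n : ℚ)).den ≤ n := by
    have : ((m / n : ℚ).den : ℤ) ∣ n := by
      have h := Rat.den_dvd m n
      rw [Rat.divInt_eq_div] at h
      exact_mod_cast h
    exact Nat.le_of_dvd hn (by exact_mod_cast this)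
  have hd0 : (0 : ℝ) < ((m / n : ℚ)).den := by exact_mod_cast Rat.den_pos _
  have hden' : (((m / n : ℚ)).den : ℝ) ≤ n := by exact_mod_cast hden
  obtain ⟨k, hk⟩ := Real.exists_convs_eq_rat (ξ := x) (q := (m / n : ℚ)) (by
    have h5 : 1 / (2 * (n : ℝ) ^ 2) ≤ 1 / (2 * (((m / n : ℚ)).den : ℝ) ^ 2) := by gcongr
    refine lt_of_lt_of_le ?_ h5
    push_cast
    exact h4)
  exact ⟨k, by rw [hk]; push_cast; rfl⟩

/-- With `a₁ = 2√q·cos θ`, `θ ∈ [0, π]`, if `x` approximates `θ/π` well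
enough (depending on `N` and `q`) and `−aₙ = ⌊2·q^{n/2}⌋` for some odd `3 ≤ n ≤ N` with
`q ≥ 3` or `n ≥ 13`, then `m/n` is a convergent of `x` for some odd integer `m`. -/
theorem convergent_of_maximal (q a1 : ℤ) (hq : 2 ≤ q) (ha1 : a1 ^ 2 ≤ 4 * q)
    (α : ℂ) (hα : α ^ 2 - a1 * α + q = 0) (him : 0 ≤ α.im)
    (a : ℕ → ℤ) (ha : ∀ k : ℕ, (a k : ℂ) = α ^ k + (starRingEnd ℂ) α ^ k)
    (θ : ℝ) (hθ0 : 0 ≤ θ) (hθπ : θ ≤ Real.pi)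
    (hcos : (a1 : ℝ) = 2 * Real.sqrt q * Real.cos θ)
    (N : ℕ) (hN : 0 < N) (x : ℝ)
    (hx2 : q = 2 →
      |x - θ / Real.pi| ≤ 1 / (2 * (N : ℝ) ^ 2) * (1 - 2 / 3 * 13 * (2 : ℝ) ^ (-(13 : ℝ) / 4)))
    (hx3 : 3 ≤ q →
      |x - θ / Real.pi| ≤ 1 / (2 * (N : ℝ) ^ 2) * (1 - 2 / 3 * 3 * (q : ℝ) ^ (-(3 : ℝ) / 4)))
    (n : ℕ) (hodd : Odd n) (hn3 : 3 ≤ n) (hnN : n ≤ N)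
    (hmax : -(a n) = ⌊2 * Real.sqrt q ^ n⌋)
    (hqn : 3 ≤ q ∨ 13 ≤ n) :
    ∃ m : ℤ, Odd m ∧ ∃ k : ℕ, (GenContFract.of x).convs k = (m : ℝ) / (n : ℝ) := by
  have hq' : (2 : ℝ) ≤ q := by exact_mod_cast hq
  have han := aux_an q a1 hq ha1 α hα him a ha θ hθ0 hθπ hcos n
  have hfl : 2 * Real.sqrt q ^ n - 1 < -(2 * Real.sqrt q ^ n * Real.cos (n * θ)) := by
    have := Int.sub_one_lt_floor (2 * Real.sqrt q ^ n)
    rw [← hmax] at this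
    push_cast at this
    rw [han] at this
    exact this
  obtain ⟨m, hm, hmn⟩ := aux_approx q hq θ n (by omega) hfl
  refine ⟨m, hm, ?_⟩
  obtain ⟨i, hi⟩ := hodd
  rcases lt_or_ge q 3 with h | h
  · have hq2 : q = 2 := by omega
    have hn13 : 13 ≤ n := by omega
    obtain ⟨j, hj⟩ : ∃ j : ℕ, n = 13 + 2 * j := ⟨i - 6, by omega⟩
    have hs : (13 : ℝ) + 2 ≤ Real.sqrt 2 * 13 := by
      have : (15 / 13 : ℝ) ≤ Real.sqrt 2 := Real.le_sqrt_of_sq_le (by norm_num)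
      linarith
    have hmono := aux_mono 2 13 le_rfl (by norm_num) hs j
    have hx := hx2 hq2
    refine aux_final x (θ / Real.pi) _ N n (by omega) hnN m hx (hmn.trans_le ?_)
    have e : (n : ℝ) = 13 + 2 * j := by rw [hj]; push_cast; rfl
    refine mul_le_mul_of_nonneg_left ?_ (by positivity)
    rw [hq2, e]
    push_cast
    linarith
  · obtain ⟨j, hj⟩ : ∃ j : ℕ, n = 3 + 2 * j := ⟨i - 1, by omega⟩
    have h' : (3 : ℝ) ≤ q := by exact_mod_cast h
    have hs : (3 : ℝ) + 2 ≤ Real.sqrt q * 3 := by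
      have : (5 / 3 : ℝ) ≤ Real.sqrt q := Real.le_sqrt_of_sq_le (by norm_num; linarith)
      linarith
    have hmono := aux_mono q 3 hq' (by norm_num) hs j
    have hx := hx3 h
    refine aux_final x (θ / Real.pi) _ N n (by omega) hnN m hx (hmn.trans_le ?_)
    have e : (n : ℝ) = 3 + 2 * j := by rw [hj]; push_cast; rfl
    refine mul_le_mul_of_nonneg_left ?_ (by positivity)
    rw [e]
    linarith
end
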